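/- arXiv:1709.04799 — 7 statements merged into one kernel-verified Lean document; each statement's English description precedes it below -/
import Mathlib

section
/- Let K be a quadratic number field with ring of integers 𝒪 and let f_K(n) = #{nonzero ideals 𝔞 ⊆ 𝒪 : N𝔞 = n}. Then for every positive integer n, f_K(n) = ∏_{q | n, q split in K} (ν_q(n) + 1) · ∏_{p | n, p inert in K} (1 + (−1)^{ν_p(n)})/2, where the products run over the prime divisors of n that are split, respectively inert, in K, and ν_p(n) denotes the p-adic valuation of n. (In particular, ramified primes contribute a factor 1.) -/
/-- `fK K n` is the number of nonzero ideals of the ring of integers of `K` of absolute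
norm `n`. -/
noncomputable def fK (K : Type*) [Field K] [NumberField K] (n : ℕ) : ℕ :=
  Nat.card {I : Ideal (NumberField.RingOfIntegers K) // Ideal.absNorm I = n ∧ I ≠ ⊥}

/-- A rational prime `p` is split in the quadratic number field `K` if
`(p) = 𝔭₁𝔭₂` for two distinct prime ideals, each of norm `p`. -/
def IsSplitIn (K : Type*) [Field K] [NumberField K] (p : ℕ) : Prop :=
  ∃ P₁ P₂ : Ideal (NumberField.RingOfIntegers K), P₁.IsPrime ∧ P₂.IsPrime ∧ P₁ ≠ P₂ ∧
    Ideal.absNorm P₁ = p ∧ Ideal.absNorm P₂ = p ∧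
    Ideal.span {(p : NumberField.RingOfIntegers K)} = P₁ * P₂

/-- A rational prime `p` is inert in the quadratic number field `K` if `(p)` is a prime
ideal, of norm `p²`. -/
def IsInertIn (K : Type*) [Field K] [NumberField K] (p : ℕ) : Prop :=
  (Ideal.span {(p : NumberField.RingOfIntegers K)}).IsPrime ∧
    Ideal.absNorm (Ideal.span {(p : NumberField.RingOfIntegers K)}) = p ^ 2

open NumberField in
lemma aux_coprime {K : Type*} [Field K] [NumberField K] {I J : Ideal (𝓞 K)}
    (h : Nat.Coprime (Ideal.absNorm I) (Ideal.absNorm J)) : IsCoprime I J := by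
  rw [Ideal.isCoprime_iff_sup_eq, ← Ideal.absNorm_eq_one_iff]
  exact Nat.eq_one_of_dvd_coprimes h (Ideal.absNorm_dvd_absNorm_of_le le_sup_left)
    (Ideal.absNorm_dvd_absNorm_of_le le_sup_right)

open NumberField in
lemma aux_norm {K : Type*} [Field K] [NumberField K]
    (hK : Module.finrank ℚ K = 2) (n : ℕ) :
    Ideal.absNorm (Ideal.span {(n : 𝓞 K)}) = n ^ 2 := by
  rw [Ideal.absNorm_span_natCast, RingOfIntegers.rank, hK]

open NumberField in
lemma aux_mul {K : Type*} [Field K] [NumberField K]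
    (hK : Module.finrank ℚ K = 2) (m n : ℕ) (hm : 0 < m) (hn : 0 < n) (h : Nat.Coprime m n) :
    fK K (m * n) = fK K m * fK K n := by
  unfold fK
  rw [← Nat.card_prod]
  symm
  refine Nat.card_eq_of_bijective
    (fun x => ⟨x.1.1 * x.2.1, by rw [map_mul, x.1.2.1, x.2.2.1], mul_ne_zero x.1.2.2 x.2.2.2⟩)
    ⟨?_, ?_⟩
  · rintro ⟨⟨I, hI, hI0⟩, ⟨J, hJ, hJ0⟩⟩ ⟨⟨I', hI', hI0'⟩, ⟨J', hJ', hJ0'⟩⟩ he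
    simp only [Subtype.mk.injEq] at he
    have c1 : IsCoprime I J' := aux_coprime (by rw [hI, hJ']; exact h)
    have c2 : IsCoprime I' J := aux_coprime (by rw [hI', hJ]; exact h)
    have e : I = I' := dvd_antisymm (c1.dvd_of_dvd_mul_right (he ▸ dvd_mul_right _ _))
      (c2.dvd_of_dvd_mul_right (he ▸ dvd_mul_right _ _))
    have e2 : J = J' := by
      subst e
      exact mul_left_cancel₀ hI0 he
    subst e e2
    rfl
  · rintro ⟨A, hA, hA0⟩
    set I := A ⊔ Ideal.span {(m : 𝓞 K)} with hI
    set J := A ⊔ Ideal.span {(n : 𝓞 K)} with hJ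
    have hmn : Ideal.span {(m : 𝓞 K)} * Ideal.span {(n : 𝓞 K)} ≤ A := by
      rw [Ideal.span_singleton_mul_span_singleton, Ideal.span_singleton_le_iff_mem]
      have := Ideal.absNorm_mem A
      rw [hA] at this
      exact_mod_cast this
    have hc : Ideal.span {(m : 𝓞 K)} ⊔ Ideal.span {(n : 𝓞 K)} = ⊤ := by
      rw [← Ideal.isCoprime_iff_sup_eq]
      apply aux_coprime
      rw [aux_norm hK, aux_norm hK]
      exact Nat.Coprime.pow _ _ h
    have hIJ : I * J = A := by
      apply le_antisymm
      · rw [hI, hJ, Ideal.sup_mul, Ideal.mul_sup, Ideal.mul_sup]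
        refine sup_le (sup_le ?_ ?_) (sup_le ?_ hmn) <;>
          first | exact Ideal.mul_le_left | exact Ideal.mul_le_right
      · calc A = A * (Ideal.span {(m : 𝓞 K)} ⊔ Ideal.span {(n : 𝓞 K)}) := by
              rw [hc, Ideal.mul_top]
          _ ≤ I * J := by
              rw [Ideal.mul_sup]
              refine sup_le ?_ ?_
              · rw [mul_comm]; exact Ideal.mul_mono le_sup_right le_sup_left
              · exact Ideal.mul_mono le_sup_left le_sup_right
    have hNm : Ideal.absNorm I ∣ m ^ 2 := by
      rw [← aux_norm hK]; exact Ideal.absNorm_dvd_absNorm_of_le le_sup_right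
    have hNn : Ideal.absNorm J ∣ n ^ 2 := by
      rw [← aux_norm hK]; exact Ideal.absNorm_dvd_absNorm_of_le le_sup_right
    have hprod : Ideal.absNorm I * Ideal.absNorm J = m * n := by
      rw [← map_mul, hIJ, hA]
    have c1 : Nat.Coprime (Ideal.absNorm I) n :=
      Nat.Coprime.coprime_dvd_left hNm (Nat.Coprime.pow_left _ h)
    have c2 : Nat.Coprime m (Ideal.absNorm J) :=
      Nat.Coprime.coprime_dvd_right hNn (Nat.Coprime.pow_right _ h)
    have e1 : Ideal.absNorm I = m := Nat.dvd_antisymm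
      (c1.dvd_of_dvd_mul_right (hprod ▸ dvd_mul_right _ _))
      (c2.dvd_of_dvd_mul_right (hprod ▸ dvd_mul_right _ _))
    have e2 : Ideal.absNorm J = n := by
      rw [e1] at hprod
      exact Nat.eq_of_mul_eq_mul_left hm hprod
    have hI0 : I ≠ ⊥ := by
      rintro h0; rw [h0, Ideal.absNorm_bot] at e1; omega
    have hJ0 : J ≠ ⊥ := by
      rintro h0; rw [h0, Ideal.absNorm_bot] at e2; omega
    exact ⟨(⟨I, e1, hI0⟩, ⟨J, e2, hJ0⟩), Subtype.ext hIJ⟩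

open NumberField in
lemma aux_form {K : Type*} [Field K] [NumberField K] {p : ℕ} (hp : p.Prime)
    (P Q : Ideal (𝓞 K)) (h : ∀ M : Ideal (𝓞 K), M.IsPrime → (p : 𝓞 K) ∈ M → M = P ∨ M = Q)
    (k : ℕ) : ∀ I : Ideal (𝓞 K), Ideal.absNorm I = p ^ k → ∃ a b : ℕ, I = P ^ a * Q ^ b := by
  induction k using Nat.strong_induction_on with
  | _ k ih =>
    intro I hI
    by_cases htop : I = ⊤
    · exact ⟨0, 0, by simp [htop]⟩
    obtain ⟨M, hM, hIM⟩ := Ideal.exists_le_maximal I htop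
    have hpM : (p : 𝓞 K) ∈ M := by
      have := hIM (Ideal.absNorm_mem I)
      rw [hI, Nat.cast_pow] at this
      exact hM.isPrime.mem_of_pow_mem _ this
    obtain ⟨J, rfl⟩ := Ideal.dvd_iff_le.mpr hIM
    rw [map_mul] at hI
    obtain ⟨j, hj, hJ⟩ := (Nat.dvd_prime_pow hp).1 (hI ▸ dvd_mul_left _ _ :
      Ideal.absNorm J ∣ p ^ k)
    have hjk : j < k := by
      rcases hj.lt_or_eq with h | h
      · exact h
      · exfalso
        subst h
        rw [hJ] at hI
        have : Ideal.absNorm M = 1 :=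
          Nat.eq_of_mul_eq_mul_right (pow_pos hp.pos j) (by rw [hI, one_mul])
        exact hM.ne_top (Ideal.absNorm_eq_one_iff.1 this)
    obtain ⟨a, b, rfl⟩ := ih j hjk J hJ
    rcases h M hM.isPrime hpM with rfl | rfl
    · exact ⟨a + 1, b, by ring⟩
    · exact ⟨a, b + 1, by ring⟩

open NumberField in
lemma aux_ne {K : Type*} [Field K] [NumberField K] {n : ℕ} (hn : 0 < n) {I : Ideal (𝓞 K)}
    (h : Ideal.absNorm I = n) : I ≠ ⊥ := by
  rintro h0; rw [h0, Ideal.absNorm_bot] at h; omega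

open NumberField in
lemma aux_notInert {K : Type*} [Field K] [NumberField K] {p : ℕ} (hp : p.Prime)
    (P Q : Ideal (𝓞 K)) (hP : Ideal.absNorm P = p) (hQ : Ideal.absNorm Q = p)
    (h : Ideal.span {(p : 𝓞 K)} = P * Q) : ¬ IsInertIn K p := by
  rintro ⟨h1, -⟩
  have hle : P * Q ≤ Ideal.span {(p : 𝓞 K)} := h.ge
  have h2 : Ideal.absNorm (Ideal.span {(p : 𝓞 K)}) = p * p := by rw [h, map_mul, hP, hQ]
  have key : ¬ p * p ∣ p := fun hd => by
    have := Nat.le_of_dvd hp.pos hd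
    nlinarith [hp.two_le]
  rcases h1.mul_le.1 hle with h3 | h3
  · have := Ideal.absNorm_dvd_absNorm_of_le h3
    rw [h2, hP] at this
    exact key this
  · have := Ideal.absNorm_dvd_absNorm_of_le h3
    rw [h2, hQ] at this
    exact key this

open NumberField in
lemma aux_over {K : Type*} [Field K] [NumberField K] {p : ℕ} (hp : p.Prime)
    (P Q : Ideal (𝓞 K)) (hP : Ideal.absNorm P = p) (hQ : Ideal.absNorm Q = p)
    (h : Ideal.span {(p : 𝓞 K)} = P * Q)
    (M : Ideal (𝓞 K)) (hM : M.IsPrime) (hpM : (p : 𝓞 K) ∈ M) : M = P ∨ M = Q := by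
  have hP1 : P.IsPrime := Ideal.isPrime_of_irreducible_absNorm (hP ▸ hp)
  have hQ1 : Q.IsPrime := Ideal.isPrime_of_irreducible_absNorm (hQ ▸ hp)
  have hPm := hP1.isMaximal (aux_ne hp.pos hP)
  have hQm := hQ1.isMaximal (aux_ne hp.pos hQ)
  have : P * Q ≤ M := by rw [← h]; exact (Ideal.span_singleton_le_iff_mem _).2 hpM
  rcases hM.mul_le.1 this with h3 | h3
  · exact Or.inl (hPm.eq_of_le hM.ne_top h3).symm
  · exact Or.inr (hQm.eq_of_le hM.ne_top h3).symm

open NumberField in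
lemma aux_tri {K : Type*} [Field K] [NumberField K]
    (hK : Module.finrank ℚ K = 2) {p : ℕ} (hp : p.Prime) : IsInertIn K p ∨
    ∃ P Q : Ideal (𝓞 K), Ideal.absNorm P = p ∧ Ideal.absNorm Q = p ∧
      Ideal.span {(p : 𝓞 K)} = P * Q := by
  have hN := aux_norm hK p
  have hne : Ideal.span {(p : 𝓞 K)} ≠ ⊤ := by
    intro h0
    rw [h0, Ideal.absNorm_top] at hN
    nlinarith [hp.two_le]
  obtain ⟨P, hP, hle⟩ := Ideal.exists_le_maximal _ hne
  obtain ⟨Q, hQ⟩ := Ideal.dvd_iff_le.mpr hle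
  have hPQ : Ideal.absNorm P * Ideal.absNorm Q = p ^ 2 := by rw [← map_mul, ← hQ, hN]
  obtain ⟨j, hj, hPj⟩ := (Nat.dvd_prime_pow hp).1 (hPQ ▸ dvd_mul_right _ _ :
      Ideal.absNorm P ∣ p ^ 2)
  have hpp := hp.pos
  interval_cases j
  · exact absurd (Ideal.absNorm_eq_one_iff.1 (by simpa using hPj)) hP.ne_top
  · right
    rw [pow_one] at hPj
    refine ⟨P, Q, hPj, ?_, hQ⟩
    rw [hPj, sq] at hPQ
    exact Nat.eq_of_mul_eq_mul_left hpp hPQ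
  · left
    have : Ideal.absNorm Q = 1 := by
      rw [hPj] at hPQ
      exact Nat.eq_of_mul_eq_mul_left (pow_pos hpp 2) (by rw [hPQ, mul_one])
    rw [Ideal.absNorm_eq_one_iff.1 this, Ideal.mul_top] at hQ
    exact ⟨hQ ▸ hP.isPrime, hN⟩

open NumberField in
lemma aux_split_card {K : Type*} [Field K] [NumberField K] {p : ℕ} (hp : p.Prime)
    (P Q : Ideal (𝓞 K)) (hP : Ideal.absNorm P = p) (hQ : Ideal.absNorm Q = p)
    (h : Ideal.span {(p : 𝓞 K)} = P * Q) (hPQ : P ≠ Q) (k : ℕ) : fK K (p ^ k) = k + 1 := by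
  have hP1 : P.IsPrime := Ideal.isPrime_of_irreducible_absNorm (hP ▸ hp)
  have hQ1 : Q.IsPrime := Ideal.isPrime_of_irreducible_absNorm (hQ ▸ hp)
  have hPm := hP1.isMaximal (aux_ne hp.pos hP)
  have hQm := hQ1.isMaximal (aux_ne hp.pos hQ)
  have hc : IsCoprime P Q := Ideal.isCoprime_iff_sup_eq.2 (hPm.coprime_of_ne hQm hPQ)
  have hN : ∀ a b : ℕ, Ideal.absNorm (P ^ a * Q ^ b) = p ^ (a + b) := fun a b => by
    rw [map_mul, map_pow, map_pow, hP, hQ, pow_add]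
  have hle : ∀ a b c d : ℕ, P ^ a * Q ^ b = P ^ c * Q ^ d → a ≤ c := fun a b c d e => by
    have h1 : P ^ a ∣ P ^ c :=
      (hc.pow (m := a) (n := d)).dvd_of_dvd_mul_right (e ▸ dvd_mul_right _ _)
    have h2 := map_dvd Ideal.absNorm h1
    rw [map_pow, map_pow, hP] at h2
    exact (Nat.pow_dvd_pow_iff_le_right hp.one_lt).1 h2
  unfold fK
  rw [← Nat.card_fin (k + 1)]
  symm
  refine Nat.card_eq_of_bijective (fun a : Fin (k + 1) => ⟨P ^ (a : ℕ) * Q ^ (k - a : ℕ), ?_, ?_⟩)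
    ⟨?_, ?_⟩
  · rw [hN]; congr 1; have := a.2; omega
  · exact aux_ne (pow_pos hp.pos _) (hN _ _)
  · intro a b hab
    simp only [Subtype.mk.injEq] at hab
    exact Fin.ext (le_antisymm (hle _ _ _ _ hab) (hle _ _ _ _ hab.symm))
  · rintro ⟨I, hI, hI0⟩
    obtain ⟨a, b, rfl⟩ := aux_form hp P Q (aux_over hp P Q hP hQ h) k I hI
    rw [hN] at hI
    have hk := Nat.pow_right_injective hp.two_le hI
    refine ⟨⟨a, by omega⟩, Subtype.ext ?_⟩
    have : k - a = b := by omega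
    simp only [this]

open NumberField in
lemma aux_one_card {K : Type*} [Field K] [NumberField K] {p f : ℕ} (hp : p.Prime) (hf : 0 < f)
    (P : Ideal (𝓞 K)) (hP : Ideal.absNorm P = p ^ f)
    (h : ∀ M : Ideal (𝓞 K), M.IsPrime → (p : 𝓞 K) ∈ M → M = P) (k : ℕ) :
    fK K (p ^ k) = if f ∣ k then 1 else 0 := by
  have hI : ∀ I : Ideal (𝓞 K), Ideal.absNorm I = p ^ k → ∃ a, f * a = k ∧ I = P ^ a := by
    intro I hI
    obtain ⟨a, b, rfl⟩ := aux_form hp P P (fun M h1 h2 => Or.inl (h M h1 h2)) k I hI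
    refine ⟨a + b, ?_, by rw [pow_add]⟩
    rw [← pow_add, map_pow, hP, ← pow_mul] at hI
    exact Nat.pow_right_injective hp.two_le hI
  unfold fK
  split_ifs with hk
  · obtain ⟨a, rfl⟩ := hk
    have hPa : Ideal.absNorm (P ^ a) = p ^ (f * a) := by rw [map_pow, hP, pow_mul]
    rw [Nat.card_eq_one_iff_unique]
    refine ⟨⟨?_⟩, ⟨⟨P ^ a, hPa, aux_ne (pow_pos hp.pos _) hPa⟩⟩⟩
    rintro ⟨I, h1, _⟩ ⟨J, h2, _⟩
    obtain ⟨b, hb, rfl⟩ := hI I h1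
    obtain ⟨c, hc, rfl⟩ := hI J h2
    have : b = c := Nat.eq_of_mul_eq_mul_left hf (hb.trans hc.symm)
    subst this
    rfl
  · rw [Nat.card_eq_zero]
    left
    refine ⟨?_⟩
    rintro ⟨I, h1, _⟩
    obtain ⟨b, hb, rfl⟩ := hI I h1
    exact hk ⟨b, hb.symm⟩

open NumberField in
open scoped Classical in
lemma aux_local {K : Type*} [Field K] [NumberField K]
    (hK : Module.finrank ℚ K = 2) {p : ℕ} (hp : p.Prime) (k : ℕ) :
    (fK K (p ^ k) : ℚ) = (if IsSplitIn K p then (k : ℚ) + 1 else 1) *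
      (if IsInertIn K p then (1 + (-1 : ℚ) ^ k) / 2 else 1) := by
  by_cases hs : IsSplitIn K p
  · obtain ⟨P, Q, -, -, hne, hP, hQ, h⟩ := id hs
    rw [if_pos hs, if_neg (aux_notInert hp P Q hP hQ h), aux_split_card hp P Q hP hQ h hne]
    push_cast; ring
  rw [if_neg hs, one_mul]
  rcases aux_tri hK hp with hi | ⟨P, Q, hP, hQ, h⟩
  · rw [if_pos hi, aux_one_card hp two_pos _ hi.2]
    · rcases Nat.even_or_odd k with he | ho
      · rw [if_pos he.two_dvd, he.neg_one_pow]; norm_num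
      · rw [if_neg (fun h => (Nat.not_even_iff_odd.2 ho) (even_iff_two_dvd.2 h)),
          ho.neg_one_pow]; norm_num
    · intro M hM hpM
      have := hi.1.isMaximal (aux_ne (pow_pos hp.pos 2) hi.2)
      exact (this.eq_of_le hM.ne_top ((Ideal.span_singleton_le_iff_mem _).2 hpM)).symm
  · have hPQ : P = Q := by
      by_contra hne
      exact hs ⟨P, Q, Ideal.isPrime_of_irreducible_absNorm (hP ▸ hp),
        Ideal.isPrime_of_irreducible_absNorm (hQ ▸ hp), hne, hP, hQ, h⟩
    subst hPQ
    rw [if_neg (aux_notInert hp P P hP hQ h), aux_one_card hp one_pos P (by rw [hP, pow_one])]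
    · simp
    · intro M hM hpM
      exact (aux_over hp P P hP hQ h M hM hpM).elim id id

open NumberField in
lemma aux_fact {K : Type*} [Field K] [NumberField K]
    (hK : Module.finrank ℚ K = 2) (n : ℕ) (hn : 0 < n) :
    fK K n = ∏ p ∈ n.primeFactors, fK K (p ^ n.factorization p) := by
  have h1 : fK K 1 = 1 := by
    unfold fK
    rw [Nat.card_eq_one_iff_unique]
    refine ⟨⟨?_⟩, ⟨⟨⊤, Ideal.absNorm_top, top_ne_bot⟩⟩⟩
    rintro ⟨I, h1, _⟩ ⟨J, h2, _⟩
    rw [Ideal.absNorm_eq_one_iff] at h1 h2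
    subst h1 h2
    rfl
  induction n using Nat.recOnPosPrimePosCoprime with
  | prime_pow p k hp hk =>
    rw [Nat.primeFactors_prime_pow hk.ne' hp, Finset.prod_singleton, hp.factorization_pow]
    simp
  | zero => omega
  | one => simp [h1]
  | coprime a b ha hb hab iha ihb =>
    have ha0 : 0 < a := by omega
    have hb0 : 0 < b := by omega
    rw [aux_mul hK a b ha0 hb0 hab, hab.primeFactors_mul,
      Finset.prod_union hab.disjoint_primeFactors, iha ha0, ihb hb0]
    congr 1
    · refine Finset.prod_congr rfl fun p hp => ?_
      rw [Nat.factorization_eq_of_coprime_left hab (by simpa using hp)]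
    · refine Finset.prod_congr rfl fun p hp => ?_
      rw [Nat.factorization_eq_of_coprime_right hab (by simpa using hp)]

open scoped Classical in
/-- For a quadratic number field `K` and every positive integer `n`,
`f_K(n) = ∏_{q ∣ n split} (ν_q(n) + 1) · ∏_{p ∣ n inert} (1 + (−1)^{ν_p(n)})/2`. -/
theorem fK_eq_prod_split_inert (K : Type*) [Field K] [NumberField K]
    (hK : Module.finrank ℚ K = 2) (n : ℕ) (hn : 0 < n) :
    (fK K n : ℚ) =
      (∏ p ∈ n.primeFactors.filter fun p => IsSplitIn K p,
        ((n.factorization p : ℚ) + 1)) *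
      ∏ p ∈ n.primeFactors.filter fun p => IsInertIn K p,
        ((1 + (-1 : ℚ) ^ (n.factorization p)) / 2) := by
  rw [aux_fact hK n hn, Finset.prod_filter, Finset.prod_filter, ← Finset.prod_mul_distrib,
    Nat.cast_prod]
  exact Finset.prod_congr rfl fun p hp => aux_local hK (Nat.prime_of_mem_primeFactors hp) _
end

section
/- Under the standing hypotheses, as x → ∞, M(x) ≤ (√(log x)/log₂ x)·( C_g/√(κ·c_†) + O(log₃ x / log₂ x) ), where the implied constant depends on Q and f. -/
open Filter

theorem aux_card_sq (s : Finset ℕ) : (∀ i ∈ s, 1 ≤ i) → s.card ^ 2 ≤ 2 * ∑ i ∈ s, i := by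
  induction s using Finset.induction_on_max with
  | empty => simp
  | insert a s hlt ih =>
    intro h
    have ha : a ∉ s := fun h' => lt_irrefl _ (hlt a h')
    rw [Finset.card_insert_of_notMem ha, Finset.sum_insert ha]
    have h1 := ih (fun i hi => h i (Finset.mem_insert_of_mem hi))
    have h2 : s ⊆ Finset.Ico 1 a := fun i hi =>
      Finset.mem_Ico.2 ⟨h i (Finset.mem_insert_of_mem hi), hlt i hi⟩
    have h3 := Finset.card_le_card h2
    rw [Nat.card_Ico] at h3
    have h4 := h a (Finset.mem_insert_self _ _)
    have h5 : s.card + 1 ≤ a := by omega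
    nlinarith

theorem aux_core (R : Finset ℕ) (al idx : ℕ → ℕ) (hinj : Set.InjOn idx R)
    (hpos : ∀ r ∈ R, 1 ≤ idx r) (d : ℕ → ℝ) (hs : Summable fun k => d k ^ 2) :
    ∑ r ∈ R, ∑ k ∈ Finset.range (al r), d k ≤
      Real.sqrt (∑' k, d k ^ 2) * Real.sqrt (2 * ∑ r ∈ R, (al r : ℝ) * idx r) := by
  classical
  obtain ⟨K, hle⟩ : ∃ K, ∀ r ∈ R, al r ≤ K :=
    ⟨∑ r ∈ R, al r, fun r hr => Finset.single_le_sum (f := al) (fun _ _ => Nat.zero_le _) hr⟩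
  have hr : ∀ (φ : ℕ → ℝ), ∀ r ∈ R, ∑ k ∈ Finset.range (al r), φ k =
      ∑ k ∈ Finset.range K, if k < al r then φ k else 0 := by
    intro φ r hr
    rw [← Finset.sum_filter]
    apply Finset.sum_congr _ (fun _ _ => rfl)
    ext k
    have := hle r hr
    simp only [Finset.mem_range, Finset.mem_filter]
    omega
  have h1 : ∑ r ∈ R, ∑ k ∈ Finset.range (al r), d k =
      ∑ k ∈ Finset.range K, d k * ((R.filter (fun r => k < al r)).card : ℝ) := by
    rw [Finset.sum_congr rfl (hr d), Finset.sum_comm]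
    refine Finset.sum_congr rfl fun k _ => ?_
    rw [← Finset.sum_filter, Finset.sum_const, nsmul_eq_mul, mul_comm]
  have h2 : ∑ k ∈ Finset.range K, ((R.filter (fun r => k < al r)).card : ℝ) ^ 2 ≤
      2 * ∑ r ∈ R, (al r : ℝ) * idx r := by
    have e : ∀ r ∈ R, (al r : ℝ) * idx r = ∑ k ∈ Finset.range K, if k < al r then (idx r : ℝ) else 0 := by
      intro r h
      rw [← hr (fun _ => (idx r : ℝ)) r h]; simp
    rw [Finset.sum_congr rfl e, Finset.sum_comm, Finset.mul_sum]
    refine Finset.sum_le_sum fun k _ => ?_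
    rw [← Finset.sum_filter]
    have hi : Set.InjOn idx (R.filter (fun r => k < al r)) := hinj.mono (by
      intro r; simp only [Finset.coe_filter, Set.mem_ofPred_eq, Finset.mem_coe]; exact fun h => h.1)
    have := aux_card_sq ((R.filter (fun r => k < al r)).image idx) (by
      intro i hi
      obtain ⟨r, hr, rfl⟩ := Finset.mem_image.1 hi
      exact hpos r (Finset.mem_filter.1 hr).1)
    rw [Finset.card_image_of_injOn hi, Finset.sum_image hi] at this
    exact_mod_cast this
  rw [h1]
  refine (Real.sum_mul_le_sqrt_mul_sqrt _ _ _).trans ?_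
  refine mul_le_mul (Real.sqrt_le_sqrt ?_) (Real.sqrt_le_sqrt h2) (Real.sqrt_nonneg _) (Real.sqrt_nonneg _)
  exact hs.sum_le_tsum _ (fun _ _ => sq_nonneg _)

theorem aux_superadd (gdag : ℕ → ℕ) (inQ : ℕ → Prop) (q1 : ℕ) (cstar : ℝ)
    (hq1 : 2 ≤ q1) (hmin : ∀ p, inQ p → q1 ≤ p)
    (hcstar : 1 / (q1 : ℝ) < cstar)
    (hsuper : ∀ a b : ℕ,
      (∀ p : ℕ, p.Prime → p ∣ a → inQ p) →
      (∀ p : ℕ, p.Prime → p ∣ b → inQ p) →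
      q1 ≤ a → a ≤ b →
      (gdag b : ℝ) + cstar * b * gdag a ≤ gdag (a * b)) (m : ℕ) (hm : m ≠ 0)
    (hmQ : ∀ p : ℕ, p.Prime → p ∣ m → inQ p) :
    m.factorization.sum (fun r k => k * gdag r) ≤ gdag m := by
  induction m using Nat.strong_induction_on with
  | _ m ih =>
    by_cases h1 : m = 1
    · subst h1; simp
    by_cases hp : m.Prime
    · rw [hp.factorization, Finsupp.sum_single_index] <;> simp
    have hap := Nat.minFac_prime h1
    set a := m.minFac with ha
    obtain ⟨b, hb⟩ := Nat.minFac_dvd m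
    rw [← ha] at hb
    have hb0 : b ≠ 0 := by rintro rfl; simp at hb; exact hm hb
    have hb1 : b ≠ 1 := by rintro rfl; rw [mul_one] at hb; rw [hb] at hp; exact hp hap
    have hab : a ≤ b := by
      have h3 := Nat.minFac_le_of_dvd (n := m) (m := b.minFac)
        (Nat.minFac_prime hb1).two_le ((Nat.minFac_dvd b).trans ⟨a, by rw [mul_comm]; exact hb⟩)
      exact h3.trans (Nat.minFac_le (Nat.pos_of_ne_zero hb0))
    have haQ : ∀ p : ℕ, p.Prime → p ∣ a → inQ p := fun p hp h => hmQ p hp (h.trans ⟨b, hb⟩)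
    have hbQ : ∀ p : ℕ, p.Prime → p ∣ b → inQ p := fun p hp h =>
      hmQ p hp (h.trans ⟨a, by rw [mul_comm]; exact hb⟩)
    have hqa : q1 ≤ a := hmin a (haQ a hap dvd_rfl)
    have key := hsuper a b haQ hbQ hqa hab
    have hblt : b < m := by
      rw [hb]; have := hap.two_le; have : 0 < b := Nat.pos_of_ne_zero hb0; nlinarith
    have hbi := ih b hblt hb0 hbQ
    rw [hb, Nat.factorization_mul hap.ne_zero hb0, Finsupp.sum_add_index' (by simp) (by intros; ring),
      hap.factorization, Finsupp.sum_single_index (by simp), one_mul]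
    have hcb : 1 ≤ cstar * b := by
      have hq1' : (0:ℝ) < q1 := by exact_mod_cast (by omega : 0 < q1)
      rw [div_lt_iff₀ hq1'] at hcstar
      have : (q1 : ℝ) ≤ b := by exact_mod_cast hqa.trans hab
      have hc : 0 < cstar := by by_contra h; nlinarith
      nlinarith
    have hga : (0:ℝ) ≤ gdag a := Nat.cast_nonneg _
    have : (gdag a : ℝ) + gdag b ≤ gdag (a * b) := by nlinarith
    have : gdag a + gdag b ≤ gdag (a * b) := by exact_mod_cast this
    omega

theorem aux_cost (g gdag : ℕ → ℕ) (inQ : ℕ → Prop) (hgmono : Monotone g) (hg0 : g 0 = 1)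
    (hgrange : ∀ m : ℕ, 0 < m → (∀ p : ℕ, p.Prime → p ∣ m → inQ p) → ∃ x : ℕ, g x = m)
    (hgdagdef : ∀ y : ℕ, gdag y = sInf {x : ℕ | 0 < x ∧ g x = y})
    (hsup : ∀ m : ℕ, m ≠ 0 → (∀ p : ℕ, p.Prime → p ∣ m → inQ p) →
      m.factorization.sum (fun r k => k * gdag r) ≤ gdag m)
    (R : Finset ℕ) (hR : ∀ r ∈ R, inQ r) (ν : ℕ) (hν : 1 ≤ ν) :
    ∑ r ∈ R, (g ν).factorization r * gdag r ≤ ν := by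
  classical
  have hgpos : g ν ≠ 0 := by
    have := hgmono (Nat.zero_le ν); omega
  set φ := (g ν).factorization.filter inQ with hφ
  have hφp : ∀ p ∈ φ.support, p.Prime := by
    intro p hp
    rw [hφ, Finsupp.support_filter, Finset.mem_filter] at hp
    exact Nat.prime_of_mem_primeFactors (by simpa using hp.1)
  set m := φ.prod (· ^ ·) with hm
  have hmf : m.factorization = φ := Nat.prod_pow_factorization_eq_self hφp
  have hm0 : m ≠ 0 := by
    rw [hm, Finsupp.prod]
    exact Finset.prod_ne_zero_iff.2 fun p hp => pow_ne_zero _ (hφp p hp).ne_zero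
  have hdvd : m ∣ g ν := by
    rw [← Nat.factorization_le_iff_dvd hm0 hgpos, hmf]
    intro p
    rw [hφ, Finsupp.filter_apply]; split_ifs <;> simp
  have hmQ : ∀ p : ℕ, p.Prime → p ∣ m → inQ p := by
    intro p hp hd
    have : m.factorization p ≠ 0 := (hp.factorization_pos_of_dvd hm0 hd).ne'
    rw [hmf, hφ, Finsupp.filter_apply] at this
    by_contra h; simp [h] at this
  have h1 : ∑ r ∈ R, (g ν).factorization r * gdag r ≤ m.factorization.sum (fun r k => k * gdag r) := by
    rw [hmf, Finsupp.sum]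
    calc ∑ r ∈ R, (g ν).factorization r * gdag r = ∑ r ∈ R, φ r * gdag r := by
          refine Finset.sum_congr rfl fun r hr => ?_
          rw [hφ, Finsupp.filter_apply_pos _ _ (hR r hr)]
      _ = ∑ r ∈ R.filter (fun r => r ∈ φ.support), φ r * gdag r := by
          rw [Finset.sum_filter]
          refine Finset.sum_congr rfl fun r _ => ?_
          split_ifs with h
          · rfl
          · simp only [Finsupp.mem_support_iff, not_not] at h; simp [h]
      _ ≤ _ := Finset.sum_le_sum_of_subset (fun r hr => (Finset.mem_filter.1 hr).2)
  by_cases hm1 : m = 1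
  · have h0 : (1 : ℕ).factorization.sum (fun r k => k * gdag r) = 0 := by simp
    rw [hm1, h0] at h1
    omega
  have h2 := hsup m hm0 hmQ
  refine h1.trans (h2.trans ?_)
  obtain ⟨x, hx⟩ := hgrange m (Nat.pos_of_ne_zero hm0) hmQ
  have hx0 : x ≠ 0 := by rintro rfl; rw [hg0] at hx; exact hm1 hx.symm
  have hmem : gdag m ∈ {x : ℕ | 0 < x ∧ g x = m} := by
    rw [hgdagdef]; exact Nat.sInf_mem ⟨x, Nat.pos_of_ne_zero hx0, hx⟩
  by_contra hlt
  push Not at hlt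
  have h3 : g ν ≤ m := hmem.2 ▸ hgmono hlt.le
  have h4 : m ≤ g ν := Nat.le_of_dvd (Nat.pos_of_ne_zero hgpos) hdvd
  have h5 : sInf {x : ℕ | 0 < x ∧ g x = m} ≤ ν := Nat.sInf_le ⟨hν, le_antisymm h3 h4⟩
  rw [← hgdagdef] at h5
  omega

theorem aux_log_nat (m : ℕ) (hm : m ≠ 0) :
    Real.log m = ∑ p ∈ m.primeFactors, (m.factorization p : ℝ) * Real.log p := by
  conv_lhs => rw [← Nat.prod_factorization_pow_eq_self hm]
  rw [Finsupp.prod, Nat.support_factorization]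
  push_cast
  rw [Real.log_prod]
  · simp
  · intro p hp
    have := (Nat.prime_of_mem_primeFactors hp).ne_zero
    positivity

theorem aux_log_sub (m : ℕ) (hm : m ≠ 0) (S : Finset ℕ) :
    ∑ p ∈ S, (m.factorization p : ℝ) * Real.log p ≤ Real.log m := by
  classical
  rw [aux_log_nat m hm]
  have : ∑ p ∈ S, (m.factorization p : ℝ) * Real.log p =
      ∑ p ∈ S.filter (· ∈ m.primeFactors), (m.factorization p : ℝ) * Real.log p := by
    rw [Finset.sum_filter]
    refine Finset.sum_congr rfl fun r _ => ?_
    split_ifs with h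
    · rfl
    · rw [← Nat.support_factorization, Finsupp.mem_support_iff, not_not] at h; simp [h]
  rw [this]
  refine Finset.sum_le_sum_of_subset_of_nonneg (fun r hr => (Finset.mem_filter.1 hr).2) ?_
  intro p hp _
  have : (1:ℝ) ≤ p := by exact_mod_cast (Nat.prime_of_mem_primeFactors hp).one_le
  have := Real.log_nonneg this
  positivity

theorem aux_mult (f : ℕ → ℕ) (hf1 : f 1 = 1)
    (hfmult : ∀ m₁ m₂ : ℕ, Nat.Coprime m₁ m₂ → f (m₁ * m₂) = f m₁ * f m₂) (n : ℕ) (hn : n ≠ 0) :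
    f n = ∏ p ∈ n.primeFactors, f (p ^ n.factorization p) := by
  rw [Nat.multiplicative_factorization f (fun x y h => hfmult x y h) hf1 hn]
  rfl

theorem aux_telescope (g : ℕ → ℕ) (hgpos : ∀ k, 0 < g k) (hg0 : g 0 = 1) (a : ℕ) :
    Real.log (g a) = ∑ k ∈ Finset.range a, Real.log ((g (k + 1) : ℝ) / (g k : ℝ)) := by
  induction a with
  | zero => simp [hg0]
  | succ a ih =>
    rw [Finset.sum_range_succ, ← ih, Real.log_div]
    · ring
    · exact_mod_cast (hgpos _).ne'
    · exact_mod_cast (hgpos _).ne'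

theorem aux_add (g : ℕ → ℕ) (hgpos : ∀ k, 0 < g k) (D : ℝ)
    (hD : ∀ k, Real.log ((g (k + 1) : ℝ) / (g k : ℝ)) ≤ D) (a b : ℕ) :
    Real.log (g (a + b)) ≤ Real.log (g a) + D * b := by
  induction b with
  | zero => simp
  | succ b ih =>
    have h := hD (a + b)
    rw [Real.log_div (by exact_mod_cast (hgpos _).ne') (by exact_mod_cast (hgpos _).ne')] at h
    push_cast
    rw [← add_assoc]
    linarith

theorem aux_pointwise (g f gdag idx : ℕ → ℕ) (inQ : ℕ → Prop) (cf T w D L Λ : ℝ)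
    (hgpos : ∀ k, 0 < g k) (hg0 : g 0 = 1)
    (hcost : ∀ R : Finset ℕ, (∀ r ∈ R, inQ r) → ∀ ν : ℕ, 1 ≤ ν →
      ∑ r ∈ R, (g ν).factorization r * gdag r ≤ ν)
    (hgd1 : ∀ r, inQ r → 1 ≤ gdag r)
    (hidx : ∀ r, inQ r → 1 ≤ idx r)
    (hinj : ∀ r s, inQ r → inQ s → idx r = idx s → r = s)
    (hcf : 0 < cf) (hgsub : ∀ x : ℕ, 1 ≤ x → (g x : ℝ) ≤ cf * x)
    (hf0 : f 0 = 1) (hf1 : f 1 = 1)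
    (hfmult : ∀ m₁ m₂ : ℕ, Nat.Coprime m₁ m₂ → f (m₁ * m₂) = f m₁ * f m₂)
    (hfQ : ∀ p ν : ℕ, p.Prime → inQ p → 1 ≤ ν → f (p ^ ν) = g ν)
    (hfnotQ : ∀ p ν : ℕ, p.Prime → ¬ inQ p → 1 ≤ ν → f (p ^ ν) = 0 ∨ f (p ^ ν) = 1)
    (hs : Summable fun k => (Real.log ((g (k + 1) : ℝ) / (g k : ℝ))) ^ 2)
    (hD0 : 0 ≤ D) (hD : ∀ k, Real.log ((g (k + 1) : ℝ) / (g k : ℝ)) ≤ D)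
    (hT : 1 < T) (hw : 0 < w) (hwi : ∀ r, inQ r → T < idx r → w * idx r ≤ gdag r)
    (hΛ : 0 ≤ Λ) (hΛL : Real.log (cf * (2 * L)) ≤ Λ)
    (n : ℕ) (hn : n ≠ 0) (hnL : Real.log n ≤ L) :
    Real.log (f (f n)) ≤
      Real.sqrt (∑' k, (Real.log ((g (k + 1) : ℝ) / (g k : ℝ))) ^ 2) *
        Real.sqrt (2 * (L / Real.log T / w)) + T * Λ + D * (T * (Λ / Real.log 2)) := by
  classical
  have hlogT : 0 < Real.log T := Real.log_pos hT
  have hlog2 : 0 < Real.log 2 := Real.log_pos (by norm_num)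
  have hrhs : 0 ≤ Real.sqrt (∑' k, (Real.log ((g (k + 1) : ℝ) / (g k : ℝ))) ^ 2) *
        Real.sqrt (2 * (L / Real.log T / w)) + T * Λ + D * (T * (Λ / Real.log 2)) := by positivity
  by_cases hN : f n = 0
  · rw [hN, hf0]; simpa using hrhs
  by_cases hfN : f (f n) = 0
  · rw [hfN]; simpa using hrhs
  set N := f n with hNdef
  set S := n.primeFactors.filter inQ with hS
  set R := N.primeFactors.filter inQ with hR
  set e := n.factorization with he
  have hSp : ∀ p ∈ S, p.Prime := fun p hp => Nat.prime_of_mem_primeFactors (Finset.mem_filter.1 hp).1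
  have hSQ : ∀ p ∈ S, inQ p := fun p hp => (Finset.mem_filter.1 hp).2
  have hSe : ∀ p ∈ S, 1 ≤ e p := fun p hp =>
    (hSp p hp).factorization_pos_of_dvd hn (Nat.dvd_of_mem_primeFactors (Finset.mem_filter.1 hp).1)
  have hRp : ∀ p ∈ R, p.Prime := fun p hp => Nat.prime_of_mem_primeFactors (Finset.mem_filter.1 hp).1
  have hRQ : ∀ p ∈ R, inQ p := fun p hp => (Finset.mem_filter.1 hp).2
  -- first: bound by the Q-part
  have h1 : Real.log (f N) ≤ ∑ r ∈ R, Real.log (g (N.factorization r)) := by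
    have hprod := aux_mult f hf1 hfmult N hN
    have hne : ∀ p ∈ N.primeFactors, f (p ^ N.factorization p) ≠ 0 := by
      rw [hprod] at hfN; exact Finset.prod_ne_zero_iff.1 hfN
    rw [hprod]
    push_cast
    rw [Real.log_prod (by intro p hp; exact_mod_cast hne p hp), hR, Finset.sum_filter]
    refine Finset.sum_le_sum fun p hp => ?_
    have hpp := Nat.prime_of_mem_primeFactors hp
    have hpe := hpp.factorization_pos_of_dvd hN (Nat.dvd_of_mem_primeFactors hp)
    split_ifs with h
    · rw [hfQ p _ hpp h hpe]
    · rcases hfnotQ p _ hpp h hpe with h' | h' <;> simp [h']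
  have h2 : ∀ r, N.factorization r = ∑ p ∈ S, (g (e p)).factorization r := by
    intro r
    have hprod := aux_mult f hf1 hfmult n hn
    rw [← hNdef] at hprod
    have hne : ∀ p ∈ n.primeFactors, f (p ^ n.factorization p) ≠ 0 := by
      rw [hprod] at hN; exact Finset.prod_ne_zero_iff.1 hN
    rw [hprod, Nat.factorization_prod hne, Finset.sum_apply', hS, Finset.sum_filter]
    refine Finset.sum_congr rfl fun p hp => ?_
    have hpp := Nat.prime_of_mem_primeFactors hp
    have hpe := hpp.factorization_pos_of_dvd hn (Nat.dvd_of_mem_primeFactors hp)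
    split_ifs with h
    · rw [hfQ p _ hpp h hpe]
    · rcases hfnotQ p _ hpp h hpe with h' | h'
      · exact absurd h' (hne p hp)
      · simp [h']
  set S1 := S.filter (fun p : ℕ => T < (p : ℝ)) with hS1
  set S2 := S.filter (fun p : ℕ => ¬ T < (p : ℝ)) with hS2
  set a1 : ℕ → ℕ := fun r => ∑ p ∈ S1, (g (e p)).factorization r with ha1
  set a2 : ℕ → ℕ := fun r => ∑ p ∈ S2, (g (e p)).factorization r with ha2
  have h3 : ∀ r, N.factorization r = a1 r + a2 r := by
    intro r
    rw [h2, ha1, ha2, hS1, hS2]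
    exact (Finset.sum_filter_add_sum_filter_not S _ _).symm
  -- exponents
  have hE : ∑ p ∈ S, (e p : ℝ) * Real.log p ≤ L := (aux_log_sub n hn S).trans hnL
  have hlogp : ∀ p ∈ S, Real.log 2 ≤ Real.log p := fun p hp =>
    Real.log_le_log (by norm_num) (by exact_mod_cast (hSp p hp).two_le)
  have hEsum : ∑ p ∈ S, (e p : ℝ) ≤ 2 * L := by
    have h : (∑ p ∈ S, (e p : ℝ)) * (1 / 2) ≤ L := by
      refine le_trans ?_ hE
      rw [Finset.sum_mul]
      refine Finset.sum_le_sum fun p hp => ?_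
      have := hlogp p hp
      have := Real.log_two_gt_d9
      exact mul_le_mul_of_nonneg_left (by linarith) (Nat.cast_nonneg _)
    linarith
  have hEp : ∀ p ∈ S, (e p : ℝ) ≤ 2 * L := fun p hp =>
    (Finset.single_le_sum (f := fun p => (e p : ℝ)) (fun _ _ => Nat.cast_nonneg _) hp).trans hEsum
  have hglog : ∀ a : ℕ, (a : ℝ) ≤ 2 * L → Real.log (g a) ≤ Λ := by
    intro a ha
    rcases Nat.eq_zero_or_pos a with rfl | hpos
    · simpa [hg0] using hΛ
    · refine le_trans (Real.log_le_log (by exact_mod_cast hgpos a) ?_) hΛL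
      exact (hgsub a hpos).trans (mul_le_mul_of_nonneg_left ha hcf.le)
  -- the a2 part
  have hS2card : (S2.card : ℝ) ≤ T := by
    have hsub : S2 ⊆ Finset.Icc 1 ⌊T⌋₊ := by
      intro p hp
      rw [hS2, Finset.mem_filter] at hp
      rw [Finset.mem_Icc]
      exact ⟨(hSp p hp.1).one_le, Nat.le_floor (not_lt.1 hp.2)⟩
    have := Finset.card_le_card hsub
    rw [Nat.card_Icc, Nat.add_sub_cancel] at this
    calc (S2.card : ℝ) ≤ ⌊T⌋₊ := by exact_mod_cast this
      _ ≤ T := Nat.floor_le (by linarith)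
  have hA2 : ∑ r ∈ R, (a2 r : ℝ) ≤ T * (Λ / Real.log 2) := by
    have : ∑ r ∈ R, (a2 r : ℝ) = ∑ p ∈ S2, ∑ r ∈ R, ((g (e p)).factorization r : ℝ) := by
      rw [Finset.sum_comm]
      refine Finset.sum_congr rfl fun r _ => ?_
      rw [ha2]; push_cast; rfl
    rw [this]
    have hb : ∀ p ∈ S2, ∑ r ∈ R, ((g (e p)).factorization r : ℝ) ≤ Λ / Real.log 2 := by
      intro p hp
      rw [le_div_iff₀ hlog2, Finset.sum_mul]
      refine le_trans ?_ (hglog (e p) (hEp p (Finset.mem_filter.1 hp).1))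
      refine le_trans ?_ (aux_log_sub (g (e p)) (hgpos _).ne' R)
      refine Finset.sum_le_sum fun r hr => mul_le_mul_of_nonneg_left ?_ (Nat.cast_nonneg _)
      exact Real.log_le_log (by norm_num) (by exact_mod_cast (hRp r hr).two_le)
    refine (Finset.sum_le_card_nsmul _ _ _ hb).trans ?_
    rw [nsmul_eq_mul]
    exact mul_le_mul_of_nonneg_right hS2card (by positivity)
  -- the a1 part
  have hcS1 : ∑ r ∈ R, (a1 r : ℝ) * gdag r ≤ ∑ p ∈ S1, (e p : ℝ) := by
    have : ∑ r ∈ R, (a1 r : ℝ) * gdag r =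
        ∑ p ∈ S1, ∑ r ∈ R, ((g (e p)).factorization r : ℝ) * gdag r := by
      rw [Finset.sum_comm]
      refine Finset.sum_congr rfl fun r _ => ?_
      rw [ha1]; push_cast; rw [Finset.sum_mul]
    rw [this]
    refine Finset.sum_le_sum fun p hp => ?_
    exact_mod_cast hcost R hRQ (e p) (hSe p (Finset.mem_filter.1 hp).1)
  have hS1sum : ∑ p ∈ S1, (e p : ℝ) ≤ L / Real.log T := by
    rw [le_div_iff₀ hlogT, Finset.sum_mul]
    refine le_trans ?_ ((aux_log_sub n hn S1).trans hnL)
    refine Finset.sum_le_sum fun p hp => mul_le_mul_of_nonneg_left ?_ (Nat.cast_nonneg _)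
    exact Real.log_le_log (by linarith) (Finset.mem_filter.1 hp).2.le
  have ha1le : ∀ r ∈ R, (a1 r : ℝ) ≤ 2 * L := by
    intro r hr
    have h4 : (a1 r : ℝ) ≤ (a1 r : ℝ) * gdag r :=
      le_mul_of_one_le_right (Nat.cast_nonneg _) (by exact_mod_cast hgd1 r (hRQ r hr))
    have h5 := Finset.single_le_sum (f := fun r => (a1 r : ℝ) * gdag r) (fun _ _ => by positivity) hr
    have h6 : ∑ p ∈ S1, (e p : ℝ) ≤ ∑ p ∈ S, (e p : ℝ) :=
      Finset.sum_le_sum_of_subset_of_nonneg (Finset.filter_subset _ _) (fun _ _ _ => Nat.cast_nonneg _)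
    linarith
  set R1 := R.filter (fun r => T < idx r) with hR1
  set R2 := R.filter (fun r => ¬ T < idx r) with hR2
  have hR2card : (R2.card : ℝ) ≤ T := by
    have hsub : R2.image idx ⊆ Finset.Icc 1 ⌊T⌋₊ := by
      intro i hi
      obtain ⟨p, hp, rfl⟩ := Finset.mem_image.1 hi
      rw [hR2, Finset.mem_filter] at hp
      rw [Finset.mem_Icc]
      exact ⟨hidx p (hRQ p hp.1), Nat.le_floor (not_lt.1 hp.2)⟩
    have := Finset.card_le_card hsub
    rw [Nat.card_Icc, Nat.add_sub_cancel, Finset.card_image_of_injOn] at this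
    · calc (R2.card : ℝ) ≤ ⌊T⌋₊ := by exact_mod_cast this
        _ ≤ T := Nat.floor_le (by linarith)
    · intro r hr s hs h
      exact hinj r s (hRQ r (Finset.mem_filter.1 hr).1) (hRQ s (Finset.mem_filter.1 hs).1) h
  have hsmall : ∑ r ∈ R2, Real.log (g (a1 r)) ≤ T * Λ := by
    refine (Finset.sum_le_card_nsmul _ _ Λ
      (fun r hr => hglog _ (ha1le r (Finset.mem_filter.1 hr).1))).trans ?_
    rw [nsmul_eq_mul]
    exact mul_le_mul_of_nonneg_right hR2card hΛ
  have hbig : ∑ r ∈ R1, Real.log (g (a1 r)) ≤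
      Real.sqrt (∑' k, (Real.log ((g (k + 1) : ℝ) / (g k : ℝ))) ^ 2) *
        Real.sqrt (2 * (L / Real.log T / w)) := by
    rw [Finset.sum_congr rfl (fun r _ => aux_telescope g hgpos hg0 (a1 r))]
    refine (aux_core R1 a1 idx ?_ (fun r hr => hidx r (hRQ r (Finset.mem_filter.1 hr).1)) _ hs).trans ?_
    · intro r hr s hs h
      exact hinj r s (hRQ r (Finset.mem_filter.1 hr).1) (hRQ s (Finset.mem_filter.1 hs).1) h
    · refine mul_le_mul_of_nonneg_left (Real.sqrt_le_sqrt ?_) (Real.sqrt_nonneg _)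
      refine mul_le_mul_of_nonneg_left ?_ (by norm_num)
      rw [le_div_iff₀ hw, Finset.sum_mul]
      refine le_trans ?_ (hcS1.trans hS1sum)
      refine le_trans ?_ (Finset.sum_le_sum_of_subset_of_nonneg (Finset.filter_subset (fun r => T < (idx r : ℝ)) R)
        (fun _ _ _ => by positivity))
      refine Finset.sum_le_sum fun r hr => ?_
      have := hwi r (hRQ r (Finset.mem_filter.1 hr).1) (Finset.mem_filter.1 hr).2
      have h0 : (0:ℝ) ≤ a1 r := Nat.cast_nonneg _
      nlinarith
  calc Real.log (f N) ≤ ∑ r ∈ R, Real.log (g (N.factorization r)) := h1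
    _ ≤ ∑ r ∈ R, (Real.log (g (a1 r)) + D * a2 r) := by
        refine Finset.sum_le_sum fun r _ => ?_
        rw [h3]; exact aux_add g hgpos D hD _ _
    _ = ∑ r ∈ R, Real.log (g (a1 r)) + D * ∑ r ∈ R, (a2 r : ℝ) := by
        rw [Finset.sum_add_distrib, Finset.mul_sum]
    _ = (∑ r ∈ R1, Real.log (g (a1 r)) + ∑ r ∈ R2, Real.log (g (a1 r))) +
          D * ∑ r ∈ R, (a2 r : ℝ) := by
        rw [hR1, hR2, Finset.sum_filter_add_sum_filter_not]
    _ ≤ _ := add_le_add (add_le_add hbig hsmall) (mul_le_mul_of_nonneg_left hA2 hD0)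

theorem aux_q_ge (q : ℕ → ℕ) (hqprime : ∀ j : ℕ, 1 ≤ j → (q j).Prime)
    (hqmono : ∀ j : ℕ, 1 ≤ j → q j < q (j + 1)) (j : ℕ) (hj : 1 ≤ j) : j ≤ q j ∧ q 1 ≤ q j := by
  induction j, hj using Nat.le_induction with
  | base => exact ⟨(hqprime 1 le_rfl).one_le, le_rfl⟩
  | succ j hj ih => have := hqmono j hj; omega

theorem aux_w (q gdag : ℕ → ℕ) (κ cdag : ℝ)
    (hge : ∀ j, 1 ≤ j → j ≤ q j)
    (hκ : 0 < κ)
    (hqasymp : ∃ A : ℝ, ∀ j : ℕ, 2 ≤ j →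
      |(q j : ℝ) - κ * j * (Real.log j + Real.log (Real.log j))| ≤ A * (κ * j))
    (hcdag : 0 < cdag)
    (hgdagasymp : ∃ B : ℝ, ∀ j : ℕ, 1 ≤ j →
      |(gdag (q j) : ℝ) - cdag * q j| ≤ B * (q j : ℝ) / Real.log (q j)) :
    ∃ A2 : ℝ, 0 ≤ A2 ∧ ∃ Y0 : ℝ, ∀ j : ℕ, 1 ≤ j → Y0 ≤ Real.log j →
      κ * cdag * (Real.log j - A2) * j ≤ gdag (q j) := by
  obtain ⟨A, hA⟩ := hqasymp
  obtain ⟨B, hB⟩ := hgdagasymp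
  refine ⟨|A| + |B| / cdag, by positivity, max (max |A| (|B| / cdag)) 1, fun j hj hY => ?_⟩
  have hy1 : (1:ℝ) ≤ Real.log j := (le_max_right _ _).trans hY
  have hyA : |A| ≤ Real.log j := ((le_max_left _ _).trans (le_max_left _ _)).trans hY
  have hyB : |B| / cdag ≤ Real.log j := ((le_max_right _ _).trans (le_max_left _ _)).trans hY
  have hj2 : 2 ≤ j := by
    by_contra h
    have : j = 1 := by omega
    subst this; norm_num at hy1
  have hj0 : (0:ℝ) < j := by exact_mod_cast hj
  have hqj : (j : ℝ) ≤ q j := by exact_mod_cast hge j hj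
  set y := Real.log j with hy
  have hll : 0 ≤ Real.log y := Real.log_nonneg hy1
  have h1 := (abs_le.1 (hA j hj2)).1
  have hlq : y ≤ Real.log (q j) := Real.log_le_log hj0 hqj
  have hκj : 0 < κ * j := by positivity
  have h2 : κ * j * (y - |A|) ≤ q j := by
    have : A * (κ * j) ≤ |A| * (κ * j) := mul_le_mul_of_nonneg_right (le_abs_self A) hκj.le
    have := mul_nonneg hκj.le hll
    nlinarith
  have h3 := (abs_le.1 (hB j hj)).1
  have h4 : B * (q j : ℝ) / Real.log (q j) ≤ |B| * q j / y := by
    apply div_le_div₀ (by positivity) _ (by linarith) hlq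
    exact mul_le_mul_of_nonneg_right (le_abs_self B) (by positivity)
  have h5 : (q j : ℝ) * (cdag * (1 - (|B| / cdag) / y)) ≤ gdag (q j) := by
    have : (q j : ℝ) * (cdag * (1 - (|B| / cdag) / y)) = cdag * q j - |B| * q j / y := by
      field_simp
    rw [this]; linarith
  have h6 : 0 ≤ cdag * (1 - (|B| / cdag) / y) := by
    apply mul_nonneg hcdag.le
    rw [sub_nonneg, div_le_one (by linarith)]; exact hyB
  refine le_trans ?_ ((mul_le_mul_of_nonneg_right h2 h6).trans h5)
  have hb : 0 ≤ |B| / cdag := by positivity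
  set b := |B| / cdag
  have : κ * j * (y - |A|) * (cdag * (1 - b / y)) =
      κ * cdag * (y - (|A| + b)) * j + κ * j * cdag * (|A| * b / y) := by
    field_simp; ring
  rw [this]
  have : 0 ≤ κ * j * cdag * (|A| * b / y) := by positivity
  linarith

theorem aux_asymp (A2 Y0 u cf D s L l ll : ℝ) (hA2 : 0 ≤ A2) (hu : 0 < u) (hcf : 0 < cf)
    (hD : 0 ≤ D) (hL : 0 < L) (hl : l = Real.log L) (hll : ll = Real.log l)
    (h1 : 1 ≤ ll) (h2 : A2 ≤ ll) (h3 : 16 * ll ≤ l) (h4 : 4 * Y0 ≤ l)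
    (h5 : Real.log (2 * cf) ≤ l) :
    1 < Real.sqrt L / l ^ 3 ∧ Y0 ≤ Real.log (Real.sqrt L / l ^ 3) ∧
    0 < u * (Real.log (Real.sqrt L / l ^ 3) - A2) ∧ 0 ≤ 2 * l ∧
    Real.log (cf * (2 * L)) ≤ 2 * l ∧
    Real.sqrt s * Real.sqrt (2 * (L / Real.log (Real.sqrt L / l ^ 3) /
      (u * (Real.log (Real.sqrt L / l ^ 3) - A2)))) + Real.sqrt L / l ^ 3 * (2 * l) +
      D * (Real.sqrt L / l ^ 3 * (2 * l / Real.log 2)) ≤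
    Real.sqrt L / l * (Real.sqrt (8 * s) / Real.sqrt u +
      (16 * (Real.sqrt (8 * s) / Real.sqrt u) + 2 + 2 * D / Real.log 2) * (ll / l)) := by
  have hl0 : 0 < l := by linarith
  have hsL : 0 < Real.sqrt L := Real.sqrt_pos.2 hL
  have hlog2 : 0 < Real.log 2 := Real.log_pos (by norm_num)
  have hTpos : 0 < Real.sqrt L / l ^ 3 := by positivity
  have hlogT : Real.log (Real.sqrt L / l ^ 3) = l / 2 - 3 * ll := by
    rw [Real.log_div hsL.ne' (by positivity), Real.log_sqrt hL.le, Real.log_pow, ← hl, ← hll]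
    norm_num
  have hT1 : 1 < Real.sqrt L / l ^ 3 := by
    rw [← Real.log_pos_iff hTpos.le, hlogT]; linarith
  rw [hlogT]
  set T := Real.sqrt L / l ^ 3 with hT
  set t := ll / l with ht
  have ht0 : 0 ≤ t := by positivity
  have ht1 : t ≤ 1 / 16 := by rw [ht, div_le_iff₀ hl0]; linarith
  have htl : t * l = ll := by rw [ht]; field_simp
  set Y := l / 2 - 3 * ll with hY
  have hYA : l / 2 - 4 * ll ≤ Y - A2 := by linarith
  have hYA0 : 0 < Y - A2 := by linarith
  have hY0 : 0 < Y := by linarith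
  have hz : l / 2 ≤ (l / 2 - 4 * ll) * (1 + 16 * t) := by
    rw [← htl]
    have : 0 ≤ l * t * (1 - 16 * t) := mul_nonneg (by positivity) (by linarith)
    nlinarith
  have hz0 : 0 < 1 + 16 * t := by linarith
  refine ⟨hT1, by linarith, mul_pos hu hYA0, by linarith, ?_, ?_⟩
  · rw [← mul_assoc, Real.log_mul (by positivity) hL.ne', ← hl, mul_comm cf]; linarith
  have hsu : 0 < Real.sqrt u := Real.sqrt_pos.2 hu
  have hmain : Real.sqrt (2 * (L / Y / (u * (Y - A2)))) ≤
      Real.sqrt L / l * (Real.sqrt 8 / Real.sqrt u) * (1 + 16 * t) := by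
    apply Real.sqrt_le_iff.2
    refine ⟨by positivity, ?_⟩
    have e : (Real.sqrt L / l * (Real.sqrt 8 / Real.sqrt u) * (1 + 16 * t)) ^ 2 =
        8 * L * (1 + 16 * t) ^ 2 / (u * l ^ 2) := by
      rw [mul_pow, mul_pow, div_pow, div_pow, Real.sq_sqrt hL.le, Real.sq_sqrt hu.le,
        Real.sq_sqrt (by norm_num)]
      field_simp
    have e2 : 2 * (L / Y / (u * (Y - A2))) = 2 * L / (u * (Y * (Y - A2))) := by field_simp
    rw [e, e2, div_le_div_iff₀ (by positivity) (by positivity)]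
    have k1 : l / 2 ≤ Y * (1 + 16 * t) := hz.trans (mul_le_mul_of_nonneg_right (by linarith) hz0.le)
    have k2 : l / 2 ≤ (Y - A2) * (1 + 16 * t) := hz.trans (mul_le_mul_of_nonneg_right hYA hz0.le)
    have k3 := mul_le_mul k1 k2 (by positivity) (by positivity)
    have k4 := mul_le_mul_of_nonneg_left k3 (by positivity : 0 ≤ 8 * L * u)
    nlinarith
  have hb1 : T * (2 * l) ≤ Real.sqrt L / l * (2 * t) := by
    have : T * (2 * l) = Real.sqrt L / l * (2 * (1 / l)) := by rw [hT]; field_simp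
    rw [this]
    have : 1 / l ≤ t := by rw [ht]; gcongr
    gcongr
  have hb2 : D * (T * (2 * l / Real.log 2)) ≤ Real.sqrt L / l * (2 * D / Real.log 2 * t) := by
    have e : D * (T * (2 * l / Real.log 2)) = D / Real.log 2 * (T * (2 * l)) := by ring
    have e2 : Real.sqrt L / l * (2 * D / Real.log 2 * t) =
      D / Real.log 2 * (Real.sqrt L / l * (2 * t)) := by ring
    rw [e, e2]
    exact mul_le_mul_of_nonneg_left hb1 (by positivity)
  have hm2 := mul_le_mul_of_nonneg_left hmain (Real.sqrt_nonneg s)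
  have e8 : Real.sqrt (8 * s) = Real.sqrt 8 * Real.sqrt s := Real.sqrt_mul (by norm_num) _
  rw [e8]
  have efin : Real.sqrt L / l * (Real.sqrt 8 * Real.sqrt s / Real.sqrt u +
      (16 * (Real.sqrt 8 * Real.sqrt s / Real.sqrt u) + 2 + 2 * D / Real.log 2) * t) =
      Real.sqrt s * (Real.sqrt L / l * (Real.sqrt 8 / Real.sqrt u) * (1 + 16 * t)) +
      Real.sqrt L / l * (2 * t) + Real.sqrt L / l * (2 * D / Real.log 2 * t) := by ring
  rw [efin]
  exact add_le_add (add_le_add hm2 hb1) hb2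




/-- **Upper bound for the maximal order of the iterated function `f`.**
Under the standing hypotheses (A.1)–(A.7) on the sequence of primes `(q_j)_{j≥1}`, the
function `g`, its pseudo-inverse `g†` and the multiplicative function `f`, one has
`M(x) ≤ (√(log x)/log₂ x)·(C_g/√(κ·c_†) + O(log₃ x/log₂ x))` as `x → ∞`, where
`M(x) = max_{n ≤ x} log f(f(n))` and `C_g = (8·∑_{j≥1} (log(g(j)/g(j−1)))²)^{1/2}`. -/
theorem maxOrder_upper_bound
    (q : ℕ → ℕ) (g f gdag : ℕ → ℕ) (κ cstar cf cdag ε : ℝ)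
    -- the strictly increasing sequence of primes `q_1 < q_2 < …` with its asymptotics (A.1)
    (hqprime : ∀ j : ℕ, 1 ≤ j → (q j).Prime)
    (hqmono : ∀ j : ℕ, 1 ≤ j → q j < q (j + 1))
    (hκ : 0 < κ)
    (hqasymp : ∃ A : ℝ, ∀ j : ℕ, 2 ≤ j →
      |(q j : ℝ) - κ * j * (Real.log j + Real.log (Real.log j))| ≤ A * (κ * j))
    -- `g` is monotonically increasing with `g(0) = 1` (A.2)
    (hg0 : g 0 = 1) (hgmono : Monotone g)
    -- the image of `g` contains the monoid `⟨Q⟩` generated by `Q = {q_j : j ≥ 1}` (A.3)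
    (hgrange : ∀ m : ℕ, 0 < m → (∀ p : ℕ, p.Prime → p ∣ m → ∃ j, 1 ≤ j ∧ q j = p) →
      ∃ x : ℕ, g x = m)
    -- `gdag` is the pseudo-inverse `g†`
    (hgdagdef : ∀ y : ℕ, gdag y = sInf {x : ℕ | 0 < x ∧ g x = y})
    -- the superadditivity assumption (A.4)
    (hcstar : 1 / (q 1 : ℝ) < cstar)
    (hsuper : ∀ a b : ℕ,
      (∀ p : ℕ, p.Prime → p ∣ a → ∃ j, 1 ≤ j ∧ q j = p) →
      (∀ p : ℕ, p.Prime → p ∣ b → ∃ j, 1 ≤ j ∧ q j = p) →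
      q 1 ≤ a → a ≤ b →
      (gdag b : ℝ) + cstar * b * gdag a ≤ gdag (a * b))
    -- the growth assumption `g(i)/g(i−1) = 1 + O(i^{−1/2−ε})` (A.5)
    (hε : 0 < ε)
    (hgratio : ∃ B : ℝ, ∀ i : ℕ, 1 ≤ i →
      |(g i : ℝ) / (g (i - 1) : ℝ) - 1| ≤ B * (i : ℝ) ^ (-(1 / 2 : ℝ) - ε))
    -- the sublinearity assumption `g(x) ≤ c_f·x` (A.6)
    (hcf : 0 < cf)
    (hgsub : ∀ x : ℕ, 1 ≤ x → (g x : ℝ) ≤ cf * x)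
    -- the assumption `g†(q) = c_†·q + O(q/log q)` for `q ∈ Q` (A.7)
    (hcdag : 0 < cdag)
    (hgdagasymp : ∃ B : ℝ, ∀ j : ℕ, 1 ≤ j →
      |(gdag (q j) : ℝ) - cdag * q j| ≤ B * (q j : ℝ) / Real.log (q j))
    -- `f` is multiplicative with `f(p^ν) = g(ν)` for `p ∈ Q`, `f(p^ν) ∈ {0,1}` otherwise
    (hf0 : f 0 = 1) (hf1 : f 1 = 1)
    (hfmult : ∀ m₁ m₂ : ℕ, Nat.Coprime m₁ m₂ → f (m₁ * m₂) = f m₁ * f m₂)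
    (hfQ : ∀ p ν : ℕ, p.Prime → (∃ j, 1 ≤ j ∧ q j = p) → 1 ≤ ν → f (p ^ ν) = g ν)
    (hfnotQ : ∀ p ν : ℕ, p.Prime → ¬(∃ j, 1 ≤ j ∧ q j = p) → 1 ≤ ν →
      f (p ^ ν) = 0 ∨ f (p ^ ν) = 1) :
    ∃ C : ℝ, 0 < C ∧ ∀ᶠ x : ℕ in atTop,
      (⨆ n ∈ Finset.Icc 1 x, Real.log (f (f n))) ≤
        Real.sqrt (Real.log x) / Real.log (Real.log x) *
          (Real.sqrt (8 * ∑' j : ℕ, (Real.log ((g (j + 1) : ℝ) / (g j : ℝ))) ^ 2) /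
              Real.sqrt (κ * cdag) +
            C * (Real.log (Real.log (Real.log x)) / Real.log (Real.log x))) := by
  have hgpos : ∀ k, 0 < g k := fun k => by
    have := hgmono (Nat.zero_le k); omega
  have hgpos' : ∀ k, (0:ℝ) < g k := fun k => by exact_mod_cast hgpos k
  have hge := aux_q_ge q hqprime hqmono
  obtain ⟨A2, hA2, Y0, hw⟩ := aux_w q gdag κ cdag (fun j hj => (hge j hj).1) hκ hqasymp hcdag hgdagasymp
  obtain ⟨B, hB⟩ := hgratio
  have hdn : ∀ k, 0 ≤ Real.log ((g (k + 1) : ℝ) / (g k : ℝ)) := fun k => by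
    apply Real.log_nonneg
    rw [one_le_div (hgpos' k)]
    exact_mod_cast hgmono (Nat.le_succ k)
  have hdB : ∀ k : ℕ, Real.log ((g (k + 1) : ℝ) / (g k : ℝ)) ≤
      |B| * ((k + 1 : ℕ) : ℝ) ^ (-(1 / 2 : ℝ) - ε) := fun k => by
    have h1 := hB (k + 1) (by omega)
    rw [Nat.add_sub_cancel] at h1
    have h2 := Real.log_le_sub_one_of_pos (div_pos (hgpos' (k + 1)) (hgpos' k))
    refine h2.trans ((le_abs_self _).trans (h1.trans ?_))
    exact mul_le_mul_of_nonneg_right (le_abs_self B) (by positivity)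
  have hD : ∀ k : ℕ, Real.log ((g (k + 1) : ℝ) / (g k : ℝ)) ≤ |B| := fun k => by
    refine (hdB k).trans (mul_le_of_le_one_right (abs_nonneg B) ?_)
    apply Real.rpow_le_one_of_one_le_of_nonpos
    · exact_mod_cast Nat.succ_le_succ (Nat.zero_le k)
    · linarith
  have hs : Summable fun k : ℕ => (Real.log ((g (k + 1) : ℝ) / (g k : ℝ))) ^ 2 := by
    have h1 : Summable fun k : ℕ => |B| ^ 2 * ((k + 1 : ℕ) : ℝ) ^ (-1 - 2 * ε) := by
      apply Summable.mul_left
      exact (summable_nat_add_iff (f := fun k : ℕ => (k : ℝ) ^ (-1 - 2 * ε)) 1).2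
        (Real.summable_nat_rpow.2 (by linarith))
    refine Summable.of_nonneg_of_le (fun _ => sq_nonneg _) (fun k => ?_) h1
    have h2 := pow_le_pow_left₀ (hdn k) (hdB k) 2
    refine h2.trans (le_of_eq ?_)
    rw [mul_pow, ← Real.rpow_natCast (((k + 1 : ℕ) : ℝ) ^ (-(1 / 2 : ℝ) - ε)) 2,
      ← Real.rpow_mul (Nat.cast_nonneg _)]
    congr 2
    push_cast; ring
  set inQ : ℕ → Prop := fun p => ∃ j, 1 ≤ j ∧ q j = p with hinQ
  have hidx' : ∀ p, ∃ j, inQ p → (1 ≤ j ∧ q j = p) := fun p => by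
    by_cases h : inQ p
    · obtain ⟨j, hj⟩ := h; exact ⟨j, fun _ => hj⟩
    · exact ⟨0, fun h' => absurd h' h⟩
  choose idx hidx using hidx'
  have hcost := aux_cost g gdag inQ hgmono hg0 hgrange hgdagdef
    (aux_superadd gdag inQ (q 1) cstar (hqprime 1 le_rfl).two_le
      (fun p hp => by obtain ⟨j, hj, rfl⟩ := hp; exact (hge j hj).2) hcstar hsuper)
  have hgd1 : ∀ r, inQ r → 1 ≤ gdag r := by
    intro r hr
    obtain ⟨j, hj, rfl⟩ := hr
    have hp := hqprime j hj
    obtain ⟨x, hx⟩ := hgrange (q j) hp.pos (fun p hp' hd =>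
      ⟨j, hj, ((Nat.prime_dvd_prime_iff_eq hp' hp).1 hd).symm⟩)
    have hx0 : x ≠ 0 := by rintro rfl; rw [hg0] at hx; exact hp.one_lt.ne hx
    have hmem : gdag (q j) ∈ {x : ℕ | 0 < x ∧ g x = q j} := by
      rw [hgdagdef]; exact Nat.sInf_mem ⟨x, Nat.pos_of_ne_zero hx0, hx⟩
    exact hmem.1
  set s := ∑' j : ℕ, (Real.log ((g (j + 1) : ℝ) / (g j : ℝ))) ^ 2 with hsdef
  have hu : 0 < κ * cdag := mul_pos hκ hcdag
  have hlog2 : 0 < Real.log 2 := Real.log_pos (by norm_num)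
  refine ⟨16 * (Real.sqrt (8 * s) / Real.sqrt (κ * cdag)) + 2 + 2 * |B| / Real.log 2,
    by positivity, ?_⟩
  have tL : Tendsto (fun x : ℕ => Real.log (x : ℝ)) atTop atTop :=
    Real.tendsto_log_atTop.comp tendsto_natCast_atTop_atTop
  have tl := Real.tendsto_log_atTop.comp tL
  have tll := Real.tendsto_log_atTop.comp tl
  have hlo : ∀ᶠ y : ℝ in atTop, 16 * Real.log y ≤ y := by
    have := Real.isLittleO_log_id_atTop.def (by norm_num : (0:ℝ) < 1 / 16)
    filter_upwards [this, eventually_ge_atTop 0] with y hy hy0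
    simp only [id, Real.norm_eq_abs, abs_of_nonneg hy0] at hy
    have := le_abs_self (Real.log y)
    linarith
  filter_upwards [tL.eventually_gt_atTop 0, tll.eventually_ge_atTop 1, tll.eventually_ge_atTop A2,
    tl.eventually hlo, tl.eventually_ge_atTop (4 * Y0), tl.eventually_ge_atTop (Real.log (2 * cf))]
    with x hL h1 h2 h3 h4 h5
  simp only [Function.comp] at h1 h2 h3 h4 h5
  obtain ⟨hT1, hYT, hw0, hΛ, hΛL, hfin⟩ := aux_asymp A2 Y0 (κ * cdag) cf |B| s (Real.log x)
    (Real.log (Real.log x)) (Real.log (Real.log (Real.log x))) hA2 hu hcf (abs_nonneg B) hL rfl rfl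
    h1 h2 h3 h4 h5
  have hpt : ∀ n ∈ Finset.Icc 1 x, Real.log (f (f n)) ≤
      Real.sqrt (Real.log x) / Real.log (Real.log x) *
          (Real.sqrt (8 * s) / Real.sqrt (κ * cdag) +
            (16 * (Real.sqrt (8 * s) / Real.sqrt (κ * cdag)) + 2 + 2 * |B| / Real.log 2) *
              (Real.log (Real.log (Real.log x)) / Real.log (Real.log x))) := fun n hn => by
    rw [Finset.mem_Icc] at hn
    refine le_trans (aux_pointwise g f gdag idx inQ cf _ _ |B| (Real.log x) _ hgpos hg0 hcost hgd1
      (fun r hr => (hidx r hr).1) (fun r s hr hs' h => by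
        rw [← (hidx r hr).2, ← (hidx s hs').2, h]) hcf hgsub hf0 hf1 hfmult hfQ hfnotQ hs
      (abs_nonneg B) hD hT1 hw0 ?_ hΛ hΛL n (by omega) ?_) hfin
    · intro r hr hlt
      have hT0 : (0:ℝ) < Real.sqrt (Real.log x) / Real.log (Real.log x) ^ 3 := by linarith
      have hle := Real.log_le_log hT0 hlt.le
      have := hw (idx r) (hidx r hr).1 (hYT.trans hle)
      rw [(hidx r hr).2] at this
      refine le_trans ?_ this
      have hi : (0:ℝ) ≤ idx r := Nat.cast_nonneg _
      gcongr
    · exact Real.log_le_log (by exact_mod_cast hn.1) (by exact_mod_cast hn.2)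
  have hx1 : 1 ≤ x := by
    by_contra h
    have : x = 0 := by omega
    subst this; simp at hL
  have hnn := (Real.log_natCast_nonneg _).trans (hpt 1 (Finset.mem_Icc.2 ⟨le_rfl, hx1⟩))
  exact Real.iSup_le (fun n => Real.iSup_le (fun hn => hpt n hn) hnn) hnn
end

section
/- Under the standing hypotheses with g(ν) = α·ν + 1 for some α ∈ ℕ, as x → ∞, M(x) ≥ (√(log x)/log₂ x)·( C_g/√(κ/α) + O(log₃ x / log₂ x) ). -/
open Filter

lemma aux_F (S b : ℝ) (hS : 0 < S) (hb : 0 < b) :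
    ∃ C : ℝ, 0 < C ∧ ∀ N0 : ℕ, ∀ᶠ L : ℝ in atTop, ∃ N : ℕ, N0 ≤ N ∧
      (b * (N * (Real.log N + 4 * Real.log (Real.log N)))) ^ 2 ≤ L ∧
      Real.sqrt L / Real.log L * (2 * S / b - C * (Real.log (Real.log L) / Real.log L)) ≤
        N * S - 3 * Real.log N := by
  refine ⟨20 * S / b + 1, by positivity, fun N0 => ?_⟩
  have tlog := Real.tendsto_log_atTop
  have tsq : Tendsto Real.sqrt atTop atTop := Real.tendsto_sqrt_atTop
  have ty : Tendsto (fun L : ℝ => Real.sqrt L / b) atTop atTop := tsq.atTop_div_const hb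
  have tll : Tendsto (fun L : ℝ => Real.log (Real.log L)) atTop atTop := tlog.comp tlog
  have o1 : ∀ᶠ L : ℝ in atTop, (Real.log L) ^ 3 / Real.sqrt L ≤
      min (1/4) (1 / (b * (N0 + 4))) := by
    have h := (isLittleO_log_rpow_rpow_atTop 3 (show (0:ℝ) < 1/2 by norm_num)).tendsto_div_nhds_zero
    have h2 := h.eventually_le_const (show 0 < min (1/4) (1 / (b * ((N0:ℝ) + 4))) by positivity)
    filter_upwards [h2] with L hL
    have e : Real.log L ^ (3 : ℕ) = Real.log L ^ (3 : ℝ) := by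
      rw [← Real.rpow_natCast]; norm_num
    rw [Real.sqrt_eq_rpow, e]
    exact hL
  have o2 : ∀ᶠ L : ℝ in atTop, 1/b ≤ Real.sqrt L := tsq.eventually_ge_atTop _
  filter_upwards [o1, o2, ty.eventually_ge_atTop (Real.exp (Real.exp 1)),
    tll.eventually_ge_atTop (max 1 (- Real.log b)), tlog.eventually_ge_atTop (max 3 S),
    eventually_ge_atTop 1] with L h1 h2 h3 h4 h5 hL1
  set l := Real.log L with hl
  set s := Real.sqrt L with hs
  have hs0 : 0 < s := Real.sqrt_pos.2 (by linarith)
  have hss : s * s = L := Real.mul_self_sqrt (by linarith)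
  set y := s / b with hy
  set m := Real.log l with hm
  have hl3 : 3 ≤ l := le_trans (le_max_left _ _) h5
  have hl1 : 1 ≤ l := by linarith
  have hlS : S ≤ l := le_trans (le_max_right _ _) h5
  have hm1 : 1 ≤ m := le_trans (le_max_left _ _) h4
  have hmb : - Real.log b ≤ m := le_trans (le_max_right _ _) h4
  have hy0 : 0 < y := by positivity
  have hyL : y ≤ L := by
    rw [hy, ← hss, div_eq_mul_one_div]; gcongr
  have hlogy : Real.log y = l / 2 - Real.log b := by
    rw [hy, Real.log_div hs0.ne' hb.ne', hs, Real.log_sqrt (by linarith)]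
  have hly1 : Real.exp 1 ≤ Real.log y := (Real.le_log_iff_exp_le hy0).2 h3
  have hly0 : 0 < Real.log y := lt_of_lt_of_le (Real.exp_pos _) hly1
  have hlly1 : 1 ≤ Real.log (Real.log y) := (Real.le_log_iff_exp_le hly0).2 hly1
  have hllym : Real.log (Real.log y) ≤ m := Real.log_le_log hly0 (Real.log_le_log hy0 hyL)
  set V := Real.log y + 4 * Real.log (Real.log y) with hV
  have hV1 : 1 ≤ V := by linarith
  have hVle : V ≤ (l + 10 * m) / 2 := by linarith
  have hml : m ≤ l := by
    have := Real.log_le_sub_one_of_pos (show 0 < l by linarith); linarith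
  have h1a : l ^ 3 ≤ s / 4 := by
    have := le_trans h1 (min_le_left _ _)
    rw [div_le_iff₀ hs0] at this; linarith
  have h1b : l ^ 3 * (b * (N0 + 4)) ≤ s := by
    have := le_trans h1 (min_le_right _ _)
    rw [div_le_div_iff₀ hs0 (by positivity)] at this; linarith
  have hyV : 2 * s / (b * l) * (1 - 10 * m / l) ≤ y / V := by
    have e1 : y / ((l + 10 * m) / 2) ≤ y / V := by gcongr
    refine le_trans ?_ e1
    have : y / ((l + 10 * m) / 2) = 2 * s / (b * l) * (l / (l + 10 * m)) := by
      rw [hy]; field_simp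
    rw [this]
    gcongr
    rw [le_div_iff₀ (by linarith)]
    have : (1 - 10 * m / l) * (l + 10 * m) = l - 100 * m ^ 2 / l := by field_simp; ring
    rw [this]
    have : 0 ≤ 100 * m ^ 2 / l := by positivity
    linarith
  set N := ⌊y / V⌋₊ with hN
  have hNle : (N : ℝ) ≤ y / V := Nat.floor_le (by positivity)
  have hNge : y / V - 1 ≤ N := by
    have := Nat.lt_floor_add_one (y / V); linarith
  have hNy : (N : ℝ) ≤ y := hNle.trans (div_le_self hy0.le hV1)
  have hNbig : (N0 : ℝ) + 3 ≤ N := by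
    refine le_trans ?_ hNge
    have e2 : (N0 : ℝ) + 4 ≤ y / V := by
      rw [le_div_iff₀ (by linarith), hy, le_div_iff₀ hb]
      refine le_trans ?_ h1b
      have : V ≤ l ^ 3 := by
        nlinarith [mul_nonneg (mul_nonneg (by linarith : 0 ≤ l) (by linarith : 0 ≤ l - 3)) (by linarith : 0 ≤ l + 3)]
      nlinarith [show 0 < b * ((N0:ℝ) + 4) by positivity]
    linarith
  refine ⟨N, by exact_mod_cast (by linarith : (N0 : ℝ) ≤ N), ?_, ?_⟩
  · have hN3 : (3 : ℝ) ≤ N := by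
      have : (0 : ℝ) ≤ N0 := Nat.cast_nonneg _
      linarith
    have hlN : 1 ≤ Real.log N := by
      rw [Real.le_log_iff_exp_le (by linarith)]
      linarith [Real.exp_one_lt_d9]
    have a1 : Real.log N ≤ Real.log y := Real.log_le_log (by linarith) hNy
    have a2 : Real.log (Real.log N) ≤ Real.log (Real.log y) := Real.log_le_log (by linarith) a1
    have a3 : 0 ≤ Real.log (Real.log N) := Real.log_nonneg hlN
    have a4 : (N : ℝ) * (Real.log N + 4 * Real.log (Real.log N)) ≤ y := by
      calc (N : ℝ) * (Real.log N + 4 * Real.log (Real.log N)) ≤ y / V * V := by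
            gcongr
            linarith
        _ = y := by field_simp
    calc _ ≤ (b * y) ^ 2 := by gcongr
      _ = L := by rw [← hss, hy]; field_simp
  · have hNL : Real.log N ≤ l := by
      apply Real.log_le_log _ (hNy.trans hyL)
      have : (0 : ℝ) ≤ N0 := Nat.cast_nonneg _
      linarith
    have b1 : 4 * l ≤ s / l * (m / l) := by
      have : 4 * l ≤ s / l * (1 / l) := by
        rw [div_mul_div_comm, le_div_iff₀ (by positivity)]
        nlinarith
      refine this.trans ?_
      gcongr
    have b2 : S * (2 * s / (b * l) * (1 - 10 * m / l)) ≤ S * (N + 1) := by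
      gcongr
      linarith
    have b3 : s / l * (2 * S / b - (20 * S / b + 1) * (m / l)) =
       S * (2 * s / (b * l) * (1 - 10 * m / l)) - s / l * (m / l) := by
      field_simp
      ring
    rw [b3]
    linarith

lemma aux_fprod {β : Type*} (q g f : ℕ → ℕ)
    (hqprime : ∀ j : ℕ, 1 ≤ j → (q j).Prime)
    (hqinj : ∀ i j, q (i + 1) = q (j + 1) → i = j)
    (hg0 : g 0 = 1) (hf1 : f 1 = 1)
    (hfmult : ∀ m₁ m₂ : ℕ, Nat.Coprime m₁ m₂ → f (m₁ * m₂) = f m₁ * f m₂)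
    (hfQ : ∀ p ν : ℕ, p.Prime → (∃ j, 1 ≤ j ∧ q j = p) → 1 ≤ ν → f (p ^ ν) = g ν)
    (s : Finset β) (e v : β → ℕ) (he : Set.InjOn e s) :
    f (∏ x ∈ s, q (e x + 1) ^ v x) = ∏ x ∈ s, g (v x) := by
  classical
  induction s using Finset.induction_on with
  | empty => simpa using hf1
  | insert a s ha ih =>
    rw [Finset.prod_insert ha, Finset.prod_insert ha, hfmult, ih (he.mono (by simp))]
    · congr 1
      rcases Nat.eq_zero_or_pos (v a) with h | h
      · simp [h, hf1, hg0]
      · exact hfQ _ _ (hqprime _ (by omega)) ⟨_, by omega, rfl⟩ h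
    · apply Nat.Coprime.prod_right
      intro i hi
      apply Nat.Coprime.pow
      rw [Nat.coprime_primes (hqprime _ (by omega)) (hqprime _ (by omega))]
      intro h
      have := he (by simp) (by simp [hi]) (hqinj _ _ h)
      exact ha (this ▸ hi)

lemma aux_enum {β : Type*} (P : Finset β) :
    ∃ e : β → ℕ, Set.InjOn e P ∧ ∀ x ∈ P, e x < P.card := by
  classical
  refine ⟨fun x => if h : x ∈ P then (P.equivFin ⟨x, h⟩ : ℕ) else 0, ?_, ?_⟩
  · intro x hx y hy h
    have hx' : x ∈ P := hx
    have hy' : y ∈ P := hy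
    simp only [hx', hy', dif_pos] at h
    have := P.equivFin.injective (Fin.ext h)
    simpa using this
  · intro x hx
    simp [hx]

/-- tail and summability -/
lemma aux_tail (α : ℕ) (hα : 1 ≤ α) (ℓ : ℕ → ℝ)
    (hℓ : ∀ j, ℓ j = Real.log (((α * (j + 1) + 1 : ℕ) : ℝ) / ((α * j + 1 : ℕ) : ℝ))) :
    (∀ j, 0 < ℓ j) ∧ Antitone ℓ ∧ Summable (fun j => ℓ j ^ 2) ∧
    (∀ N, ∑ j ∈ Finset.range N, ℓ j = Real.log ((α * N + 1 : ℕ) : ℝ)) ∧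
    ∀ N : ℕ, 1 ≤ N → ∑' j, ℓ j ^ 2 ≤ ∑ j ∈ Finset.range N, ℓ j ^ 2 + 2 / N := by
  have hα0 : (0 : ℝ) < α := by exact_mod_cast hα
  have hform : ∀ j : ℕ, ((α * (j + 1) + 1 : ℕ) : ℝ) / ((α * j + 1 : ℕ) : ℝ) =
      1 + α / (α * j + 1) := by
    intro j
    push_cast
    field_simp
    ring
  have hpos : ∀ j, 0 < ℓ j := by
    intro j
    rw [hℓ, hform]
    apply Real.log_pos
    have : (0:ℝ) < α / (α * j + 1) := by positivity
    linarith
  have hle : ∀ j : ℕ, 1 ≤ j → ℓ j ≤ (j : ℝ)⁻¹ := by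
    intro j hj
    have hj0 : (0 : ℝ) < j := by exact_mod_cast hj
    rw [hℓ, hform]
    have : (0:ℝ) < α / (α * j + 1) := by positivity
    have h1 := Real.log_le_sub_one_of_pos (show (0:ℝ) < 1 + α / (α * j + 1) by linarith)
    refine h1.trans ?_
    rw [add_sub_cancel_left, div_le_iff₀ (by positivity)]
    field_simp
    linarith
  have hsum : ∀ N : ℕ, 1 ≤ N → ∀ n, ∑ j ∈ Finset.range n, ℓ j ^ 2 ≤
      ∑ j ∈ Finset.range N, ℓ j ^ 2 + 2 / N := by
    intro N hN n
    have h1 : ∑ j ∈ Finset.range n, ℓ j ^ 2 ≤ ∑ j ∈ Finset.range N ∪ Finset.Ioo (N-1) n, ℓ j ^ 2 := by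
      apply Finset.sum_le_sum_of_subset_of_nonneg
      · intro j hj
        simp only [Finset.mem_range, Finset.mem_union, Finset.mem_Ioo] at *
        omega
      · intros; positivity
    have h2 : ∑ j ∈ Finset.range N ∪ Finset.Ioo (N-1) n, ℓ j ^ 2 =
       ∑ j ∈ Finset.range N, ℓ j ^ 2 + ∑ j ∈ Finset.Ioo (N-1) n, ℓ j ^ 2 := by
      apply Finset.sum_union
      rw [Finset.disjoint_left]
      intro j
      simp only [Finset.mem_range, Finset.mem_Ioo]
      omega
    have h3 : ∑ j ∈ Finset.Ioo (N-1) n, ℓ j ^ 2 ≤ ∑ j ∈ Finset.Ioo (N-1) n, ((j : ℝ) ^ 2)⁻¹ := by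
      apply Finset.sum_le_sum
      intro j hj
      rw [← inv_pow]
      have := hpos j
      gcongr
      apply hle
      simp only [Finset.mem_Ioo] at hj
      omega
    have h4 := sum_Ioo_inv_sq_le (α := ℝ) (N-1) n
    rw [show ((N - 1 : ℕ) : ℝ) + 1 = N by exact_mod_cast Nat.sub_add_cancel hN] at h4
    linarith
  refine ⟨hpos, ?_, ?_, ?_, ?_⟩
  · intro i j hij
    rw [hℓ, hℓ, hform, hform]
    apply Real.log_le_log (by positivity)
    gcongr
  · exact summable_of_sum_range_le (fun _ => by positivity) (hsum 1 le_rfl)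
  · intro N
    have : ∀ j, ℓ j = Real.log ((α * (j + 1) + 1 : ℕ) : ℝ) - Real.log ((α * j + 1 : ℕ) : ℝ) := by
      intro j
      rw [hℓ, Real.log_div (by positivity) (by positivity)]
    simp_rw [this]
    rw [Finset.sum_range_sub (fun j => Real.log ((α * j + 1 : ℕ) : ℝ))]
    simp
  · intro N hN
    exact Real.tsum_le_of_sum_range_le (fun _ => by positivity) (hsum N hN)

lemma aux_Q (q : ℕ → ℕ) (κ : ℝ) (hκ : 0 < κ)
    (hqasymp : ∃ A : ℝ, ∀ j : ℕ, 2 ≤ j →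
      |(q j : ℝ) - κ * j * (Real.log j + Real.log (Real.log j))| ≤ A * (κ * j)) :
    ∃ A : ℝ, 0 < A ∧ ∀ J : ℝ, 3 ≤ J → ∀ j : ℕ, 1 ≤ j → (j : ℝ) ≤ J →
      (q j : ℝ) ≤ κ * j * (Real.log J + Real.log (Real.log J) + A) := by
  obtain ⟨A, hA⟩ := hqasymp
  refine ⟨max (max A 1) (q 1 / κ), by positivity, fun J hJ j hj hjJ => ?_⟩
  have hlJ : 1 ≤ Real.log J := by
    rw [Real.le_log_iff_exp_le (by linarith)]
    linarith [Real.exp_one_lt_d9]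
  have hllJ : 0 ≤ Real.log (Real.log J) := Real.log_nonneg hlJ
  have hj0 : (0 : ℝ) < j := by exact_mod_cast hj
  rcases Nat.lt_or_ge j 2 with h | h
  · have : j = 1 := by omega
    subst this
    have h1 : (q 1 : ℝ) / κ ≤ max (max A 1) (q 1 / κ) := le_max_right _ _
    rw [div_le_iff₀ hκ] at h1
    push_cast
    nlinarith
  · have h1 := (abs_le.1 (hA j h)).2
    have h2 : (2 : ℝ) ≤ j := by exact_mod_cast h
    have h3 : Real.log j ≤ Real.log J := Real.log_le_log hj0 hjJ
    have h4 : Real.log (Real.log j) ≤ Real.log (Real.log J) :=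
      Real.log_le_log (Real.log_pos (by linarith)) h3
    have h5 : A ≤ max (max A 1) (q 1 / κ) := (le_max_left _ _).trans (le_max_left _ _)
    calc (q j : ℝ) ≤ κ * j * (Real.log j + Real.log (Real.log j) + A) := by linarith
      _ ≤ _ := by gcongr

lemma aux_asymp_s10 (α : ℕ) (hα : 1 ≤ α) (κ S A : ℝ) (hκ : 0 < κ) (hS : 0 < S) :
    ∀ᶠ N : ℕ in atTop, 3 ≤ N ∧ 1 ≤ Real.log (Real.log N) ∧
      Real.log ((α * N + 1 : ℕ) : ℝ) ≤ 2 * Real.log N ∧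
      3 ≤ 2 * N * Real.log N ∧ 
      Real.log (2 * N * Real.log N) + Real.log (Real.log (2 * N * Real.log N)) + A ≤
        Real.log N + 3 * Real.log (Real.log N) ∧
      Real.log (κ * (2 * N * Real.log N) * (Real.log N + 3 * Real.log (Real.log N))) ≤ 
        Real.log N + 3 * Real.log (Real.log N) ∧
      (Real.log N + 3 * Real.log (Real.log N)) ^ 2 * (N ^ 2 * S + 2 * N * Real.log N) ≤
        S * (N * (Real.log N + 4 * Real.log (Real.log N))) ^ 2 ∧ 2 ≤ Real.log N := by
  have tN : Tendsto (fun N : ℕ => (N : ℝ)) atTop atTop := tendsto_natCast_atTop_atTop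
  have tlog : Tendsto (fun N : ℕ => Real.log (N : ℝ)) atTop atTop := Real.tendsto_log_atTop.comp tN
  have tll : Tendsto (fun N : ℕ => Real.log (Real.log (N : ℝ))) atTop atTop :=
    Real.tendsto_log_atTop.comp tlog
  have o1 : ∀ᶠ N : ℕ in atTop, Real.log N ^ 2 / (N : ℝ) ≤ min (1/2) (S / 4) := by
    have h := (Real.isLittleO_pow_log_id_atTop (n := 2)).tendsto_div_nhds_zero.comp tN
    exact h.eventually_le_const (show 0 < min (1/2) (S/4) by positivity)
  have o2 : ∀ᶠ N : ℕ in atTop, Real.log (Real.log (N:ℝ)) / Real.log N ≤ 1/3 := by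
    have h := (Real.isLittleO_log_id_atTop).tendsto_div_nhds_zero.comp tlog
    exact h.eventually_le_const (by norm_num)
  filter_upwards [o1, o2, tll.eventually_ge_atTop (max 1 (max (2 * Real.log 2 + A) (Real.log 4 + Real.log κ))),
    tlog.eventually_ge_atTop (max 2 (Real.log (α + 1))), eventually_ge_atTop 3] with N h1 h2 h3 h4 h5
  set n : ℝ := (N : ℝ) with hn
  set l := Real.log n with hl
  set m := Real.log l with hm
  have hn3 : (3 : ℝ) ≤ n := by rw [hn]; exact_mod_cast h5
  have hl2 : 2 ≤ l := (le_max_left _ _).trans h4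
  have hlα : Real.log (α + 1) ≤ l := (le_max_right _ _).trans h4
  have hm1 : 1 ≤ m := (le_max_left _ _).trans h3
  have hmA : 2 * Real.log 2 + A ≤ m := (le_max_left _ _).trans ((le_max_right _ _).trans h3)
  have hmκ : Real.log 4 + Real.log κ ≤ m := (le_max_right _ _).trans ((le_max_right _ _).trans h3)
  have hml : 3 * m ≤ l := by
    rw [div_le_iff₀ (by linarith)] at h2; linarith
  have h1a : l ^ 2 ≤ n / 2 := by
    have := h1.trans (min_le_left _ _)
    rw [div_le_iff₀ (by linarith)] at this; linarith
  have h1b : l ^ 2 * 4 ≤ S * n := by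
    have := h1.trans (min_le_right _ _)
    rw [div_le_iff₀ (by linarith)] at this; linarith
  have n0 : 0 < n := by linarith
  have l0 : 0 < l := by linarith
  have hJ : Real.log (2 * n * l) = Real.log 2 + l + m := by
    rw [Real.log_mul (by positivity) (by positivity), Real.log_mul (by positivity) (by positivity)]
  have hJJ : Real.log (Real.log (2 * n * l)) ≤ Real.log 2 + m := by
    rw [← Real.log_mul (by norm_num) (by positivity)]
    apply Real.log_le_log
    · rw [hJ]; have := Real.log_pos (show (1:ℝ) < 2 by norm_num); linarith
    · calc Real.log (2 * n * l) ≤ Real.log (n ^ 2) := by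
            apply Real.log_le_log (by positivity)
            nlinarith
        _ = 2 * l := by rw [Real.log_pow, hl]; norm_num
  refine ⟨h5, hm1, ?_, by nlinarith, ?_, ?_, ?_, hl2⟩
  · calc Real.log ((α * N + 1 : ℕ) : ℝ) ≤ Real.log ((α + 1) * n) := by
          apply Real.log_le_log (by positivity)
          push_cast
          nlinarith
      _ = Real.log (α + 1) + l := by rw [Real.log_mul (by positivity) (by positivity)]
      _ ≤ _ := by linarith
  · rw [hJ] at hJJ ⊢; linarith
  · calc Real.log (κ * (2 * n * l) * (l + 3 * m)) ≤ Real.log (κ * (2 * n * l) * (2 * l)) := by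
          apply Real.log_le_log (by positivity)
          gcongr
          linarith
      _ = Real.log ((4 * κ) * n * l ^ 2) := by congr 1; ring
      _ = Real.log 4 + Real.log κ + l + 2 * m := by
          rw [Real.log_mul (by positivity) (by positivity), Real.log_mul (by positivity) (by positivity), Real.log_mul (by positivity) (by positivity), Real.log_pow]
          push_cast
          ring
      _ ≤ _ := by linarith
  · have hW : (l + 3 * m) * l ≤ S * n * m := by nlinarith [mul_pos hS n0]
    have e : S * (n * (l + 4 * m)) ^ 2 - (l + 3 * m) ^ 2 * (n ^ 2 * S + 2 * n * l) = 
      2 * n * (l + 3 * m) * (S * n * m - (l + 3 * m) * l) + S * n ^ 2 * m ^ 2 := by ring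
    have e2 : 0 ≤ 2 * n * (l + 3 * m) * (S * n * m - (l + 3 * m) * l) :=
      mul_nonneg (by positivity) (by linarith)
    have e3 : 0 ≤ S * n ^ 2 * m ^ 2 := by positivity
    linarith

set_option maxHeartbeats 1000000 in
lemma aux_E (q g f : ℕ → ℕ) (κ : ℝ) (α : ℕ) (hα : 1 ≤ α)
    (hgα : ∀ ν : ℕ, g ν = α * ν + 1)
    (hqprime : ∀ j : ℕ, 1 ≤ j → (q j).Prime)
    (hqmono : ∀ j : ℕ, 1 ≤ j → q j < q (j + 1))
    (hκ : 0 < κ)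
    (hqasymp : ∃ A : ℝ, ∀ j : ℕ, 2 ≤ j →
      |(q j : ℝ) - κ * j * (Real.log j + Real.log (Real.log j))| ≤ A * (κ * j))
    (hgrange : ∀ m : ℕ, 0 < m → (∀ p : ℕ, p.Prime → p ∣ m → ∃ j, 1 ≤ j ∧ q j = p) →
      ∃ x : ℕ, g x = m)
    (hf1 : f 1 = 1)
    (hfmult : ∀ m₁ m₂ : ℕ, Nat.Coprime m₁ m₂ → f (m₁ * m₂) = f m₁ * f m₂)
    (hfQ : ∀ p ν : ℕ, p.Prime → (∃ j, 1 ≤ j ∧ q j = p) → 1 ≤ ν → f (p ^ ν) = g ν)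
    (S : ℝ) (hSdef : S = ∑' j : ℕ, (Real.log ((g (j + 1) : ℝ) / (g j : ℝ))) ^ 2) (hS : 0 < S) :
    ∀ᶠ N : ℕ in atTop, ∃ n : ℕ, 1 ≤ n ∧
      Real.log n ≤ κ / (2 * α) * (S * (N * (Real.log N + 4 * Real.log (Real.log N))) ^ 2) ∧
      N * S - 3 * Real.log N ≤ Real.log (f (f n)) := by
  obtain ⟨A, hA0, hA⟩ := aux_Q q κ hκ hqasymp
  have hα0 : (0 : ℝ) < α := by exact_mod_cast hα
  set ℓ : ℕ → ℝ := fun j => Real.log ((g (j + 1) : ℝ) / (g j : ℝ)) with hℓ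
  obtain ⟨hpos, hanti, hsummable, htel, htail⟩ := aux_tail α hα ℓ (fun j => by
    simp only [hℓ, hgα])
  have hg0 : g 0 = 1 := by simp [hgα]
  have hqinj : ∀ i j, q (i + 1) = q (j + 1) → i = j := by
    have : StrictMono (fun i => q (i + 1)) := strictMono_nat_of_lt_succ (fun i => hqmono _ (by omega))
    exact fun i j h => this.injective h
  have hfp : ∀ {β : Type} (s : Finset β) (e v : β → ℕ), Set.InjOn e s →
      f (∏ x ∈ s, q (e x + 1) ^ v x) = ∏ x ∈ s, g (v x) := fun s e v he =>
    aux_fprod q g f hqprime hqinj hg0 hf1 hfmult hfQ s e v he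
  have hqr : ∀ j, ∃ x : ℕ, g x = q (j + 1) := fun j => by
    apply hgrange _ (hqprime _ (by omega)).pos
    intro p hp hd
    exact ⟨j + 1, by omega, ((Nat.prime_dvd_prime_iff_eq hp (hqprime _ (by omega))).1 hd).symm⟩
  choose d hd using hqr
  filter_upwards [aux_asymp_s10 α hα κ S A hκ hS] with N ⟨h3, hm1, hlogα, hJ3, hW1, hW2, hfin, hl2⟩
  set l := Real.log (N : ℝ) with hl
  set W := l + 3 * Real.log l with hW
  have hN0 : (0 : ℝ) < N := by exact_mod_cast (by omega : 0 < N)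
  set J : ℕ → ℕ := fun ν => ⌊N * ℓ ν⌋₊ with hJ
  have hJle : ∀ ν, (J ν : ℝ) ≤ N * ℓ ν := fun ν => Nat.floor_le (by have := hpos ν; positivity)
  have hJanti : Antitone J := by
    intro i j hij
    apply Nat.floor_le_floor
    have := hanti hij
    gcongr
  let P : Finset (Σ _ : ℕ, ℕ) := (Finset.range N).sigma (fun ν => Finset.range (J ν))
  have hK : (P.card : ℝ) ≤ 2 * N * l := by
    rw [Finset.card_sigma]
    push_cast
    simp only [Finset.card_range]
    calc ∑ ν ∈ Finset.range N, (J ν : ℝ) ≤ ∑ ν ∈ Finset.range N, N * ℓ ν :=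
          Finset.sum_le_sum (fun ν _ => hJle ν)
      _ = N * Real.log ((α * N + 1 : ℕ) : ℝ) := by rw [← Finset.mul_sum, htel]
      _ ≤ N * (2 * l) := by gcongr
      _ = _ := by ring
  have hjK : ∀ x ∈ P, x.2 + 1 ≤ P.card := by
    rintro ⟨ν, j⟩ hx
    simp only [P, Finset.mem_sigma, Finset.mem_range] at hx
    rw [Finset.card_sigma]
    simp only [Finset.card_range]
    have := Finset.single_le_sum (f := J) (fun i _ => Nat.zero_le _) (Finset.mem_range.2 hx.1)
    change j + 1 ≤ _
    omega
  have hqb : ∀ i : ℕ, i + 1 ≤ P.card → (q (i + 1) : ℝ) ≤ κ * (i + 1) * W := by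
    intro i hi
    have hi' : ((i + 1 : ℕ) : ℝ) ≤ P.card := by exact_mod_cast hi
    have := hA (2 * N * l) hJ3 (i + 1) (by omega) (by linarith)
    refine this.trans ?_
    push_cast
    gcongr
  have hW0 : 0 < W := by linarith
  have hlqb : ∀ i : ℕ, i + 1 ≤ P.card → Real.log (q (i + 1)) ≤ W := by
    intro i hi
    have hi' : ((i + 1 : ℕ) : ℝ) ≤ P.card := by exact_mod_cast hi
    push_cast at hi'
    refine le_trans (Real.log_le_log ?_ ?_) hW2
    · exact_mod_cast (hqprime (i + 1) (by omega)).pos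
    · refine (hqb i hi).trans ?_
      gcongr
      linarith
  obtain ⟨e, heinj, hecard⟩ := aux_enum P
  have hqpos : ∀ i, 0 < q (i + 1) := fun i => (hqprime _ (by omega)).pos
  refine ⟨∏ x ∈ P, q (e x + 1) ^ d x.2, ?_, ?_, ?_⟩
  · exact Nat.one_le_iff_ne_zero.2 (Finset.prod_ne_zero_iff.2 fun x _ => (pow_pos (hqpos _) _).ne')
  · push_cast
    rw [Real.log_prod (fun x _ => by have := hqpos (e x); positivity)]
    have hterm : ∀ x ∈ P, Real.log ((q (e x + 1) : ℝ) ^ d x.2) ≤ κ / α * W ^ 2 * (x.2 + 1) := by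
      intro x hx
      rw [Real.log_pow]
      have a1 : (α : ℝ) * d x.2 + 1 = q (x.2 + 1) := by
        have := hd x.2
        rw [hgα] at this
        exact_mod_cast this
      have a2 := hqb x.2 (hjK x hx)
      have a3 : (d x.2 : ℝ) ≤ κ / α * W * (x.2 + 1) := by
        have : κ / α * W * (x.2 + 1) = (κ * (x.2 + 1) * W) / α := by field_simp
        rw [this, le_div_iff₀ hα0]
        linarith
      have a4 := hlqb (e x) (hecard x hx)
      calc (d x.2 : ℝ) * Real.log (q (e x + 1)) ≤ (κ / α * W * (x.2 + 1)) * W := by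
            gcongr
        _ = _ := by ring
    have hgauss : ∀ k : ℕ, ∑ j ∈ Finset.range k, ((j : ℝ) + 1) = k * (k + 1) / 2 := by
      intro k
      induction k with
      | zero => simp
      | succ k ih => rw [Finset.sum_range_succ, ih]; push_cast; ring
    calc ∑ x ∈ P, Real.log ((q (e x + 1) : ℝ) ^ d x.2) ≤ ∑ x ∈ P, κ / α * W ^ 2 * (x.2 + 1) :=
          Finset.sum_le_sum hterm
      _ = κ / α * W ^ 2 * ∑ ν ∈ Finset.range N, ((J ν : ℝ) * (J ν + 1) / 2) := by
          rw [← Finset.mul_sum, Finset.sum_sigma]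
          simp only [hgauss]
      _ ≤ κ / α * W ^ 2 * ∑ ν ∈ Finset.range N, ((N * ℓ ν) * (N * ℓ ν + 1) / 2) := by
          gcongr with ν _
          · exact mul_nonneg hN0.le (hpos ν).le
          · exact hJle ν
          · exact hJle ν
      _ = κ / (2 * α) * (W ^ 2 * (N ^ 2 * ∑ ν ∈ Finset.range N, ℓ ν ^ 2 +
            N * Real.log ((α * N + 1 : ℕ) : ℝ))) := by
          rw [← htel, Finset.mul_sum, Finset.mul_sum, Finset.mul_sum, ← Finset.sum_add_distrib, Finset.mul_sum,
            Finset.mul_sum]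
          apply Finset.sum_congr rfl
          intro ν _
          field_simp
      _ ≤ κ / (2 * α) * (W ^ 2 * (N ^ 2 * S + N * (2 * l))) := by
          gcongr
          rw [hSdef]
          exact hsummable.sum_le_tsum _ (fun _ _ => by positivity)
      _ = κ / (2 * α) * (W ^ 2 * (N ^ 2 * S + 2 * N * l)) := by ring
      _ ≤ _ := by gcongr
  · rw [hfp P e _ heinj]
    simp only [hd]
    set a : ℕ → ℕ := fun j => ((Finset.range N).filter (fun ν => j < J ν)).card with ha
    have hafilt : ∀ j, (Finset.range N).filter (fun ν => j < J ν) = Finset.range (a j) := by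
      intro j
      have hsub : ∀ ν ∈ (Finset.range N).filter (fun ν => j < J ν), ∀ μ, μ ≤ ν →
          μ ∈ (Finset.range N).filter (fun ν => j < J ν) := by
        intro ν hν μ hμ
        simp only [Finset.mem_filter, Finset.mem_range] at *
        exact ⟨by omega, lt_of_lt_of_le hν.2 (hJanti hμ)⟩
      apply Finset.eq_of_subset_of_card_le
      · intro ν hν
        have h1 : Finset.range (ν + 1) ⊆ (Finset.range N).filter (fun ν => j < J ν) := by
          intro μ hμ
          exact hsub ν hν μ (by simpa [Nat.lt_succ_iff] using hμ)
        have h2 := Finset.card_le_card h1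
        rw [Finset.card_range] at h2
        exact Finset.mem_range.2 h2
      · simp [ha]
    have hmem : ∀ ν j, ν < N → j < J ν → j < J 0 := fun ν j _ h =>
      lt_of_lt_of_le h (hJanti (Nat.zero_le _))
    have hsw : ∀ {M : Type} [CommMonoid M] (F : ℕ → ℕ → M),
        ∏ ν ∈ Finset.range N, ∏ j ∈ Finset.range (J ν), F ν j =
        ∏ j ∈ Finset.range (J 0), ∏ ν ∈ Finset.range (a j), F ν j := by
      intro M _ F
      apply Finset.prod_comm'
      intro ν j
      rw [← hafilt]
      simp only [Finset.mem_range, Finset.mem_filter]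
      constructor
      · rintro ⟨h1, h2⟩
        exact ⟨⟨h1, h2⟩, hmem ν j h1 h2⟩
      · rintro ⟨⟨h1, h2⟩, _⟩
        exact ⟨h1, h2⟩
    have hprod : ∏ x ∈ P, q (x.2 + 1) = ∏ j ∈ Finset.range (J 0), q (j + 1) ^ a j := by
      rw [Finset.prod_sigma, hsw (fun _ j => q (j + 1))]
      simp
    rw [hprod, hfp _ (fun j => j) a (fun x _ y _ h => h)]
    push_cast
    rw [Real.log_prod (fun x _ => by rw [hgα]; exact Nat.cast_ne_zero.2 (Nat.succ_ne_zero _))]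
    have hlogg : ∀ j, Real.log (g (a j)) = ∑ ν ∈ Finset.range (a j), ℓ ν := by
      intro j
      rw [htel, hgα]
    simp only [hlogg]
    have hsw' : ∑ j ∈ Finset.range (J 0), ∑ ν ∈ Finset.range (a j), ℓ ν =
        ∑ ν ∈ Finset.range N, (J ν : ℝ) * ℓ ν := by
      have := hsw (M := Multiplicative ℝ) (fun ν _ => Multiplicative.ofAdd (ℓ ν))
      have h2 : ∑ ν ∈ Finset.range N, ∑ j ∈ Finset.range (J ν), ℓ ν =
        ∑ j ∈ Finset.range (J 0), ∑ ν ∈ Finset.range (a j), ℓ ν := this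
      rw [← h2]
      simp
    rw [hsw']
    have hfl : ∀ ν, N * ℓ ν - 1 ≤ J ν := fun ν => by
      have := Nat.lt_floor_add_one (N * ℓ ν)
      simp only [hJ]
      linarith
    have c1 : ∑ ν ∈ Finset.range N, (N * ℓ ν - 1) * ℓ ν ≤ ∑ ν ∈ Finset.range N, (J ν : ℝ) * ℓ ν := by
      apply Finset.sum_le_sum
      intro ν _
      have := hpos ν
      have := hfl ν
      gcongr
    have c2 : ∑ ν ∈ Finset.range N, (N * ℓ ν - 1) * ℓ ν =
        N * ∑ ν ∈ Finset.range N, ℓ ν ^ 2 - Real.log ((α * N + 1 : ℕ) : ℝ) := by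
      rw [← htel, Finset.mul_sum, ← Finset.sum_sub_distrib]
      apply Finset.sum_congr rfl
      intro ν _
      ring
    have c3 : N * S ≤ N * ∑ ν ∈ Finset.range N, ℓ ν ^ 2 + 2 := by
      have := htail N (by omega)
      rw [← hSdef] at this
      calc N * S ≤ N * (∑ ν ∈ Finset.range N, ℓ ν ^ 2 + 2 / N) := by gcongr
        _ = _ := by field_simp
    linarith

/-- **Lower bound for the maximal order of the iterated function `f`.**
Under the standing hypotheses, with `g(ν) = α·ν + 1` for some `α ∈ ℕ`, one has
`M(x) ≥ (√(log x)/log₂ x)·(C_g/√(κ/α) + O(log₃ x/log₂ x))` as `x → ∞`, where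
`M(x) = max_{n ≤ x} log f(f(n))` and `C_g = (8·∑_{j≥1} (log(g(j)/g(j−1)))²)^{1/2}`. -/
theorem maxOrder_lower_bound
    (q : ℕ → ℕ) (g f gdag : ℕ → ℕ) (κ cstar cf cdag ε : ℝ) (α : ℕ)
    (hα : 1 ≤ α)
    -- `g(ν) = α·ν + 1`
    (hgα : ∀ ν : ℕ, g ν = α * ν + 1)
    -- the strictly increasing sequence of primes `q_1 < q_2 < …` with its asymptotics (A.1)
    (hqprime : ∀ j : ℕ, 1 ≤ j → (q j).Prime)
    (hqmono : ∀ j : ℕ, 1 ≤ j → q j < q (j + 1))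
    (hκ : 0 < κ)
    (hqasymp : ∃ A : ℝ, ∀ j : ℕ, 2 ≤ j →
      |(q j : ℝ) - κ * j * (Real.log j + Real.log (Real.log j))| ≤ A * (κ * j))
    -- `g` is monotonically increasing with `g(0) = 1` (A.2)
    (hg0 : g 0 = 1) (hgmono : Monotone g)
    -- the image of `g` contains the monoid `⟨Q⟩` generated by `Q = {q_j : j ≥ 1}` (A.3)
    (hgrange : ∀ m : ℕ, 0 < m → (∀ p : ℕ, p.Prime → p ∣ m → ∃ j, 1 ≤ j ∧ q j = p) →
      ∃ x : ℕ, g x = m)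
    -- `gdag` is the pseudo-inverse `g†`
    (hgdagdef : ∀ y : ℕ, gdag y = sInf {x : ℕ | 0 < x ∧ g x = y})
    -- the superadditivity assumption (A.4)
    (hcstar : 1 / (q 1 : ℝ) < cstar)
    (hsuper : ∀ a b : ℕ,
      (∀ p : ℕ, p.Prime → p ∣ a → ∃ j, 1 ≤ j ∧ q j = p) →
      (∀ p : ℕ, p.Prime → p ∣ b → ∃ j, 1 ≤ j ∧ q j = p) →
      q 1 ≤ a → a ≤ b →
      (gdag b : ℝ) + cstar * b * gdag a ≤ gdag (a * b))
    -- the growth assumption `g(i)/g(i−1) = 1 + O(i^{−1/2−ε})` (A.5)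
    (hε : 0 < ε)
    (hgratio : ∃ B : ℝ, ∀ i : ℕ, 1 ≤ i →
      |(g i : ℝ) / (g (i - 1) : ℝ) - 1| ≤ B * (i : ℝ) ^ (-(1 / 2 : ℝ) - ε))
    -- the sublinearity assumption `g(x) ≤ c_f·x` (A.6)
    (hcf : 0 < cf)
    (hgsub : ∀ x : ℕ, 1 ≤ x → (g x : ℝ) ≤ cf * x)
    -- the assumption `g†(q) = c_†·q + O(q/log q)` for `q ∈ Q` (A.7)
    (hcdag : 0 < cdag)
    (hgdagasymp : ∃ B : ℝ, ∀ j : ℕ, 1 ≤ j →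
      |(gdag (q j) : ℝ) - cdag * q j| ≤ B * (q j : ℝ) / Real.log (q j))
    -- `f` is multiplicative with `f(p^ν) = g(ν)` for `p ∈ Q`, `f(p^ν) ∈ {0,1}` otherwise
    (hf0 : f 0 = 1) (hf1 : f 1 = 1)
    (hfmult : ∀ m₁ m₂ : ℕ, Nat.Coprime m₁ m₂ → f (m₁ * m₂) = f m₁ * f m₂)
    (hfQ : ∀ p ν : ℕ, p.Prime → (∃ j, 1 ≤ j ∧ q j = p) → 1 ≤ ν → f (p ^ ν) = g ν)
    (hfnotQ : ∀ p ν : ℕ, p.Prime → ¬(∃ j, 1 ≤ j ∧ q j = p) → 1 ≤ ν →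
      f (p ^ ν) = 0 ∨ f (p ^ ν) = 1) :
    ∃ C : ℝ, 0 < C ∧ ∀ᶠ x : ℕ in atTop,
      Real.sqrt (Real.log x) / Real.log (Real.log x) *
          (Real.sqrt (8 * ∑' j : ℕ, (Real.log ((g (j + 1) : ℝ) / (g j : ℝ))) ^ 2) /
              Real.sqrt (κ / α) -
            C * (Real.log (Real.log (Real.log x)) / Real.log (Real.log x))) ≤
        ⨆ n ∈ Finset.Icc 1 x, Real.log (f (f n)) := by
  set S : ℝ := ∑' j : ℕ, (Real.log ((g (j + 1) : ℝ) / (g j : ℝ))) ^ 2 with hSdef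
  have hα0 : (0 : ℝ) < α := by exact_mod_cast hα
  have hS : 0 < S := by
    obtain ⟨hpos, -, hsum, -⟩ := aux_tail α hα
      (fun j => Real.log ((g (j + 1) : ℝ) / (g j : ℝ))) (fun j => by simp only [hgα])
    exact hsum.tsum_pos (fun _ => by positivity) 0 (pow_pos (hpos 0) 2)
  have hE := aux_E q g f κ α hα hgα hqprime hqmono hκ hqasymp hgrange hf1 hfmult hfQ S hSdef hS
  obtain ⟨N0, hN0⟩ := eventually_atTop.1 hE
  set b := Real.sqrt (κ * S / (2 * α)) with hb
  have hb0 : 0 < b := Real.sqrt_pos.2 (by positivity)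
  have hb2 : b ^ 2 = κ * S / (2 * α) := Real.sq_sqrt (by positivity)
  obtain ⟨C, hC, hF⟩ := aux_F S b hS hb0
  refine ⟨C, hC, ?_⟩
  have hconst : Real.sqrt (8 * S) / Real.sqrt (κ / α) = 2 * S / b := by
    rw [← Real.sqrt_div (by positivity)]
    rw [Real.sqrt_eq_iff_eq_sq (by positivity) (by positivity), div_pow, hb2]
    field_simp
    ring
  have tl : Tendsto (fun x : ℕ => Real.log (x : ℝ)) atTop atTop :=
    Real.tendsto_log_atTop.comp tendsto_natCast_atTop_atTop
  filter_upwards [tl.eventually (hF N0), eventually_ge_atTop 1] with x ⟨N, hNN, hle, hge⟩ hx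
  obtain ⟨n, hn1, hnle, hnge⟩ := hN0 N hNN
  rw [hconst]
  refine (hge.trans hnge).trans ?_
  have hnx : n ≤ x := by
    have h1 : Real.log n ≤ Real.log x := by
      refine hnle.trans (le_trans (le_of_eq ?_) hle)
      rw [mul_pow b, hb2]
      field_simp
    have hn0 : (0 : ℝ) < n := by exact_mod_cast hn1
    have hx0 : (0 : ℝ) < x := by exact_mod_cast hx
    exact_mod_cast (Real.log_le_log_iff hn0 hx0).1 h1
  have hmem : n ∈ Finset.Icc 1 x := Finset.mem_Icc.2 ⟨hn1, hnx⟩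
  have hbdd : BddAbove (Set.range fun n : ℕ => ⨆ (_ : n ∈ Finset.Icc 1 x), Real.log (f (f n))) := by
    refine ⟨∑ k ∈ Finset.Icc 1 x, Real.log (f (f k)), ?_⟩
    rintro _ ⟨k, rfl⟩
    have hnn : ∀ k : ℕ, 0 ≤ Real.log (f (f k)) := fun k => Real.log_natCast_nonneg _
    by_cases hk : k ∈ Finset.Icc 1 x
    · simp only [hk, ciSup_unique]
      exact Finset.single_le_sum (f := fun k => Real.log (f (f k))) (fun i _ => hnn i) hk
    · simp only [hk, Real.iSup_of_isEmpty]
      exact Finset.sum_nonneg (fun i _ => hnn i)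
  refine le_trans (le_of_eq ?_) (le_ciSup hbdd n)
  simp only [hmem, ciSup_unique]
end

section
/- Under the standing hypotheses with g(ν) = α·ν + 1 for some α ∈ ℕ, as x → ∞, M(x) = (√(log x)/log₂ x)·( C_g/√(κ/α) + O(log₃ x / log₂ x) ). -/
open Filter

noncomputable def ww (α : ℕ) (a : ℕ) : ℝ := Real.log (((α * (a + 1) + 1 : ℕ) : ℝ) / ((α * a + 1 : ℕ) : ℝ))

lemma ww_eq (α a : ℕ) : ww α a = Real.log ((α:ℝ) * (a + 1) + 1) - Real.log ((α:ℝ) * a + 1) := by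
  unfold ww
  rw [Real.log_div (by positivity) (by positivity)]
  push_cast
  rfl

lemma ww_nonneg (α a : ℕ) : 0 ≤ ww α a := by
  rw [ww_eq, sub_nonneg]
  apply Real.log_le_log (by positivity)
  nlinarith [Nat.cast_nonneg (α := ℝ) α]

lemma ww_le (α a : ℕ) (hα : 1 ≤ α) : ww α a ≤ α / (a + 1) := by
  unfold ww
  have hα' : (1:ℝ) ≤ α := by exact_mod_cast hα
  have h := Real.log_le_sub_one_of_pos (x := ((α * (a + 1) + 1 : ℕ) : ℝ) / ((α * a + 1 : ℕ) : ℝ)) (by positivity)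
  refine h.trans ?_
  push_cast
  rw [div_sub_one (by positivity), div_le_div_iff₀ (by positivity) (by positivity)]
  have : (0:ℝ) ≤ a := by positivity
  nlinarith [mul_nonneg this (sub_nonneg.2 hα'), mul_nonneg (mul_nonneg this (sub_nonneg.2 hα')) (by positivity : (0:ℝ) ≤ α)]

lemma ww_anti (α : ℕ) : Antitone (ww α) := by
  apply antitone_nat_of_succ_le
  intro a
  rw [ww_eq, ww_eq]
  have h1 : (0:ℝ) < (α:ℝ) * a + 1 := by positivity
  have h2 : (0:ℝ) < (α:ℝ) * (a+1) + 1 := by positivity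
  have h3 : (0:ℝ) < (α:ℝ) * (a+1+1) + 1 := by positivity
  have := Real.log_le_log (mul_pos h3 h1) (y := ((α:ℝ) * (a+1) + 1)^2) (by nlinarith [sq_nonneg (α:ℝ)])
  rw [Real.log_mul h3.ne' h1.ne', Real.log_pow] at this
  push_cast at *
  linarith

lemma ww_zero_pos (α : ℕ) (hα : 1 ≤ α) : 0 < ww α 0 := by
  rw [ww_eq]
  have hα' : (1:ℝ) ≤ α := by exact_mod_cast hα
  simp
  apply Real.log_pos; linarith

lemma ww_sum (α v : ℕ) : ∑ a ∈ Finset.range v, ww α a = Real.log ((α:ℝ) * v + 1) := by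
  induction v with
  | zero => simp
  | succ v ih => rw [Finset.sum_range_succ, ih, ww_eq]; push_cast; ring

lemma ww_partial (α A : ℕ) (hα : 1 ≤ α) (hA : 1 ≤ A) (N : ℕ) :
    ∑ a ∈ Finset.range (A + N), ww α a ^ 2 ≤
      ∑ a ∈ Finset.range A, ww α a ^ 2 + (α:ℝ)^2 * (1 / A - 1 / (A + N)) := by
  induction N with
  | zero => simp
  | succ N ih =>
    rw [← add_assoc, Finset.sum_range_succ]
    have h1 : ww α (A + N) ^ 2 ≤ (α / ((A + N : ℕ) + 1)) ^ 2 :=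
      pow_le_pow_left₀ (ww_nonneg _ _) (ww_le _ _ hα) 2
    have hA' : (1:ℝ) ≤ A := by exact_mod_cast hA
    have h2 : ((α:ℝ) / ((A + N : ℕ) + 1)) ^ 2 ≤ (α:ℝ)^2 * (1 / (A + N) - 1 / (A + N + 1)) := by
      rw [div_pow, div_eq_mul_one_div]
      apply mul_le_mul_of_nonneg_left _ (by positivity)
      push_cast
      rw [div_sub_div _ _ (by positivity) (by positivity), div_le_div_iff₀ (by positivity) (by positivity)]
      nlinarith
    push_cast at *
    have : (A:ℝ) + (N + 1) = A + N + 1 := by ring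
    rw [this]
    nlinarith

lemma ww_summable (α : ℕ) (hα : 1 ≤ α) : Summable (fun a => ww α a ^ 2) := by
  apply summable_of_sum_range_le (c := ww α 0 ^ 2 + (α:ℝ)^2)
  · intro n; positivity
  · intro n
    have h := ww_partial α 1 hα le_rfl n
    have h2 : ∑ a ∈ Finset.range n, ww α a ^ 2 ≤ ∑ a ∈ Finset.range (1 + n), ww α a ^ 2 :=
      Finset.sum_le_sum_of_subset_of_nonneg (Finset.range_mono (by omega)) (fun _ _ _ => by positivity)
    have h3 : (α:ℝ)^2 * (1 / ((1:ℕ):ℝ) - 1 / (((1:ℕ):ℝ) + n)) ≤ (α:ℝ)^2 := by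
      apply mul_le_of_le_one_right (by positivity)
      have : (0:ℝ) ≤ 1 / (((1:ℕ):ℝ) + n) := by positivity
      simp at *; linarith
    simp only [Finset.range_one, Finset.sum_singleton] at h
    linarith

noncomputable def SS (α : ℕ) : ℝ := ∑' a : ℕ, ww α a ^ 2

lemma SS_tail (α A : ℕ) (hα : 1 ≤ α) (hA : 1 ≤ A) :
    SS α - (α:ℝ)^2 / A ≤ ∑ a ∈ Finset.range A, ww α a ^ 2 := by
  rw [sub_le_iff_le_add]
  apply Real.tsum_le_of_sum_range_le
  · intro n; positivity
  · intro n
    have h := ww_partial α A hα hA n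
    have h2 : ∑ a ∈ Finset.range n, ww α a ^ 2 ≤ ∑ a ∈ Finset.range (A + n), ww α a ^ 2 :=
      Finset.sum_le_sum_of_subset_of_nonneg (Finset.range_mono (by omega)) (fun _ _ _ => by positivity)
    have h3 : (α:ℝ)^2 * (1 / (A:ℝ) - 1 / ((A:ℝ) + n)) ≤ (α:ℝ)^2 / A := by
      rw [div_eq_mul_one_div ((α:ℝ)^2)]
      apply mul_le_mul_of_nonneg_left _ (by positivity)
      have : (0:ℝ) ≤ 1 / ((A:ℝ) + n) := by positivity
      linarith
    linarith

lemma SS_partial_le (α A : ℕ) (hα : 1 ≤ α) : ∑ a ∈ Finset.range A, ww α a ^ 2 ≤ SS α :=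
  (ww_summable α hα).sum_le_tsum _ (fun _ _ => by positivity)

lemma SS_pos (α : ℕ) (hα : 1 ≤ α) : 0 < SS α := by
  have := SS_partial_le α 1 hα
  simp at this
  have := ww_zero_pos α hα
  have : 0 < ww α 0 ^2 := by positivity
  linarith

lemma card_sq_le (s : Finset ℕ) (hs : ∀ j ∈ s, 1 ≤ j) : (s.card : ℝ)^2 ≤ 2 * ∑ j ∈ s, (j:ℝ) := by
  induction s using Finset.induction_on_max with
  | empty => simp
  | insert a s hlt ih =>
    have hna : a ∉ s := fun h => lt_irrefl _ (hlt a h)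
    rw [Finset.card_insert_of_notMem hna, Finset.sum_insert hna]
    have ih' := ih (fun j hj => hs j (Finset.mem_insert_of_mem hj))
    have : s ⊆ Finset.Ico 1 a := by
      intro j hj
      simp only [Finset.mem_Ico]
      exact ⟨hs j (Finset.mem_insert_of_mem hj), hlt j hj⟩
    have hc := Finset.card_le_card this
    simp at hc
    have h1 := hs a (Finset.mem_insert_self _ _)
    have : (s.card : ℝ) + 1 ≤ a := by exact_mod_cast (by omega : s.card + 1 ≤ a)
    push_cast
    nlinarith

lemma upper_comb (α : ℕ) (hα : 1 ≤ α) (J : Finset ℕ) (idx v : ℕ → ℕ) (hinj : Set.InjOn idx J)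
    (h1 : ∀ j ∈ J, 1 ≤ idx j) (B : ℝ) (hB : ∑ j ∈ J, (v j : ℝ) * idx j ≤ B) :
    ∑ j ∈ J, Real.log ((α:ℝ) * v j + 1) ≤ Real.sqrt (2 * SS α * B) := by
  classical
  set N := J.sup v
  have hv : ∀ j ∈ J, v j ≤ N := fun j hj => Finset.le_sup hj
  have key : ∀ (c : ℕ → ℝ) (d : ℕ → ℝ), ∑ j ∈ J, d j * ∑ a ∈ Finset.range (v j), c a =
      ∑ a ∈ Finset.range N, c a * ∑ j ∈ J.filter (fun j => a < v j), d j := by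
    intro c d
    simp_rw [Finset.mul_sum]
    rw [Finset.sum_comm' (t' := Finset.range N) (s' := fun a => J.filter (fun j => a < v j))]
    · exact Finset.sum_congr rfl fun _ _ => Finset.sum_congr rfl fun _ _ => mul_comm _ _
    · intro x y
      simp only [Finset.mem_range, Finset.mem_filter]
      constructor
      · rintro ⟨h, h'⟩; exact ⟨⟨h, h'⟩, lt_of_lt_of_le h' (hv x h)⟩
      · rintro ⟨⟨h, h'⟩, _⟩; exact ⟨h, h'⟩
  have e1 : ∑ j ∈ J, Real.log ((α:ℝ) * v j + 1) =
      ∑ a ∈ Finset.range N, ww α a * ((J.filter (fun j => a < v j)).card : ℝ) := by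
    have := key (ww α) (fun _ => 1)
    simp only [one_mul, ww_sum, Finset.sum_const, nsmul_eq_mul, mul_one] at this
    exact this
  have e2 : ∑ j ∈ J, (v j : ℝ) * idx j =
      ∑ a ∈ Finset.range N, ∑ j ∈ J.filter (fun j => a < v j), (idx j : ℝ) := by
    have := key (fun _ => 1) (fun j => (idx j : ℝ))
    simp only [one_mul, Finset.sum_const, nsmul_eq_mul, mul_one, Finset.card_range] at this
    rw [← this]
    exact Finset.sum_congr rfl fun _ _ => mul_comm _ _
  have e3 : ∑ a ∈ Finset.range N, ((J.filter (fun j => a < v j)).card : ℝ)^2 ≤ 2 * B := by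
    refine le_trans ?_ (mul_le_mul_of_nonneg_left hB (by norm_num))
    rw [e2, Finset.mul_sum]
    apply Finset.sum_le_sum
    intro a _
    have hi : Set.InjOn idx (J.filter (fun j => a < v j) : Finset ℕ) :=
      hinj.mono (by intro x hx; simp at hx; exact hx.1)
    have := card_sq_le ((J.filter (fun j => a < v j)).image idx) (by
      intro j hj
      simp only [Finset.mem_image, Finset.mem_filter] at hj
      obtain ⟨i, hi, rfl⟩ := hj
      exact h1 i hi.1)
    rwa [Finset.card_image_of_injOn hi, Finset.sum_image hi] at this
  rw [e1]
  apply Real.le_sqrt_of_sq_le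
  refine (Finset.sum_mul_sq_le_sq_mul_sq _ _ _).trans ?_
  have := SS_partial_le α N hα
  have h0 := (SS_pos α hα).le
  calc _ ≤ SS α * (2 * B) := by
        apply mul_le_mul this e3 (Finset.sum_nonneg fun _ _ => by positivity) h0
    _ = _ := by ring

lemma log_eq_sum (n : ℕ) (hn : n ≠ 0) :
    Real.log n = ∑ p ∈ n.primeFactors, (n.factorization p : ℝ) * Real.log p := by
  conv_lhs => rw [← Nat.prod_factorization_pow_eq_self hn]
  rw [Finsupp.prod, Nat.support_factorization]
  push_cast
  rw [Real.log_prod]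
  · exact Finset.sum_congr rfl fun p _ => by rw [Real.log_pow]
  · intro p hp
    have := (Nat.prime_of_mem_primeFactors hp).pos
    positivity

noncomputable def hh (b : ℕ) : ℝ := b.factorization.sum fun p k => (k:ℝ) * ((p:ℝ) - 1)

lemma hh_eq (b : ℕ) : hh b = ∑ p ∈ b.primeFactors, (b.factorization p : ℝ) * ((p:ℝ) - 1) := by
  rw [hh, Finsupp.sum, Nat.support_factorization]

lemma hh_mul (a b : ℕ) (ha : a ≠ 0) (hb : b ≠ 0) : hh (a * b) = hh a + hh b := by
  unfold hh
  rw [Nat.factorization_mul ha hb, Finsupp.sum_add_index']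
  · intro p; simp
  · intro p k l; push_cast; ring

lemma hh_le (b : ℕ) (hb : b ≠ 0) : hh b ≤ (b:ℝ) - 1 := by
  induction b using Nat.recOnMul with
  | zero => exact absurd rfl hb
  | one => simp [hh]
  | prime p hp => simp [hh, hp.factorization]
  | mul a b ha hb' =>
    have h1 : a ≠ 0 := left_ne_zero_of_mul hb
    have h2 : b ≠ 0 := right_ne_zero_of_mul hb
    rw [hh_mul a b h1 h2]
    have := ha h1
    have := hb' h2
    have i1 : (1:ℝ) ≤ a := by exact_mod_cast Nat.one_le_iff_ne_zero.2 h1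
    have i2 : (1:ℝ) ≤ b := by exact_mod_cast Nat.one_le_iff_ne_zero.2 h2
    push_cast
    nlinarith

lemma hh_prod_le (s : Finset ℕ) (b : ℕ → ℕ) (hb : ∀ p ∈ s, b p ≠ 0) :
    hh (∏ p ∈ s, b p) ≤ ∑ p ∈ s, ((b p : ℝ) - 1) := by
  classical
  induction s using Finset.induction_on with
  | empty => simp [hh]
  | insert a s ha ih =>
    have hs : ∀ p ∈ s, b p ≠ 0 := fun p hp => hb p (Finset.mem_insert_of_mem hp)
    rw [Finset.prod_insert ha, Finset.sum_insert ha,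
      hh_mul _ _ (hb a (Finset.mem_insert_self _ _)) (Finset.prod_ne_zero_iff.2 hs)]
    have := hh_le _ (hb a (Finset.mem_insert_self _ _))
    have := ih hs
    linarith

lemma log_g_add (α a b : ℕ) : Real.log ((α:ℝ) * (a + b : ℕ) + 1) ≤ Real.log ((α:ℝ) * a + 1) + b * α := by
  have h : (α:ℝ) * (a + b : ℕ) + 1 ≤ ((α:ℝ) * a + 1) * ((α:ℝ) * b + 1) := by
    push_cast
    have : (0:ℝ) ≤ α * a * (α * b) := by positivity
    nlinarith
  have h2 := Real.log_le_log (by positivity) h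
  rw [Real.log_mul (by positivity) (by positivity)] at h2
  have h3 := Real.log_le_sub_one_of_pos (x := (α:ℝ) * b + 1) (by positivity)
  linarith

lemma sum_fac_le (T : Finset ℕ) (m : ℕ) (c : ℕ → ℝ) (hc : ∀ p ∈ m.primeFactors, 0 ≤ c p) :
    ∑ p ∈ T, (m.factorization p : ℝ) * c p ≤ ∑ p ∈ m.primeFactors, (m.factorization p : ℝ) * c p := by
  classical
  have : ∑ p ∈ T.filter (fun p => p ∈ m.primeFactors), (m.factorization p : ℝ) * c p =
      ∑ p ∈ T, (m.factorization p : ℝ) * c p := by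
    rw [Finset.sum_filter]
    apply Finset.sum_congr rfl
    intro p _
    split_ifs with h
    · rfl
    · rw [← Nat.support_factorization, Finsupp.notMem_support_iff] at h
      simp [h]
  rw [← this]
  apply Finset.sum_le_sum_of_subset_of_nonneg
  · intro p hp; exact (Finset.mem_filter.1 hp).2
  · intro p hp _
    have := hc p hp
    positivity

section
variable {f : ℕ → ℕ} {α : ℕ} {Qp : ℕ → Prop}

open Classical in
lemma f_eq (hf1 : f 1 = 1)
    (hfmult : ∀ m₁ m₂ : ℕ, Nat.Coprime m₁ m₂ → f (m₁ * m₂) = f m₁ * f m₂)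
    (hfQ : ∀ p ν : ℕ, p.Prime → Qp p → 1 ≤ ν → f (p ^ ν) = α * ν + 1)
    (hfnotQ : ∀ p ν : ℕ, p.Prime → ¬ Qp p → 1 ≤ ν → f (p ^ ν) = 0 ∨ f (p ^ ν) = 1)
    (n : ℕ) (hn : n ≠ 0) (hfn : f n ≠ 0) :
    f n = ∏ p ∈ n.primeFactors.filter Qp, (α * n.factorization p + 1) := by
  have h := Nat.multiplicative_factorization f hfmult hf1 hn
  rw [Finsupp.prod, Nat.support_factorization] at h
  rw [h] at hfn ⊢
  rw [Finset.prod_filter]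
  apply Finset.prod_congr rfl
  intro p hp
  have hp' := Nat.prime_of_mem_primeFactors hp
  have h1 : 1 ≤ n.factorization p := by
    rw [← Nat.support_factorization, Finsupp.mem_support_iff] at hp
    omega
  split_ifs with hQ
  · exact hfQ p _ hp' hQ h1
  · rcases hfnotQ p _ hp' hQ h1 with h0 | h0
    · exact absurd h0 (Finset.prod_ne_zero_iff.1 hfn p hp)
    · exact h0

open Classical in
lemma log_f_le (hf0 : f 0 = 1) (hf1 : f 1 = 1)
    (hfmult : ∀ m₁ m₂ : ℕ, Nat.Coprime m₁ m₂ → f (m₁ * m₂) = f m₁ * f m₂)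
    (hfQ : ∀ p ν : ℕ, p.Prime → Qp p → 1 ≤ ν → f (p ^ ν) = α * ν + 1)
    (hfnotQ : ∀ p ν : ℕ, p.Prime → ¬ Qp p → 1 ≤ ν → f (p ^ ν) = 0 ∨ f (p ^ ν) = 1)
    (n : ℕ) :
    Real.log (f n) ≤ ∑ p ∈ n.primeFactors.filter Qp, Real.log ((α:ℝ) * n.factorization p + 1) := by
  have h0 : 0 ≤ ∑ p ∈ n.primeFactors.filter Qp, Real.log ((α:ℝ) * n.factorization p + 1) := by
    apply Finset.sum_nonneg
    intro p _
    apply Real.log_nonneg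
    have : (0:ℝ) ≤ (α:ℝ) * n.factorization p := by positivity
    linarith
  by_cases hn : n = 0
  · rw [hn, hf0]; simp
  by_cases hfn : f n = 0
  · rw [hfn]; simpa using h0
  rw [f_eq hf1 hfmult hfQ hfnotQ n hn hfn]
  push_cast
  rw [Real.log_prod]
  intro p _
  positivity

open Classical in
lemma arith_upper (hα : 1 ≤ α) (hf0 : f 0 = 1) (hf1 : f 1 = 1)
    (hfmult : ∀ m₁ m₂ : ℕ, Nat.Coprime m₁ m₂ → f (m₁ * m₂) = f m₁ * f m₂)
    (hfQ : ∀ p ν : ℕ, p.Prime → Qp p → 1 ≤ ν → f (p ^ ν) = α * ν + 1)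
    (hfnotQ : ∀ p ν : ℕ, p.Prime → ¬ Qp p → 1 ≤ ν → f (p ^ ν) = 0 ∨ f (p ^ ν) = 1)
    (idx : ℕ → ℕ) (hinj : Set.InjOn idx {p | Qp p}) (hidx1 : ∀ p, Qp p → 1 ≤ idx p)
    (κ : ℝ) (hκ : 0 < κ) (X Y l : ℝ) (hX : 1 ≤ X) (hY : 1 < Y) (hl : 0 < l) (hlY : l ≤ Real.log Y)
    (hidx : ∀ p, Qp p → Y < p → κ * idx p * l ≤ (p:ℝ) - 1)
    (n : ℕ) (hn : n ≠ 0) (hnX : Real.log n ≤ X) :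
    Real.log (f (f n)) ≤ (1 + 2 * α) * Y * Real.log (4 * α ^ 2 * X + 1) +
      Real.sqrt (2 * SS α * (α * X / (κ * l * l))) := by
  set V := Real.log (4 * (α:ℝ) ^ 2 * X + 1) with hV
  have hα' : (1:ℝ) ≤ α := by exact_mod_cast hα
  have hV0 : 0 ≤ V := Real.log_nonneg (by have : 0 ≤ 4 * (α:ℝ) ^ 2 * X := by positivity
                                          linarith)
  by_cases hfn : f n = 0
  · rw [hfn, hf0]; simp; positivity
  have hl2 : (1/2:ℝ) < Real.log 2 := by have := Real.log_two_gt_d9; linarith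
  set P := n.primeFactors.filter Qp with hP
  set b : ℕ → ℕ := fun p => α * n.factorization p + 1 with hb
  have hb0 : ∀ p, b p ≠ 0 := fun p => by simp [hb]
  set P1 := P.filter (fun p : ℕ => (p:ℝ) ≤ Y) with hP1
  set P2 := P.filter (fun p : ℕ => ¬ (p:ℝ) ≤ Y) with hP2
  have hPn : P ⊆ n.primeFactors := Finset.filter_subset _ _
  have hprime : ∀ p ∈ P, p.Prime := fun p hp => Nat.prime_of_mem_primeFactors (hPn hp)
  have loghalf : ∀ p : ℕ, p.Prime → 1/2 ≤ Real.log p := by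
    intro p hp
    have : Real.log 2 ≤ Real.log p := Real.log_le_log (by norm_num) (by exact_mod_cast hp.two_le)
    linarith
  set m1 := ∏ p ∈ P1, b p with hm1
  set m2 := ∏ p ∈ P2, b p with hm2
  have hm1' : m1 ≠ 0 := Finset.prod_ne_zero_iff.2 fun p _ => hb0 p
  have hm2' : m2 ≠ 0 := Finset.prod_ne_zero_iff.2 fun p _ => hb0 p
  have hm : f n = m1 * m2 := by
    rw [f_eq hf1 hfmult hfQ hfnotQ n hn hfn, hm1, hm2, Finset.prod_filter_mul_prod_filter_not]
  have hsumlog : ∑ p ∈ P, (n.factorization p : ℝ) * Real.log p ≤ X := by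
    refine le_trans ?_ hnX
    rw [log_eq_sum n hn]
    apply Finset.sum_le_sum_of_subset_of_nonneg hPn
    intro p _ _
    have := Real.log_natCast_nonneg p
    positivity
  have hsume : ∑ p ∈ P, (n.factorization p : ℝ) ≤ 2 * X := by
    have : ∑ p ∈ P, (n.factorization p : ℝ) ≤ ∑ p ∈ P, 2 * ((n.factorization p : ℝ) * Real.log p) := by
      apply Finset.sum_le_sum
      intro p hp
      have h1 := loghalf p (hprime p hp)
      have h2 : (0:ℝ) ≤ n.factorization p := by positivity
      nlinarith
    rw [← Finset.mul_sum] at this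
    linarith
  have he : ∀ p ∈ P, (n.factorization p : ℝ) ≤ 2 * X := by
    intro p hp
    exact (Finset.single_le_sum (f := fun p => (n.factorization p : ℝ)) (fun _ _ => by positivity) hp).trans hsume
  -- log m
  have hlogm : Real.log (f n) ≤ 2 * α * X := by
    rw [f_eq hf1 hfmult hfQ hfnotQ n hn hfn]
    push_cast
    rw [Real.log_prod (fun p _ => by positivity)]
    have : ∑ p ∈ P, Real.log ((α:ℝ) * n.factorization p + 1) ≤ ∑ p ∈ P, (α:ℝ) * n.factorization p := by
      apply Finset.sum_le_sum
      intro p _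
      have := Real.log_le_sub_one_of_pos (x := (α:ℝ) * n.factorization p + 1) (by positivity)
      linarith
    rw [← Finset.mul_sum] at this
    nlinarith
  have hfac : ∀ m : ℕ, m ≠ 0 → ∑ p ∈ m.primeFactors, (m.factorization p : ℝ) ≤ 2 * Real.log m := by
    intro m hm
    rw [log_eq_sum m hm, Finset.mul_sum]
    apply Finset.sum_le_sum
    intro p hp
    have h1 := loghalf p (Nat.prime_of_mem_primeFactors hp)
    have h2 : (0:ℝ) ≤ m.factorization p := by positivity
    nlinarith
  have hv : ∀ p ∈ (f n).primeFactors, ((f n).factorization p : ℝ) ≤ 4 * α * X := by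
    intro p hp
    have := (Finset.single_le_sum (f := fun p => ((f n).factorization p : ℝ)) (fun _ _ => by positivity) hp).trans (hfac _ hfn)
    linarith
  have hcard : ∀ s : Finset ℕ, (∀ p ∈ s, p.Prime ∧ (p:ℝ) ≤ Y) → (s.card : ℝ) ≤ Y := by
    intro s hs
    have : s ⊆ Finset.Icc 1 ⌊Y⌋₊ := by
      intro p hp
      rw [Finset.mem_Icc]
      exact ⟨(hs p hp).1.one_lt.le, Nat.le_floor (hs p hp).2⟩
    have := Finset.card_le_card this
    simp at this
    exact (Nat.cast_le.2 this).trans (Nat.floor_le (by linarith))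
  -- log m1
  have hlogm1 : Real.log m1 ≤ Y * V := by
    rw [hm1]
    push_cast
    rw [Real.log_prod (fun p _ => by have := hb0 p; positivity)]
    have h1 : ∀ p ∈ P1, Real.log (b p : ℝ) ≤ V := by
      intro p hp
      have hpP : p ∈ P := (Finset.mem_filter.1 hp).1
      apply Real.log_le_log (by have := hb0 p; positivity)
      simp only [hb]
      push_cast
      have := he p hpP
      nlinarith [mul_le_mul_of_nonneg_left this (by positivity : (0:ℝ) ≤ α), mul_nonneg (sub_nonneg.2 hα') (by positivity : (0:ℝ) ≤ α * X), (by positivity : (0:ℝ) ≤ α * X)]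
    refine (Finset.sum_le_card_nsmul _ _ _ h1).trans ?_
    rw [nsmul_eq_mul]
    apply mul_le_mul_of_nonneg_right _ hV0
    apply hcard
    intro p hp
    rw [hP1, Finset.mem_filter] at hp
    exact ⟨hprime p hp.1, hp.2⟩
  -- main
  set T := (f n).primeFactors.filter Qp with hT
  have hTprime : ∀ p ∈ T, p.Prime := fun p hp => Nat.prime_of_mem_primeFactors (Finset.mem_filter.1 hp).1
  refine (log_f_le hf0 hf1 hfmult hfQ hfnotQ (f n)).trans ?_
  rw [← Finset.sum_filter_add_sum_filter_not T (fun p : ℕ => (p:ℝ) ≤ Y)]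
  set T1 := T.filter (fun p : ℕ => (p:ℝ) ≤ Y) with hT1
  set T2 := T.filter (fun p : ℕ => ¬ (p:ℝ) ≤ Y) with hT2
  have hs1 : ∑ p ∈ T1, Real.log ((α:ℝ) * (f n).factorization p + 1) ≤ Y * V := by
    have h1 : ∀ p ∈ T1, Real.log ((α:ℝ) * (f n).factorization p + 1) ≤ V := by
      intro p hp
      have hpT : p ∈ T := (Finset.mem_filter.1 hp).1
      have := hv p (Finset.mem_filter.1 hpT).1
      apply Real.log_le_log (by positivity)
      nlinarith
    refine (Finset.sum_le_card_nsmul _ _ _ h1).trans ?_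
    rw [nsmul_eq_mul]
    apply mul_le_mul_of_nonneg_right _ hV0
    apply hcard
    intro p hp
    rw [hT1, Finset.mem_filter] at hp
    exact ⟨hTprime p hp.1, hp.2⟩
  have hs2 : ∑ p ∈ T2, Real.log ((α:ℝ) * (f n).factorization p + 1) ≤
      ∑ p ∈ T2, Real.log ((α:ℝ) * m2.factorization p + 1) + 2 * α * (Y * V) := by
    have h1 : ∑ p ∈ T2, Real.log ((α:ℝ) * (f n).factorization p + 1) ≤
        ∑ p ∈ T2, (Real.log ((α:ℝ) * m2.factorization p + 1) + m1.factorization p * α) := by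
      apply Finset.sum_le_sum
      intro p _
      rw [hm, Nat.factorization_mul hm1' hm2', add_comm m1.factorization]
      exact log_g_add _ _ _
    have h2 : ∑ p ∈ T2, (m1.factorization p : ℝ) ≤ 2 * Real.log m1 := by
      refine le_trans ?_ (hfac m1 hm1')
      have := sum_fac_le T2 m1 (fun _ => 1) (fun _ _ => by norm_num)
      simpa using this
    rw [Finset.sum_add_distrib, ← Finset.sum_mul] at h1
    have h3 : (∑ p ∈ T2, (m1.factorization p : ℝ)) * α ≤ (2 * (Y * V)) * α :=
      mul_le_mul_of_nonneg_right (by linarith) (by positivity)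
    linarith
  have hs3 : ∑ p ∈ T2, Real.log ((α:ℝ) * m2.factorization p + 1) ≤
      Real.sqrt (2 * SS α * (α * X / (κ * l * l))) := by
    have hT2Q : ∀ p ∈ T2, Qp p := fun p hp => (Finset.mem_filter.1 (Finset.mem_filter.1 hp).1).2
    have hT2Y : ∀ p ∈ T2, Y < p := fun p hp => not_le.1 (Finset.mem_filter.1 hp).2
    apply upper_comb α hα T2 idx (fun p => m2.factorization p)
    · exact hinj.mono fun p hp => hT2Q p hp
    · intro p hp; exact hidx1 p (hT2Q p hp)
    · rw [le_div_iff₀ (by positivity)]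
      have h1 : (∑ p ∈ T2, (m2.factorization p : ℝ) * idx p) * (κ * l) ≤ hh m2 := by
        rw [hh_eq, Finset.sum_mul]
        have : ∑ p ∈ T2, (m2.factorization p : ℝ) * idx p * (κ * l) ≤
          ∑ p ∈ T2, (m2.factorization p : ℝ) * ((p:ℝ) - 1) := by
          apply Finset.sum_le_sum
          intro p hp
          have h1 := hidx p (hT2Q p hp) (hT2Y p hp)
          have := mul_le_mul_of_nonneg_left h1 (by positivity : (0:ℝ) ≤ m2.factorization p)
          linarith
        refine this.trans ?_
        apply sum_fac_le T2 m2 (fun p => (p:ℝ) - 1)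
        intro p hp
        have : (1:ℝ) ≤ p := by exact_mod_cast (Nat.prime_of_mem_primeFactors hp).one_lt.le
        linarith
      have h2 : hh m2 ≤ ∑ p ∈ P2, ((b p : ℝ) - 1) := hh_prod_le P2 b fun p _ => hb0 p
      have h3 : (∑ p ∈ P2, ((b p : ℝ) - 1)) * l ≤ α * X := by
        rw [Finset.sum_mul]
        have : ∑ p ∈ P2, ((b p : ℝ) - 1) * l ≤ ∑ p ∈ P2, α * ((n.factorization p : ℝ) * Real.log p) := by
          apply Finset.sum_le_sum
          intro p hp
          have hYp : Y < p := not_le.1 (Finset.mem_filter.1 hp).2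
          have : l ≤ Real.log p := hlY.trans (Real.log_le_log (by linarith) hYp.le)
          simp only [hb]
          push_cast
          have := mul_le_mul_of_nonneg_left this (by positivity : (0:ℝ) ≤ α * n.factorization p)
          linarith
        rw [← Finset.mul_sum] at this
        refine this.trans (mul_le_mul_of_nonneg_left ?_ (by positivity))
        refine le_trans ?_ hsumlog
        apply Finset.sum_le_sum_of_subset_of_nonneg (Finset.filter_subset _ _)
        intro p _ _
        have := Real.log_natCast_nonneg p
        positivity
      calc _ = ((∑ p ∈ T2, (m2.factorization p : ℝ) * idx p) * (κ * l)) * l := by ring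
        _ ≤ (∑ p ∈ P2, ((b p : ℝ) - 1)) * l := mul_le_mul_of_nonneg_right (h1.trans h2) hl.le
        _ ≤ _ := h3
  nlinarith
end

section
variable {f : ℕ → ℕ} {α : ℕ} {Qp : ℕ → Prop}

lemma f_prod_pow {ι : Type*} (hf1 : f 1 = 1)
    (hfmult : ∀ m₁ m₂ : ℕ, Nat.Coprime m₁ m₂ → f (m₁ * m₂) = f m₁ * f m₂)
    (s : Finset ι) (P e : ι → ℕ) (hP : ∀ i ∈ s, (P i).Prime) (hinj : Set.InjOn P s) :
    f (∏ i ∈ s, P i ^ e i) = ∏ i ∈ s, f (P i ^ e i) := by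
  classical
  induction s using Finset.induction_on with
  | empty => simpa using hf1
  | insert a s ha ih =>
    rw [Finset.prod_insert ha, Finset.prod_insert ha, hfmult,
      ih (fun i hi => hP i (Finset.mem_insert_of_mem hi)) (hinj.mono (by simp))]
    apply Nat.Coprime.prod_right
    intro i hi
    apply Nat.Coprime.pow
    rw [Nat.coprime_primes (hP a (Finset.mem_insert_self _ _)) (hP i (Finset.mem_insert_of_mem hi))]
    intro h
    have := hinj (by simp) (by simp [hi]) h
    exact ha (this ▸ hi)

lemma arith_lower (hf1 : f 1 = 1)
    (hfmult : ∀ m₁ m₂ : ℕ, Nat.Coprime m₁ m₂ → f (m₁ * m₂) = f m₁ * f m₂)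
    (hfQ : ∀ p ν : ℕ, p.Prime → Qp p → 1 ≤ ν → f (p ^ ν) = α * ν + 1)
    (q E : ℕ → ℕ) (hq : ∀ j, (q j).Prime) (hqQ : ∀ j, Qp (q j)) (hqinj : Function.Injective q)
    (hE : ∀ j, q j = α * E j + 1)
    (r : ℕ → ℕ) (hr : Antitone r) (A : ℕ) (hA : 1 ≤ A) :
    ∃ n : ℕ, n ≠ 0 ∧
      Real.log n = ∑ a ∈ Finset.range A, ∑ j ∈ Finset.range (r a),
        (E j : ℝ) * Real.log (q (a * r 0 + j)) ∧
      ∑ a ∈ Finset.range A, (r a : ℝ) * ww α a ≤ Real.log (f (f n)) := by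
  classical
  set s : Finset (Σ _ : ℕ, ℕ) := (Finset.range A).sigma (fun a => Finset.range (r a)) with hs
  set P : (Σ _ : ℕ, ℕ) → ℕ := fun i => q (i.1 * r 0 + i.2) with hP
  set e : (Σ _ : ℕ, ℕ) → ℕ := fun i => E i.2 with he
  have hE1 : ∀ j, 1 ≤ E j := by
    intro j
    by_contra h
    have h0 : E j = 0 := by omega
    have := hE j
    rw [h0] at this
    exact (hq j).one_lt.ne' (by simpa using this)
  have hinj : Set.InjOn P s := by
    rintro ⟨a, j⟩ h1 ⟨b, k⟩ h2 h
    simp only [hs, Finset.coe_sigma, Set.mem_sigma_iff, Finset.mem_coe, Finset.mem_range] at h1 h2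
    have h := hqinj h
    simp only at h h1 h2
    have ja : j < r 0 := lt_of_lt_of_le h1.2 (hr (Nat.zero_le _))
    have kb : k < r 0 := lt_of_lt_of_le h2.2 (hr (Nat.zero_le _))
    have hjk : j = k := by
      have := congrArg (· % r 0) h
      simpa [Nat.add_mod, Nat.mod_eq_of_lt ja, Nat.mod_eq_of_lt kb] using this
    subst hjk
    have : a * r 0 = b * r 0 := by omega
    have := Nat.eq_of_mul_eq_mul_right (by omega) this
    subst this; rfl
  refine ⟨∏ i ∈ s, P i ^ e i, ?_, ?_, ?_⟩
  · apply Finset.prod_ne_zero_iff.2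
    intro i _
    exact pow_ne_zero _ (hq _).ne_zero
  · push_cast
    rw [Real.log_prod, hs, Finset.sum_sigma]
    · apply Finset.sum_congr rfl; intro a _
      apply Finset.sum_congr rfl; intro j _
      rw [Real.log_pow]
    · intro i _
      have := (hq (i.1 * r 0 + i.2)).pos
      positivity
  · have h1 : f (∏ i ∈ s, P i ^ e i) =
        ∏ j ∈ Finset.range (r 0), q j ^ ((Finset.range A).filter (fun a => j < r a)).card := by
      rw [f_prod_pow hf1 hfmult s P e (fun i _ => hq _) hinj]
      have : ∀ i ∈ s, f (P i ^ e i) = q i.2 := by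
        intro i _
        rw [hfQ _ _ (hq _) (hqQ _) (hE1 _), hE i.2]
      rw [Finset.prod_congr rfl this, hs, Finset.prod_sigma]
      rw [Finset.prod_comm' (t' := Finset.range (r 0)) (s' := fun j => (Finset.range A).filter (fun a => j < r a))]
      · simp
      · intro a j
        simp only [Finset.mem_range, Finset.mem_filter]
        constructor
        · rintro ⟨h, h'⟩; exact ⟨⟨h, h'⟩, lt_of_lt_of_le h' (hr (Nat.zero_le _))⟩
        · rintro ⟨h, _⟩; exact h
    rw [h1, f_prod_pow hf1 hfmult _ _ _ (fun i _ => hq _) hqinj.injOn]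
    have : ∀ j ∈ Finset.range (r 0), f (q j ^ ((Finset.range A).filter (fun a => j < r a)).card) =
        α * ((Finset.range A).filter (fun a => j < r a)).card + 1 := by
      intro j hj
      apply hfQ _ _ (hq _) (hqQ _)
      rw [Nat.one_le_iff_ne_zero, Finset.card_ne_zero]
      exact ⟨0, by simp at hj ⊢; exact ⟨by omega, hj⟩⟩
    rw [Finset.prod_congr rfl this]
    push_cast
    rw [Real.log_prod (fun i _ => by positivity)]
    have h2 : ∑ a ∈ Finset.range A, (r a : ℝ) * ww α a =
        ∑ j ∈ Finset.range (r 0), ∑ a ∈ (Finset.range A).filter (fun a => j < r a), ww α a := by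
      rw [Finset.sum_comm' (t' := Finset.range A) (s' := fun a => Finset.range (r a))]
      · simp
      · intro j a
        simp only [Finset.mem_range, Finset.mem_filter]
        constructor
        · rintro ⟨_, h⟩; exact ⟨h.2, h.1⟩
        · rintro ⟨h', h⟩; exact ⟨lt_of_lt_of_le h' (hr (Nat.zero_le _)), h, h'⟩
    rw [h2]
    apply Finset.sum_le_sum
    intro j _
    rw [← ww_sum]
    apply Finset.sum_le_sum_of_subset_of_nonneg
    · intro a ha
      simp only [Finset.mem_range, Finset.mem_filter] at ha ⊢
      have : Finset.range (a + 1) ⊆ (Finset.range A).filter (fun a => j < r a) := by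
        intro b hb
        simp only [Finset.mem_range, Finset.mem_filter] at hb ⊢
        exact ⟨by omega, lt_of_lt_of_le ha.2 (hr (by omega))⟩
      have := Finset.card_le_card this
      simp only [Finset.card_range] at this
      omega
    · intro _ _ _; exact ww_nonneg _ _
end

lemma ev_log (c : ℝ) : ∀ᶠ L : ℝ in atTop, c ≤ Real.log L :=
  Real.tendsto_log_atTop.eventually_ge_atTop c

lemma ev_loglin (c : ℝ) (hc : 0 < c) : ∀ᶠ L : ℝ in atTop, c * Real.log L ≤ L := by
  have h := Real.isLittleO_log_id_atTop.def (c := c⁻¹) (by positivity)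
  filter_upwards [h, eventually_ge_atTop 1] with L h hL
  rw [Real.norm_of_nonneg (Real.log_nonneg hL), id, Real.norm_of_nonneg (by linarith)] at h
  rw [← le_div_iff₀' hc, div_eq_inv_mul]
  exact h

lemma ev_exp (c : ℝ) (k : ℕ) : ∀ᶠ L : ℝ in atTop, c * L ^ k ≤ Real.exp (L / 2) := by
  have h := (isLittleO_pow_exp_pos_mul_atTop k (b := 1/2) (by norm_num)).def (c := (|c|+1)⁻¹) (by positivity)
  filter_upwards [h, eventually_ge_atTop 1] with L h hL
  rw [Real.norm_of_nonneg (by positivity), Real.norm_of_nonneg (by positivity), ← div_eq_inv_mul,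
    le_div_iff₀ (by positivity)] at h
  rw [show L / 2 = 1/2 * L by ring]
  refine le_trans ?_ h
  rw [mul_comm]
  apply mul_le_mul_of_nonneg_left _ (by positivity)
  have := le_abs_self c; linarith

lemma idx_asymp (q : ℕ → ℕ) (κ A : ℝ) (hκ : 0 < κ)
    (hA : ∀ j : ℕ, 2 ≤ j →
      |(q j : ℝ) - κ * j * (Real.log j + Real.log (Real.log j))| ≤ A * (κ * j)) :
    ∀ᶠ L : ℝ in atTop, ∀ j : ℕ, 1 ≤ j → Real.exp (L / 2) / L ^ 3 < q j →
      κ * j * (L / 2 - 6 * Real.log L) ≤ (q j : ℝ) - 1 := by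
  filter_upwards [eventually_ge_atTop 1, ev_exp (q 1) 3, eventually_ge_atTop (κ * (1 + |A|)),
    ev_log (|A| + 1 / κ), ev_loglin 20 (by norm_num), eventually_ge_atTop 4] with L h1 h2 h3 h4 h5 h6
  intro j hj hqj
  have hL : 0 < L := by linarith
  have hA' := le_abs_self A
  have hA0 := abs_nonneg A
  rcases Nat.lt_or_ge j 2 with hj2 | hj2
  · have : j = 1 := by omega
    subst this
    rw [div_lt_iff₀ (by positivity)] at hqj
    linarith
  have hab := abs_le.1 (hA j hj2)
  have hj' : (2:ℝ) ≤ j := by exact_mod_cast hj2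
  have hlogj : 0 ≤ Real.log j := Real.log_nonneg (by linarith)
  have hll : Real.log (Real.log j) ≤ Real.log j := Real.log_le_self hlogj
  have hjl : Real.exp (L / 2) / L ^ 5 < j := by
    by_contra hcon
    push Not at hcon
    have hjU : (j:ℝ) ≤ Real.exp (L / 2) := by
      refine hcon.trans (div_le_self (by positivity) (one_le_pow₀ h1))
    have hlogjU : Real.log j ≤ L / 2 := by
      rw [Real.log_le_iff_le_exp (by linarith)]; exact hjU
    have hb : (q j : ℝ) ≤ κ * j * (L + |A|) := by
      have : κ * j * (Real.log j + Real.log (Real.log j) + A) ≤ κ * j * (L + |A|) :=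
        mul_le_mul_of_nonneg_left (by linarith) (by positivity)
      linarith [hab.2]
    have hc : κ * (L + |A|) ≤ L ^ 2 := by
      have : κ * (L + |A|) ≤ κ * (1 + |A|) * L := by nlinarith [mul_nonneg (mul_nonneg hκ.le hA0) (sub_nonneg.2 h1)]
      nlinarith
    have hd : (q j : ℝ) ≤ Real.exp (L / 2) / L ^ 3 := by
      calc (q j : ℝ) ≤ j * (κ * (L + |A|)) := by linarith
        _ ≤ (Real.exp (L / 2) / L ^ 5) * L ^ 2 := by
            apply mul_le_mul hcon hc (by positivity) (by positivity)
        _ = _ := by field_simp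
    linarith
  have hlog : L / 2 - 5 * Real.log L ≤ Real.log j := by
    have := Real.log_le_log (by positivity) hjl.le
    rw [Real.log_div (by positivity) (by positivity), Real.log_exp, Real.log_pow] at this
    push_cast at this; linarith
  have hll0 : 0 ≤ Real.log (Real.log j) := Real.log_nonneg (by linarith)
  have h7 : κ * j * (L / 2 - 6 * Real.log L) ≤ κ * j * (Real.log j + Real.log (Real.log j) - A - 1 / κ) :=
    mul_le_mul_of_nonneg_left (by linarith) (by positivity)
  have h8 : κ * j * (1 / κ) = j := by field_simp
  have := hab.1
  nlinarith

noncomputable def c0 (α : ℕ) (κ : ℝ) : ℝ := Real.sqrt (2 * SS α * α / κ)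

section
variable {f : ℕ → ℕ} {α : ℕ} {Qp : ℕ → Prop}

lemma asymp_upper (hα : 1 ≤ α) (hf0 : f 0 = 1) (hf1 : f 1 = 1)
    (hfmult : ∀ m₁ m₂ : ℕ, Nat.Coprime m₁ m₂ → f (m₁ * m₂) = f m₁ * f m₂)
    (hfQ : ∀ p ν : ℕ, p.Prime → Qp p → 1 ≤ ν → f (p ^ ν) = α * ν + 1)
    (hfnotQ : ∀ p ν : ℕ, p.Prime → ¬ Qp p → 1 ≤ ν → f (p ^ ν) = 0 ∨ f (p ^ ν) = 1)
    (q : ℕ → ℕ) (hQp : ∀ p, Qp p ↔ ∃ j, 1 ≤ j ∧ q j = p)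
    (κ A : ℝ) (hκ : 0 < κ)
    (hA : ∀ j : ℕ, 2 ≤ j →
      |(q j : ℝ) - κ * j * (Real.log j + Real.log (Real.log j))| ≤ A * (κ * j)) :
    ∃ C : ℝ, 0 < C ∧ ∀ᶠ L : ℝ in atTop, ∀ n : ℕ, n ≠ 0 → Real.log n ≤ Real.exp L →
      Real.log (f (f n)) ≤ Real.exp (L / 2) / L * (2 * c0 α κ) +
        C * (Real.exp (L / 2) / L) * (Real.log L / L) := by
  have hS := SS_pos α hα
  have hα' : (1:ℝ) ≤ α := by exact_mod_cast hα
  refine ⟨2 * (1 + 2 * α) + 48 * c0 α κ, by unfold c0; positivity, ?_⟩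
  have hch : ∀ p, ∃ j, Qp p → 1 ≤ j ∧ q j = p := by
    intro p
    by_cases h : Qp p
    · obtain ⟨j, hj⟩ := (hQp p).1 h
      exact ⟨j, fun _ => hj⟩
    · exact ⟨0, fun h' => absurd h' h⟩
  choose idx hidx using hch
  filter_upwards [idx_asymp q κ A hκ hA, eventually_ge_atTop 1, ev_log 1, ev_loglin 24 (by norm_num),
    eventually_ge_atTop (Real.log (4 * (α:ℝ)^2 + 1))] with L h1 h2 h3 h4 h5
  intro n hn hnX
  have hL : 0 < L := by linarith
  set U := Real.exp (L / 2) with hU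
  have hU0 : 0 < U := Real.exp_pos _
  have hUU : Real.exp L = U ^ 2 := by rw [hU, ← Real.exp_nat_mul]; congr 1; push_cast; ring
  have hlogY : Real.log (U / L ^ 3) = L / 2 - 3 * Real.log L := by
    rw [Real.log_div (by positivity) (by positivity), hU, Real.log_exp, Real.log_pow]; norm_num
  have hl : 0 < L / 2 - 6 * Real.log L := by linarith
  have hmain := arith_upper hα hf0 hf1 hfmult hfQ hfnotQ idx
    (by
      intro p hp p' hp' h
      rw [← (hidx p hp).2, ← (hidx p' hp').2, h])
    (fun p hp => (hidx p hp).1) κ hκ (Real.exp L) (U / L ^ 3) (L / 2 - 6 * Real.log L)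
    (Real.one_le_exp hL.le)
    (by
      have h : 0 < Real.log (U / L ^ 3) := by rw [hlogY]; linarith
      exact (Real.log_pos_iff (by positivity)).1 h)
    hl (by rw [hlogY]; linarith)
    (by
      intro p hp hY
      have h := hidx p hp
      have := h1 (idx p) h.1 (by rw [h.2]; exact hY)
      rwa [h.2] at this)
    n hn hnX
  refine hmain.trans ?_
  set l := L / 2 - 6 * Real.log L with hl_def
  have t1 : (1 + 2 * α) * (U / L ^ 3) * Real.log (4 * (α:ℝ) ^ 2 * Real.exp L + 1) ≤
      2 * (1 + 2 * α) * (U / L) * (Real.log L / L) := by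
    have ha : Real.log (4 * (α:ℝ) ^ 2 * Real.exp L + 1) ≤ 2 * L := by
      have : 4 * (α:ℝ) ^ 2 * Real.exp L + 1 ≤ (4 * (α:ℝ)^2 + 1) * Real.exp L := by
        have := Real.one_le_exp hL.le
        linarith
      have := Real.log_le_log (by positivity) this
      rw [Real.log_mul (by positivity) (by positivity), Real.log_exp] at this
      linarith
    calc (1 + 2 * α) * (U / L ^ 3) * Real.log (4 * (α:ℝ) ^ 2 * Real.exp L + 1)
        ≤ (1 + 2 * α) * (U / L ^ 3) * (2 * L) := mul_le_mul_of_nonneg_left ha (by positivity)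
      _ = 2 * (1 + 2 * α) * (U / L) * (1 / L) := by field_simp
      _ ≤ _ := by gcongr
  have t2 : Real.sqrt (2 * SS α * (α * Real.exp L / (κ * l * l))) = c0 α κ * (U / l) := by
    rw [hUU, show 2 * SS α * (α * U ^ 2 / (κ * l * l)) = (2 * SS α * α / κ) * (U / l) ^ 2 by field_simp]
    rw [Real.sqrt_mul (by positivity), Real.sqrt_sq (by positivity), c0]
  have t3 : U / l ≤ U / L * 2 + 48 * (U / L) * (Real.log L / L) := by
    rw [div_le_iff₀ hl]
    have : (U / L * 2 + 48 * (U / L) * (Real.log L / L)) * l =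
      U * (((2 * L + 48 * Real.log L) * l) / L ^ 2) := by field_simp
    rw [this]
    apply le_mul_of_one_le_right hU0.le
    rw [one_le_div (by positivity), hl_def]
    nlinarith
  rw [t2]
  have hc0 : 0 ≤ c0 α κ := Real.sqrt_nonneg _
  have := mul_le_mul_of_nonneg_left t3 hc0
  nlinarith
end

lemma q_upper (q : ℕ → ℕ) (κ A : ℝ) (hκ : 0 < κ)
    (hA : ∀ j : ℕ, 2 ≤ j →
      |(q j : ℝ) - κ * j * (Real.log j + Real.log (Real.log j))| ≤ A * (κ * j)) :
    ∀ᶠ L : ℝ in atTop, ∀ j : ℕ, 1 ≤ j →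
      ((j:ℝ) ≤ Real.exp (L / 2) → (q j : ℝ) ≤ κ * j * (L / 2 + 3 * Real.log L)) ∧
      ((j:ℝ) ≤ L * Real.exp (L / 2) → Real.log (q j) ≤ L / 2 + 3 * Real.log L) := by
  filter_upwards [eventually_ge_atTop 1, eventually_ge_atTop ((q 1 : ℝ) / κ * 2), ev_log (|A|), ev_log 0,
    ev_exp (q 1) 0, eventually_ge_atTop (κ * (2 + |A|)), ev_loglin 2 (by norm_num)]
    with L h1 h2 h3 h4 h5 h6 h7
  intro j hj
  have hL : 0 < L := by linarith
  have hA' := le_abs_self A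
  have hA0 := abs_nonneg A
  rcases Nat.lt_or_ge j 2 with hj2 | hj2
  · have : j = 1 := by omega
    subst this
    constructor
    · intro _
      have : (q 1 : ℝ) = κ * ((1:ℕ):ℝ) * ((q 1 : ℝ) / κ) := by push_cast; field_simp
      rw [this]
      exact mul_le_mul_of_nonneg_left (by linarith) (by positivity)
    · intro _
      rcases Nat.eq_zero_or_pos (q 1) with h | h
      · rw [h]; simp; positivity
      · have : Real.log (q 1) ≤ L / 2 := by
          rw [Real.log_le_iff_le_exp (by exact_mod_cast h)]
          simpa using h5
        linarith
  have hab := abs_le.1 (hA j hj2)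
  have hj' : (2:ℝ) ≤ j := by exact_mod_cast hj2
  have hlogj : 0 < Real.log j := Real.log_pos (by linarith)
  have hll : Real.log (Real.log j) ≤ Real.log j := Real.log_le_self hlogj.le
  have hq : (q j : ℝ) ≤ κ * j * (Real.log j + Real.log (Real.log j) + A) := by linarith [hab.2]
  constructor
  · intro hjU
    have hlogjU : Real.log j ≤ L / 2 := by
      rw [Real.log_le_iff_le_exp (by linarith)]; exact hjU
    have : Real.log (Real.log j) ≤ Real.log L := Real.log_le_log hlogj (by linarith)
    exact hq.trans (mul_le_mul_of_nonneg_left (by linarith) (by positivity))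
  · intro hjU
    have hlogjU : Real.log j ≤ L := by
      have := Real.log_le_log (by linarith) hjU
      rw [Real.log_mul (by positivity) (by positivity), Real.log_exp] at this
      linarith
    rcases Nat.eq_zero_or_pos (q j) with h | h
    · rw [h]; simp; positivity
    have hqj : (q j : ℝ) ≤ L ^ 3 * Real.exp (L / 2) := by
      calc (q j : ℝ) ≤ j * (κ * (2 * L + |A|)) := by
            refine hq.trans ?_
            have := mul_le_mul_of_nonneg_left (show Real.log j + Real.log (Real.log j) + A ≤ 2 * L + |A| by linarith) (show 0 ≤ κ * j by positivity)
            linarith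
        _ ≤ (L * Real.exp (L / 2)) * (L ^ 2) := by
            apply mul_le_mul hjU _ (by positivity) (by positivity)
            have : κ * (2 * L + |A|) ≤ κ * (2 + |A|) * L := by nlinarith [mul_nonneg (mul_nonneg hκ.le hA0) (sub_nonneg.2 h1)]
            nlinarith
        _ = _ := by ring
    have := Real.log_le_log (by exact_mod_cast h) hqj
    rw [Real.log_mul (by positivity) (by positivity), Real.log_exp, Real.log_pow] at this
    push_cast at this; linarith

lemma sum_succ_range (r : ℕ) : ∑ j ∈ Finset.range r, ((j:ℝ) + 1) = (r:ℝ) * (r + 1) / 2 := by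
  induction r with
  | zero => simp
  | succ r ih => rw [Finset.sum_range_succ, ih]; push_cast; ring

lemma poly_ineq (t : ℝ) (h0 : 0 ≤ t) (h1 : 12 * t ≤ 1) :
    (1 + 6 * t) ^ 2 * (1 - 12 * t) ^ 2 * (1 + t) ≤ 1 := by
  have a1 : (1 - 12 * t) ≤ (1 - 6 * t) ^ 2 := by nlinarith
  have a2 : (1 - 12 * t) ^ 2 ≤ ((1 - 6 * t) ^ 2) ^ 2 := pow_le_pow_left₀ (by linarith) a1 2
  have a3 : 1 + t ≤ (1 + 6 * t) ^ 2 := by nlinarith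
  have a4 : (1 + 6 * t) * (1 - 6 * t) ≤ 1 := by nlinarith
  have a5 : 0 ≤ (1 + 6 * t) * (1 - 6 * t) := mul_nonneg (by linarith) (by linarith)
  calc (1 + 6 * t) ^ 2 * (1 - 12 * t) ^ 2 * (1 + t)
      ≤ (1 + 6 * t) ^ 2 * ((1 - 6 * t) ^ 2) ^ 2 * (1 + 6 * t) ^ 2 := by gcongr
    _ = ((1 + 6 * t) * (1 - 6 * t)) ^ 4 := by ring
    _ ≤ 1 := pow_le_one₀ a5 a4

section
variable {f : ℕ → ℕ} {α : ℕ} {Qp : ℕ → Prop}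

set_option maxHeartbeats 1000000 in
lemma asymp_lower (hα : 1 ≤ α) (hf1 : f 1 = 1)
    (hfmult : ∀ m₁ m₂ : ℕ, Nat.Coprime m₁ m₂ → f (m₁ * m₂) = f m₁ * f m₂)
    (hfQ : ∀ p ν : ℕ, p.Prime → Qp p → 1 ≤ ν → f (p ^ ν) = α * ν + 1)
    (q E : ℕ → ℕ) (hq : ∀ j, (q (j + 1)).Prime) (hqQ : ∀ j, Qp (q (j + 1)))
    (hqinj : Function.Injective fun j => q (j + 1))
    (hE : ∀ j, q (j + 1) = α * E j + 1)
    (κ A : ℝ) (hκ : 0 < κ)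
    (hA : ∀ j : ℕ, 2 ≤ j →
      |(q j : ℝ) - κ * j * (Real.log j + Real.log (Real.log j))| ≤ A * (κ * j)) :
    ∃ C : ℝ, 0 < C ∧ ∀ᶠ L : ℝ in atTop, ∃ n : ℕ, n ≠ 0 ∧ Real.log n ≤ Real.exp L ∧
      Real.exp (L / 2) / L * (2 * c0 α κ) - C * (Real.exp (L / 2) / L) * (Real.log L / L) ≤
        Real.log (f (f n)) := by
  have hS := SS_pos α hα
  have hα' : (1:ℝ) ≤ α := by exact_mod_cast hα
  have hc0 : 0 < c0 α κ := by unfold c0; positivity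
  have hc0sq : c0 α κ ^ 2 = 2 * SS α * α / κ := Real.sq_sqrt (by positivity)
  set c := c0 α κ with hc
  set S := SS α with hSdef
  set w0 := ww α 0 with hw0
  have hw0p : 0 < w0 := ww_zero_pos α hα
  set ρ0 := 2 * c / S with hρ0
  have hρ0p : 0 < ρ0 := by positivity
  refine ⟨25 * c + ρ0 * α ^ 2, by positivity, ?_⟩
  filter_upwards [q_upper q κ A hκ hA, eventually_ge_atTop 1, ev_log 1, ev_loglin 24 (by norm_num),
    ev_exp (2 * w0 / c) 3, eventually_ge_atTop (2 * ρ0 * w0)] with L hqu h1 h3 h4 h5 h6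
  have hL : 0 < L := by linarith
  set U := Real.exp (L / 2) with hU
  have hU0 : 0 < U := Real.exp_pos _
  have hUU : Real.exp L = U ^ 2 := by rw [hU, ← Real.exp_nat_mul]; congr 1; push_cast; ring
  set t := Real.log L / L with ht
  have ht0 : 0 ≤ t := by positivity
  have htL : t * L = Real.log L := by rw [ht]; field_simp
  have ht1 : 24 * t ≤ 1 := by
    rw [ht, ← mul_div_assoc, div_le_one hL]; exact h4
  have ht2 : 1 / L ≤ t := by rw [ht]; gcongr
  set ρ := ρ0 * (U / L) * (1 - 12 * t) with hρ
  have hρp : 0 < ρ := mul_pos (by positivity) (by linarith)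
  have hρle : ρ ≤ ρ0 * (U / L) := mul_le_of_le_one_right (by positivity) (by linarith)
  have hρw : ρ * w0 ≤ U / 2 := by
    calc ρ * w0 ≤ ρ0 * (U / L) * w0 := by gcongr
      _ = (2 * ρ0 * w0) * (U / L) / 2 := by ring
      _ ≤ L * (U / L) / 2 := by gcongr
      _ = U / 2 := by field_simp
  set N := ⌈L⌉₊ with hN
  have hN1 : L ≤ N := Nat.le_ceil L
  have hN2 : (N:ℝ) ≤ 2 * L := by have := Nat.ceil_lt_add_one hL.le; linarith
  have hNpos : 1 ≤ N := by
    have : (0:ℝ) < N := by linarith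
    exact_mod_cast this
  set r : ℕ → ℕ := fun a => ⌊ρ * ww α a⌋₊ with hr
  have hrle : ∀ a, (r a : ℝ) ≤ ρ * ww α a := fun a =>
    Nat.floor_le (mul_nonneg hρp.le (ww_nonneg _ _))
  have hrge : ∀ a, ρ * ww α a - 1 ≤ r a := fun a => (Nat.sub_one_lt_floor _).le
  have hranti : Antitone r := fun a b hab =>
    Nat.floor_le_floor (mul_le_mul_of_nonneg_left (ww_anti α hab) hρp.le)
  have hwle : ∀ a, ww α a ≤ w0 := fun a => ww_anti α (Nat.zero_le a)
  obtain ⟨n, hn, hlogn, hobj⟩ := arith_lower hf1 hfmult hfQ (fun j => q (j + 1)) E hq hqQ hqinj hE r hranti N hNpos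
  refine ⟨n, hn, ?_, ?_⟩
  · set l := L / 2 + 3 * Real.log L with hl
    have hl0 : 0 < l := by positivity
    have hlt : l = L / 2 * (1 + 6 * t) := by rw [hl, ← htL]; ring
    have hr0 : (r 0 : ℝ) ≤ U / 2 := (hrle 0).trans hρw
    have hterm : ∀ a ∈ Finset.range N, ∀ j ∈ Finset.range (r a),
        (E j : ℝ) * Real.log (q (a * r 0 + j + 1)) ≤ κ * l ^ 2 / α * ((j:ℝ) + 1) := by
      intro a ha j hj
      rw [Finset.mem_range] at ha hj
      have hra : r a ≤ r 0 := hranti (Nat.zero_le a)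
      have hj1 : ((j + 1 : ℕ) : ℝ) ≤ U := by
        have : ((j + 1 : ℕ) : ℝ) ≤ r 0 := by exact_mod_cast (by omega : j + 1 ≤ r 0)
        linarith
      have hb1 := (hqu (j + 1) (by omega)).1 hj1
      have hi : ((a * r 0 + j + 1 : ℕ) : ℝ) ≤ L * U := by
        have : a * r 0 + j + 1 ≤ N * r 0 := by
          have : (a + 1) * r 0 ≤ N * r 0 := Nat.mul_le_mul_right _ ha
          have h' : (a + 1) * r 0 = a * r 0 + r 0 := by ring
          omega
        calc ((a * r 0 + j + 1 : ℕ) : ℝ) ≤ ((N * r 0 : ℕ) : ℝ) := by exact_mod_cast this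
          _ = (N:ℝ) * r 0 := by push_cast; ring
          _ ≤ (2 * L) * (U / 2) := by gcongr
          _ = L * U := by ring
      have hb2 := (hqu (a * r 0 + j + 1) (by omega)).2 hi
      have hEle : (E j : ℝ) ≤ κ * l / α * ((j:ℝ) + 1) := by
        have h := hE j
        have h' : (q (j + 1) : ℝ) = α * E j + 1 := by rw [h]; push_cast; ring
        rw [h'] at hb1
        push_cast at hb1
        rw [div_mul_eq_mul_div, le_div_iff₀ (by positivity)]
        linarith
      calc _ ≤ (κ * l / α * ((j:ℝ) + 1)) * l :=
            mul_le_mul hEle hb2 (Real.log_natCast_nonneg _) (by positivity)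
        _ = _ := by ring
    have hb : Real.log n ≤ κ * l ^ 2 / (2 * α) * (ρ ^ 2 * S + 2 * L * (ρ * w0)) := by
      rw [hlogn]
      calc _ ≤ ∑ a ∈ Finset.range N, κ * l ^ 2 / (2 * α) * (ρ ^ 2 * ww α a ^ 2 + ρ * w0) := by
            apply Finset.sum_le_sum
            intro a ha
            refine (Finset.sum_le_sum (hterm a ha)).trans ?_
            rw [← Finset.mul_sum, sum_succ_range]
            have hx : (r a : ℝ) * (r a + 1) ≤ ρ ^ 2 * ww α a ^ 2 + ρ * w0 := by
              have b1 := hrle a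
              have b2 : ρ * ww α a ≤ ρ * w0 := mul_le_mul_of_nonneg_left (hwle a) hρp.le
              have b3 : (r a : ℝ) ^ 2 ≤ (ρ * ww α a) ^ 2 := pow_le_pow_left₀ (by positivity) b1 2
              nlinarith
            calc κ * l ^ 2 / α * ((r a : ℝ) * (r a + 1) / 2) = κ * l ^ 2 / (2 * α) * ((r a : ℝ) * (r a + 1)) := by
                  field_simp
              _ ≤ _ := mul_le_mul_of_nonneg_left hx (by positivity)
        _ = κ * l ^ 2 / (2 * α) * (ρ ^ 2 * (∑ a ∈ Finset.range N, ww α a ^ 2) + N * (ρ * w0)) := by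
            rw [← Finset.mul_sum, Finset.sum_add_distrib, ← Finset.mul_sum]
            simp
        _ ≤ _ := by
            have := SS_partial_le α N hα
            gcongr
    have hsmall : 2 * L * (ρ * w0) ≤ t * (ρ ^ 2 * S) := by
      have hρS : ρ * S = 2 * c * (U / L) * (1 - 12 * t) := by rw [hρ, hρ0]; field_simp
      have h7 : 2 * L * w0 ≤ t * (ρ * S) := by
        rw [hρS]
        have h8 : 2 * w0 * L ^ 3 ≤ c * U := by
          rw [div_mul_eq_mul_div, div_le_iff₀ hc0] at h5; linarith
        calc 2 * L * w0 = (2 * w0 * L ^ 3) / L ^ 2 := by field_simp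
          _ ≤ c * U / L ^ 2 := by gcongr
          _ = 1 / L * (2 * c * (U / L) * (1 / 2)) := by field_simp
          _ ≤ t * (2 * c * (U / L) * (1 - 12 * t)) := by
              gcongr
              linarith
      have h9 := mul_le_mul_of_nonneg_left h7 hρp.le
      calc 2 * L * (ρ * w0) = ρ * (2 * L * w0) := by ring
        _ ≤ ρ * (t * (ρ * S)) := h9
        _ = _ := by ring
    calc Real.log n ≤ κ * l ^ 2 / (2 * α) * (ρ ^ 2 * S + 2 * L * (ρ * w0)) := hb
      _ ≤ κ * l ^ 2 / (2 * α) * (ρ ^ 2 * S + t * (ρ ^ 2 * S)) := by gcongr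
      _ = (κ * c ^ 2 / (2 * S * α)) * (U ^ 2 * ((1 + 6 * t) ^ 2 * (1 - 12 * t) ^ 2 * (1 + t))) := by
          rw [hlt, hρ, hρ0]; field_simp
      _ = U ^ 2 * ((1 + 6 * t) ^ 2 * (1 - 12 * t) ^ 2 * (1 + t)) := by
          rw [hc0sq]; field_simp
      _ ≤ U ^ 2 * 1 := mul_le_mul_of_nonneg_left (poly_ineq t ht0 (by linarith)) (by positivity)
      _ = Real.exp L := by rw [hUU, mul_one]
  · refine le_trans ?_ hobj
    have e1 : ρ * (∑ a ∈ Finset.range N, ww α a ^ 2) - N * w0 ≤ ∑ a ∈ Finset.range N, (r a : ℝ) * ww α a := by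
      have : ∑ a ∈ Finset.range N, (ρ * ww α a ^ 2 - w0) ≤ ∑ a ∈ Finset.range N, (r a : ℝ) * ww α a := by
        apply Finset.sum_le_sum
        intro a _
        have b1 := mul_le_mul_of_nonneg_right (hrge a) (ww_nonneg α a)
        have b2 := hwle a
        nlinarith
      rw [Finset.sum_sub_distrib, ← Finset.mul_sum] at this
      simpa using this
    refine le_trans ?_ e1
    have e2 := mul_le_mul_of_nonneg_left (SS_tail α N hα hNpos) hρp.le
    have e3 : ρ * ((α:ℝ) ^ 2 / N) ≤ ρ0 * (α:ℝ) ^ 2 * (U / L) * t := by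
      calc ρ * ((α:ℝ) ^ 2 / N) ≤ (ρ0 * (U / L)) * ((α:ℝ) ^ 2 / L) := by gcongr
        _ = ρ0 * (α:ℝ) ^ 2 * (U / L) * (1 / L) := by ring
        _ ≤ _ := by gcongr
    have e4 : N * w0 ≤ c * (U / L) * t := by
      have h8 : 2 * w0 * L ^ 3 ≤ c * U := by
        rw [div_mul_eq_mul_div, div_le_iff₀ hc0] at h5; linarith
      calc N * w0 ≤ 2 * L * w0 := by gcongr
        _ = (2 * w0 * L ^ 3) / L ^ 2 := by field_simp
        _ ≤ c * U / L ^ 2 := by gcongr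
        _ = c * (U / L) * (1 / L) := by field_simp
        _ ≤ _ := by gcongr
    have e5 : ρ * S = U / L * (2 * c) - 24 * c * (U / L) * t := by
      rw [hρ, hρ0]; field_simp; ring
    rw [mul_sub, e5] at e2
    linarith
end

/-- **Maximal order of the iterated function `f`.**
Under the standing hypotheses, with `g(ν) = α·ν + 1` for some `α ∈ ℕ`, one has
`M(x) = (√(log x)/log₂ x)·(C_g/√(κ/α) + O(log₃ x/log₂ x))` as `x → ∞`, where
`M(x) = max_{n ≤ x} log f(f(n))` and `C_g = (8·∑_{j≥1} (log(g(j)/g(j−1)))²)^{1/2}`. -/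
theorem maxOrder_iterated
    (q : ℕ → ℕ) (g f gdag : ℕ → ℕ) (κ cstar cf cdag ε : ℝ) (α : ℕ)
    (hα : 1 ≤ α)
    -- `g(ν) = α·ν + 1`
    (hgα : ∀ ν : ℕ, g ν = α * ν + 1)
    -- the strictly increasing sequence of primes `q_1 < q_2 < …` with its asymptotics (A.1)
    (hqprime : ∀ j : ℕ, 1 ≤ j → (q j).Prime)
    (hqmono : ∀ j : ℕ, 1 ≤ j → q j < q (j + 1))
    (hκ : 0 < κ)
    (hqasymp : ∃ A : ℝ, ∀ j : ℕ, 2 ≤ j →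
      |(q j : ℝ) - κ * j * (Real.log j + Real.log (Real.log j))| ≤ A * (κ * j))
    -- `g` is monotonically increasing with `g(0) = 1` (A.2)
    (hg0 : g 0 = 1) (hgmono : Monotone g)
    -- the image of `g` contains the monoid `⟨Q⟩` generated by `Q = {q_j : j ≥ 1}` (A.3)
    (hgrange : ∀ m : ℕ, 0 < m → (∀ p : ℕ, p.Prime → p ∣ m → ∃ j, 1 ≤ j ∧ q j = p) →
      ∃ x : ℕ, g x = m)
    -- `gdag` is the pseudo-inverse `g†`
    (hgdagdef : ∀ y : ℕ, gdag y = sInf {x : ℕ | 0 < x ∧ g x = y})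
    -- the superadditivity assumption (A.4)
    (hcstar : 1 / (q 1 : ℝ) < cstar)
    (hsuper : ∀ a b : ℕ,
      (∀ p : ℕ, p.Prime → p ∣ a → ∃ j, 1 ≤ j ∧ q j = p) →
      (∀ p : ℕ, p.Prime → p ∣ b → ∃ j, 1 ≤ j ∧ q j = p) →
      q 1 ≤ a → a ≤ b →
      (gdag b : ℝ) + cstar * b * gdag a ≤ gdag (a * b))
    -- the growth assumption `g(i)/g(i−1) = 1 + O(i^{−1/2−ε})` (A.5)
    (hε : 0 < ε)
    (hgratio : ∃ B : ℝ, ∀ i : ℕ, 1 ≤ i →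
      |(g i : ℝ) / (g (i - 1) : ℝ) - 1| ≤ B * (i : ℝ) ^ (-(1 / 2 : ℝ) - ε))
    -- the sublinearity assumption `g(x) ≤ c_f·x` (A.6)
    (hcf : 0 < cf)
    (hgsub : ∀ x : ℕ, 1 ≤ x → (g x : ℝ) ≤ cf * x)
    -- the assumption `g†(q) = c_†·q + O(q/log q)` for `q ∈ Q` (A.7)
    (hcdag : 0 < cdag)
    (hgdagasymp : ∃ B : ℝ, ∀ j : ℕ, 1 ≤ j →
      |(gdag (q j) : ℝ) - cdag * q j| ≤ B * (q j : ℝ) / Real.log (q j))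
    -- `f` is multiplicative with `f(p^ν) = g(ν)` for `p ∈ Q`, `f(p^ν) ∈ {0,1}` otherwise
    (hf0 : f 0 = 1) (hf1 : f 1 = 1)
    (hfmult : ∀ m₁ m₂ : ℕ, Nat.Coprime m₁ m₂ → f (m₁ * m₂) = f m₁ * f m₂)
    (hfQ : ∀ p ν : ℕ, p.Prime → (∃ j, 1 ≤ j ∧ q j = p) → 1 ≤ ν → f (p ^ ν) = g ν)
    (hfnotQ : ∀ p ν : ℕ, p.Prime → ¬(∃ j, 1 ≤ j ∧ q j = p) → 1 ≤ ν →
      f (p ^ ν) = 0 ∨ f (p ^ ν) = 1) :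
    ∃ C : ℝ, 0 < C ∧ ∀ᶠ x : ℕ in atTop,
      |(⨆ n ∈ Finset.Icc 1 x, Real.log (f (f n))) -
          Real.sqrt (Real.log x) / Real.log (Real.log x) *
            (Real.sqrt (8 * ∑' j : ℕ, (Real.log ((g (j + 1) : ℝ) / (g j : ℝ))) ^ 2) /
              Real.sqrt (κ / α))| ≤
        C * (Real.sqrt (Real.log x) / Real.log (Real.log x)) *
          (Real.log (Real.log (Real.log x)) / Real.log (Real.log x)) := by
  obtain ⟨A, hA⟩ := hqasymp
  have hα' : (1:ℝ) ≤ α := by exact_mod_cast hα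
  have hS := SS_pos α hα
  have hfQ' : ∀ p ν : ℕ, p.Prime → (∃ j, 1 ≤ j ∧ q j = p) → 1 ≤ ν → f (p ^ ν) = α * ν + 1 := by
    intro p ν h1 h2 h3
    rw [hfQ p ν h1 h2 h3, hgα]
  have hEx : ∀ j, ∃ e, q (j + 1) = α * e + 1 := by
    intro j
    have hp := hqprime (j + 1) (by omega)
    obtain ⟨x, hx⟩ := hgrange (q (j + 1)) hp.pos (by
      intro p hpp hd
      exact ⟨j + 1, by omega, ((Nat.prime_dvd_prime_iff_eq hpp hp).1 hd).symm⟩)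
    exact ⟨x, by rw [← hx, hgα]⟩
  choose E hE using hEx
  have hqinj : Function.Injective fun j => q (j + 1) :=
    (strictMono_nat_of_lt_succ fun j => hqmono (j + 1) (by omega)).injective
  obtain ⟨C1, hC1, hup⟩ := asymp_upper (Qp := fun p => ∃ j, 1 ≤ j ∧ q j = p) hα hf0 hf1 hfmult hfQ' hfnotQ q
    (fun p => Iff.rfl) κ A hκ hA
  obtain ⟨C2, hC2, hlow⟩ := asymp_lower (Qp := fun p => ∃ j, 1 ≤ j ∧ q j = p) hα hf1 hfmult hfQ' q E
    (fun j => hqprime (j + 1) (by omega)) (fun j => ⟨j + 1, by omega, rfl⟩) hqinj hE κ A hκ hA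
  have hconst : Real.sqrt (8 * ∑' j : ℕ, (Real.log ((g (j + 1) : ℝ) / (g j : ℝ))) ^ 2) /
      Real.sqrt (κ / α) = 2 * c0 α κ := by
    have h1 : ∑' j : ℕ, (Real.log ((g (j + 1) : ℝ) / (g j : ℝ))) ^ 2 = SS α := by
      unfold SS ww
      simp only [hgα]
    rw [h1, ← Real.sqrt_div (by positivity), c0]
    rw [show 8 * SS α / (κ / α) = 2 ^ 2 * (2 * SS α * α / κ) by field_simp; ring]
    rw [Real.sqrt_mul (by positivity), Real.sqrt_sq (by norm_num)]
  have hc0 : 0 ≤ c0 α κ := Real.sqrt_nonneg _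
  have hlogx : Tendsto (fun x : ℕ => Real.log x) atTop atTop :=
    Real.tendsto_log_atTop.comp tendsto_natCast_atTop_atTop
  have hLx : Tendsto (fun x : ℕ => Real.log (Real.log x)) atTop atTop :=
    Real.tendsto_log_atTop.comp hlogx
  refine ⟨C1 + C2, by positivity, ?_⟩
  filter_upwards [hLx.eventually hup, hLx.eventually hlow, hLx.eventually (ev_log 0),
    hLx.eventually_ge_atTop 1, hlogx.eventually_ge_atTop 1, eventually_ge_atTop 1]
    with x h1 h2 h3 h4 h5 h6
  rw [hconst]
  have hexp : Real.exp (Real.log (Real.log x)) = Real.log x := Real.exp_log (by linarith)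
  have hsq : Real.sqrt (Real.log x) = Real.exp (Real.log (Real.log x) / 2) := by
    rw [Real.exp_half, hexp]
  rw [hexp] at h1 h2
  rw [hsq]
  set L := Real.log (Real.log x) with hL
  set U := Real.exp (L / 2) with hU
  have hU0 : 0 < U := Real.exp_pos _
  set D := U / L * (Real.log L / L) with hD
  have hD0 : 0 ≤ D := by positivity
  set B := U / L * (2 * c0 α κ) + C1 * (U / L) * (Real.log L / L) with hB
  have hB0 : 0 ≤ B := by positivity
  have hinner : ∀ n : ℕ, (⨆ (_ : n ∈ Finset.Icc 1 x), Real.log (f (f n))) ≤ B := by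
    intro n
    apply Real.iSup_le _ hB0
    intro hn
    rw [Finset.mem_Icc] at hn
    apply h1 n (by omega)
    apply Real.log_le_log
    · exact_mod_cast hn.1
    · exact_mod_cast hn.2
  have hsup1 : (⨆ n ∈ Finset.Icc 1 x, Real.log (f (f n))) ≤ B := Real.iSup_le hinner hB0
  obtain ⟨n, hn0, hnx, hnf⟩ := h2
  have hnmem : n ∈ Finset.Icc 1 x := by
    rw [Finset.mem_Icc]
    refine ⟨Nat.one_le_iff_ne_zero.2 hn0, ?_⟩
    have := (Real.log_le_log_iff (by exact_mod_cast Nat.pos_of_ne_zero hn0) (by exact_mod_cast h6)).1 hnx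
    exact_mod_cast this
  have hsup2 : Real.log (f (f n)) ≤ ⨆ n ∈ Finset.Icc 1 x, Real.log (f (f n)) := by
    have hbdd : BddAbove (Set.range fun n : ℕ => ⨆ (_ : n ∈ Finset.Icc 1 x), Real.log (f (f n))) :=
      ⟨B, by rintro _ ⟨m, rfl⟩; exact hinner m⟩
    have := le_ciSup hbdd n
    simp only [ciSup_pos hnmem] at this
    exact this
  have e1 : C1 * (U / L) * (Real.log L / L) = C1 * D := by rw [hD]; ring
  have e2 : C2 * (U / L) * (Real.log L / L) = C2 * D := by rw [hD]; ring
  have e3 : (C1 + C2) * (U / L) * (Real.log L / L) = C1 * D + C2 * D := by rw [hD]; ring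
  rw [e2] at hnf
  rw [hB, e1] at hsup1
  have p1 : 0 ≤ C1 * D := by positivity
  have p2 : 0 ≤ C2 * D := by positivity
  rw [e3, abs_le]
  constructor <;> linarith
end

section
/- Under the standing hypotheses, for N ∈ ⟨Q⟩ with N > 1, let m_N be the least positive integer m with f(m) = N. Then m_N exists and factors as m_N = q₁^{ν₁}···q_r^{ν_r} for some r ≥ 1 with exponents ν₁ ≥ ν₂ ≥ … ≥ ν_r ≥ 1; in particular, every prime divisor of m_N lies in Q, and the primes dividing m_N are exactly the r smallest elements q₁ < q₂ < … < q_r of Q. -/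
/-- For `N` in the monoid `⟨Q⟩` with `N > 1`, the least positive integer `m_N` with
`f(m_N) = N` exists and factors as `m_N = q₁^{ν₁}···q_r^{ν_r}` with `r ≥ 1` and
exponents `ν₁ ≥ ν₂ ≥ … ≥ ν_r ≥ 1`; in particular the primes dividing `m_N` are exactly
the `r` smallest elements `q₁ < … < q_r` of `Q`. -/
theorem minimal_preimage_factorisation
    (q : ℕ → ℕ) (g f : ℕ → ℕ)
    (hqprime : ∀ j : ℕ, 1 ≤ j → (q j).Prime)
    (hqmono : ∀ j : ℕ, 1 ≤ j → q j < q (j + 1))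
    (hg0 : g 0 = 1) (hgmono : Monotone g)
    (hgrange : ∀ m : ℕ, 0 < m → (∀ p : ℕ, p.Prime → p ∣ m → ∃ j, 1 ≤ j ∧ q j = p) →
      ∃ x : ℕ, g x = m)
    (hf0 : f 0 = 1) (hf1 : f 1 = 1)
    (hfmult : ∀ m₁ m₂ : ℕ, Nat.Coprime m₁ m₂ → f (m₁ * m₂) = f m₁ * f m₂)
    (hfQ : ∀ p ν : ℕ, p.Prime → (∃ j, 1 ≤ j ∧ q j = p) → 1 ≤ ν → f (p ^ ν) = g ν)
    (hfnotQ : ∀ p ν : ℕ, p.Prime → ¬(∃ j, 1 ≤ j ∧ q j = p) → 1 ≤ ν →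
      f (p ^ ν) = 0 ∨ f (p ^ ν) = 1)
    -- `N ∈ ⟨Q⟩` and `N > 1`
    (N : ℕ) (hN1 : 1 < N)
    (hNQ : ∀ p : ℕ, p.Prime → p ∣ N → ∃ j, 1 ≤ j ∧ q j = p)
    -- `m_N` is the least positive integer `m` with `f(m) = N`
    (mN : ℕ) (hmN : mN = sInf {m : ℕ | 0 < m ∧ f m = N}) :
    (∃ m : ℕ, 0 < m ∧ f m = N) ∧
    ∃ r : ℕ, 1 ≤ r ∧
      mN = ∏ j ∈ Finset.Icc 1 r, q j ^ mN.factorization (q j) ∧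
      (∀ j ∈ Finset.Icc 1 r, 1 ≤ mN.factorization (q j)) ∧
      (∀ j : ℕ, 1 ≤ j → j + 1 ≤ r →
        mN.factorization (q (j + 1)) ≤ mN.factorization (q j)) := by
  have hqs : StrictMono (fun j => q (j + 1)) :=
    strictMono_nat_of_lt_succ (fun n => hqmono (n + 1) (by omega))
  have hlt : ∀ i j : ℕ, 1 ≤ i → i < j → q i < q j := by
    intro i j hi hij
    have := @hqs (i - 1) (j - 1) (by omega)
    simp only at this
    rwa [Nat.sub_add_cancel hi, Nat.sub_add_cancel (by omega)] at this
  have hex : ∃ m : ℕ, 0 < m ∧ f m = N := by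
    obtain ⟨x, hx⟩ := hgrange N (by omega) hNQ
    have hx1 : 1 ≤ x := by
      rcases Nat.eq_zero_or_pos x with h | h
      · subst h; omega
      · exact h
    exact ⟨q 1 ^ x, pow_pos (hqprime 1 le_rfl).pos _,
      by rw [hfQ _ _ (hqprime 1 le_rfl) ⟨1, le_rfl, rfl⟩ hx1, hx]⟩
  refine ⟨hex, ?_⟩
  have hmem : 0 < mN ∧ f mN = N := by
    rw [hmN]; exact Nat.sInf_mem (s := {m : ℕ | 0 < m ∧ f m = N}) hex
  have hmin : ∀ m, 0 < m → f m = N → mN ≤ m := by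
    intro m h1 h2; rw [hmN]; exact Nat.sInf_le ⟨h1, h2⟩
  clear hmN
  obtain ⟨hpos, hfm⟩ := hmem
  have hfg : ∀ j ν, 1 ≤ j → f (q j ^ ν) = g ν := by
    intro j ν hj
    rcases Nat.eq_zero_or_pos ν with h | h
    · subst h; simp [hf1, hg0]
    · exact hfQ _ _ (hqprime j hj) ⟨j, hj, rfl⟩ h
  have hA : ∀ p, p.Prime → p ∣ mN → ∃ j, 1 ≤ j ∧ q j = p := by
    intro p hp hpd
    by_contra hcon
    have hk : 1 ≤ mN.factorization p := hp.factorization_pos_of_dvd hpos.ne' hpd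
    have hm := Nat.ordProj_mul_ordCompl_eq_self mN p
    have hc : Nat.Coprime (p ^ mN.factorization p) (mN / p ^ mN.factorization p) :=
      (Nat.coprime_ordCompl hp hpos.ne').pow_left _
    have h0 : 0 < mN / p ^ mN.factorization p := Nat.ordCompl_pos p hpos.ne'
    have h1 : 1 < p ^ mN.factorization p := Nat.one_lt_pow (by omega) hp.one_lt
    have h2 := hfmult _ _ hc
    rw [hm, hfm] at h2
    rcases hfnotQ p _ hp hcon hk with h | h
    · rw [h] at h2; omega
    · rw [h, one_mul] at h2
      have := hmin _ h0 h2.symm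
      nlinarith
  have hB : ∀ i j, 1 ≤ i → i < j → mN.factorization (q j) ≤ mN.factorization (q i) := by
    intro i j hi hij
    by_contra hcon
    push Not at hcon
    have hpi := hqprime i hi
    have hpj := hqprime j (by omega)
    have hl := hlt i j hi hij
    have hcij : Nat.Coprime (q i) (q j) := (Nat.coprime_primes hpi hpj).2 hl.ne
    have hm := Nat.ordProj_mul_ordCompl_eq_self mN (q i)
    have hc := Nat.coprime_ordCompl hpi hpos.ne'
    have h0 := Nat.ordCompl_pos (q i) hpos.ne'
    have hfj : (mN / q i ^ mN.factorization (q i)).factorization (q j)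
        = mN.factorization (q j) := by
      rw [Nat.factorization_ordCompl, Finsupp.erase_ne hl.ne']
    generalize mN / q i ^ mN.factorization (q i) = c at *
    have hm' := Nat.ordProj_mul_ordCompl_eq_self c (q j)
    have hc' := Nat.coprime_ordCompl hpj h0.ne'
    have h0' := Nat.ordCompl_pos (q j) h0.ne'
    rw [hfj] at hm' hc' h0'
    generalize c / q j ^ mN.factorization (q j) = d at *
    have hcd : Nat.Coprime (q i) d := hc.coprime_dvd_right ⟨_, by rw [mul_comm]; exact hm'.symm⟩
    have key : ∀ a b, f (q i ^ a * (q j ^ b * d)) = g a * (g b * f d) := by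
      intro a b
      rw [hfmult, hfmult, hfg i a hi, hfg j b (by omega)]
      · exact hc'.pow_left _
      · exact Nat.Coprime.mul_right (hcij.pow _ _) (hcd.pow_left _)
    generalize mN.factorization (q i) = a at *
    generalize mN.factorization (q j) = b at *
    have h1 := key a b
    rw [hm', hm, hfm] at h1
    have h2 := hmin (q i ^ b * (q j ^ a * d))
      (Nat.mul_pos (pow_pos hpi.pos _) (Nat.mul_pos (pow_pos hpj.pos _) h0'))
      (by rw [key, h1]; ring)
    rw [← hm, ← hm'] at h2
    obtain ⟨e, rfl⟩ := Nat.exists_eq_add_of_lt hcon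
    have h3 : q i ^ (e + 1) < q j ^ (e + 1) := Nat.pow_lt_pow_left hl (by omega)
    have h4 : 0 < q i ^ a * q j ^ a * d :=
      Nat.mul_pos (Nat.mul_pos (pow_pos hpi.pos _) (pow_pos hpj.pos _)) h0'
    have h5 := Nat.mul_lt_mul_of_pos_left h3 h4
    have e1 : q i ^ (a + e + 1) * (q j ^ a * d) = q i ^ a * q j ^ a * d * q i ^ (e + 1) := by ring
    have e2 : q i ^ a * (q j ^ (a + e + 1) * d) = q i ^ a * q j ^ a * d * q j ^ (e + 1) := by ring
    omega
  have hfin : ∃ r, mN.factorization (q (r + 1)) = 0 := by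
    refine ⟨mN + 1, Nat.factorization_eq_zero_of_not_dvd fun h => ?_⟩
    have h1 := Nat.le_of_dvd hpos h
    have h2 := hqs.le_apply (x := mN + 1)
    omega
  classical
  obtain ⟨r, hr, hrm⟩ : ∃ r, mN.factorization (q (r + 1)) = 0 ∧
      ∀ k < r, mN.factorization (q (k + 1)) ≠ 0 :=
    ⟨Nat.find hfin, Nat.find_spec hfin, fun k hk => Nat.find_min hfin hk⟩
  have hpf : ∀ j ∈ Finset.Icc 1 r, 1 ≤ mN.factorization (q j) := by
    intro j hj
    rw [Finset.mem_Icc] at hj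
    have := hrm (j - 1) (by omega)
    rw [Nat.sub_add_cancel hj.1] at this
    omega
  have hle : ∀ j, 1 ≤ j → q j ∣ mN → j ≤ r := by
    intro j hj hd
    by_contra hcon
    have h1 : 0 < mN.factorization (q j) :=
      (hqprime j hj).factorization_pos_of_dvd hpos.ne' hd
    rcases Nat.eq_or_lt_of_le (show r + 1 ≤ j by omega) with h | h
    · subst h; omega
    · have := hB (r + 1) j (by omega) h
      omega
  refine ⟨r, ?_, ?_, hpf, fun j hj _ => hB j (j + 1) hj (by omega)⟩
  · have hne : mN ≠ 1 := by
      rintro rfl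
      omega
    obtain ⟨p, hp, hpd⟩ := Nat.exists_prime_and_dvd hne
    obtain ⟨j, hj, rfl⟩ := hA p hp hpd
    exact hj.trans (hle j hj hpd)
  · have himg : mN.primeFactors = (Finset.Icc 1 r).image q := by
      ext p
      simp only [Nat.mem_primeFactors, Finset.mem_image, Finset.mem_Icc]
      constructor
      · rintro ⟨hp, hpd, -⟩
        obtain ⟨j, hj, rfl⟩ := hA p hp hpd
        exact ⟨j, ⟨hj, hle j hj hpd⟩, rfl⟩
      · rintro ⟨j, hj, rfl⟩
        refine ⟨hqprime j hj.1, ?_, hpos.ne'⟩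
        have := hpf j (Finset.mem_Icc.2 hj)
        exact Nat.dvd_of_factorization_pos (by omega)
    have hinj : Set.InjOn q (Finset.Icc 1 r : Finset ℕ) := by
      intro i hi j hj hij
      rw [Finset.mem_coe, Finset.mem_Icc] at hi hj
      rcases lt_trichotomy i j with h | h | h
      · exact absurd hij (hlt i j hi.1 h).ne
      · exact h
      · exact absurd hij (hlt j i hj.1 h).ne'
    have h := Nat.prod_factorization_pow_eq_self hpos.ne'
    rw [Finsupp.prod, Nat.support_factorization, himg, Finset.prod_image hinj] at h
    exact h.symm
end

section
/- Under the standing hypotheses, for N ∈ ⟨Q⟩ with N > 1, let m_N be the least positive integer m with f(m) = N. If N′ ∈ ⟨Q⟩, N′ > 1, and N′ divides N, then m_{N′} ≤ m_N. -/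
/-- For `N, N′ ∈ ⟨Q⟩` with `N, N′ > 1` and `N′ ∣ N`, the least positive integers `m_N`,
`m_{N′}` with `f(m_N) = N`, `f(m_{N′}) = N′` exist and satisfy `m_{N′} ≤ m_N`. -/
theorem minimal_preimage_monotone_in_divisors
    (q : ℕ → ℕ) (g f : ℕ → ℕ)
    (hqprime : ∀ j : ℕ, 1 ≤ j → (q j).Prime)
    (hqmono : ∀ j : ℕ, 1 ≤ j → q j < q (j + 1))
    (hg0 : g 0 = 1) (hgmono : Monotone g)
    (hgrange : ∀ m : ℕ, 0 < m → (∀ p : ℕ, p.Prime → p ∣ m → ∃ j, 1 ≤ j ∧ q j = p) →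
      ∃ x : ℕ, g x = m)
    (hf0 : f 0 = 1) (hf1 : f 1 = 1)
    (hfmult : ∀ m₁ m₂ : ℕ, Nat.Coprime m₁ m₂ → f (m₁ * m₂) = f m₁ * f m₂)
    (hfQ : ∀ p ν : ℕ, p.Prime → (∃ j, 1 ≤ j ∧ q j = p) → 1 ≤ ν → f (p ^ ν) = g ν)
    (hfnotQ : ∀ p ν : ℕ, p.Prime → ¬(∃ j, 1 ≤ j ∧ q j = p) → 1 ≤ ν →
      f (p ^ ν) = 0 ∨ f (p ^ ν) = 1)
    -- `N, N′ ∈ ⟨Q⟩`, `N, N′ > 1`, and `N′ ∣ N`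
    (N N' : ℕ) (hN1 : 1 < N) (hN'1 : 1 < N')
    (hNQ : ∀ p : ℕ, p.Prime → p ∣ N → ∃ j, 1 ≤ j ∧ q j = p)
    (hN'Q : ∀ p : ℕ, p.Prime → p ∣ N' → ∃ j, 1 ≤ j ∧ q j = p)
    (hdvd : N' ∣ N) :
    (∃ m : ℕ, 0 < m ∧ f m = N) ∧ (∃ m : ℕ, 0 < m ∧ f m = N') ∧
    sInf {m : ℕ | 0 < m ∧ f m = N'} ≤ sInf {m : ℕ | 0 < m ∧ f m = N} := by
  have key : ∀ m : ℕ, 0 < m → 0 < f m →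
      (∀ p : ℕ, p.Prime → p ∣ f m → ∃ j, 1 ≤ j ∧ q j = p) →
      ∀ d : ℕ, d ∣ f m → ∃ m', m' ∣ m ∧ f m' = d := by
    intro m
    induction m using Nat.recOnPosPrimePosCoprime with
    | zero => intro h; omega
    | one =>
      intro _ _ _ d hd
      rw [hf1] at hd
      exact ⟨1, dvd_rfl, by rw [hf1, Nat.dvd_one.mp hd]⟩
    | prime_pow p n hp hn =>
      intro _ hpos hQ d hd
      by_cases hpQ : ∃ j, 1 ≤ j ∧ q j = p
      · have hfp := hfQ p n hp hpQ hn
        by_cases hdn : d = g n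
        · exact ⟨p ^ n, dvd_rfl, by rw [hfp, hdn]⟩
        · obtain ⟨x, hx⟩ := hgrange d (Nat.pos_of_dvd_of_pos hd hpos)
            (fun r hr hrd => hQ r hr (hrd.trans hd))
          have hle : d ≤ g n := hfp ▸ Nat.le_of_dvd hpos hd
          have hxn : x ≤ n := by
            by_contra hlt
            have := hgmono (show n ≤ x by omega)
            omega
          refine ⟨p ^ x, pow_dvd_pow p hxn, ?_⟩
          rcases Nat.eq_zero_or_pos x with h0 | h0
          · subst h0
            rw [pow_zero, hf1, ← hx, hg0]
          · rw [hfQ p x hp hpQ h0, hx]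
      · rcases hfnotQ p n hp hpQ hn with h | h
        · omega
        · rw [h] at hd
          exact ⟨1, one_dvd _, by rw [hf1, Nat.dvd_one.mp hd]⟩
    | coprime a b ha hb hab iha ihb =>
      intro _ hpos hQ d hd
      have hm := hfmult a b hab
      rw [hm] at hpos hQ hd
      obtain ⟨d1, d2, h1, h2, rfl⟩ := exists_dvd_and_dvd_of_dvd_mul hd
      obtain ⟨m1, hm1, e1⟩ := iha (by omega) (Nat.pos_of_mul_pos_right hpos)
        (fun r hr hrd => hQ r hr (hrd.mul_right _)) d1 h1
      obtain ⟨m2, hm2, e2⟩ := ihb (by omega) (Nat.pos_of_mul_pos_left hpos)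
        (fun r hr hrd => hQ r hr (hrd.mul_left _)) d2 h2
      exact ⟨m1 * m2, mul_dvd_mul hm1 hm2, by
        rw [hfmult _ _ (Nat.Coprime.of_dvd hm1 hm2 hab), e1, e2]⟩
  have ex : ∀ M : ℕ, 1 < M → (∀ p : ℕ, p.Prime → p ∣ M → ∃ j, 1 ≤ j ∧ q j = p) →
      ∃ m : ℕ, 0 < m ∧ f m = M := by
    intro M hM hMQ
    obtain ⟨x, hx⟩ := hgrange M (by omega) hMQ
    have hx1 : 1 ≤ x := by
      by_contra h
      have : x = 0 := by omega
      rw [this, hg0] at hx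
      omega
    have hq := hqprime 1 le_rfl
    exact ⟨q 1 ^ x, pow_pos hq.pos x, by rw [hfQ _ x hq ⟨1, le_rfl, rfl⟩ hx1, hx]⟩
  refine ⟨ex N hN1 hNQ, ex N' hN'1 hN'Q, ?_⟩
  obtain ⟨h0, hfN⟩ : sInf {m : ℕ | 0 < m ∧ f m = N} ∈ {m : ℕ | 0 < m ∧ f m = N} :=
    Nat.sInf_mem (ex N hN1 hNQ)
  obtain ⟨m', hm', e⟩ := key _ h0 (by rw [hfN]; omega) (by rw [hfN]; exact hNQ) N'
    (by rw [hfN]; exact hdvd)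
  have hmem : m' ∈ {m : ℕ | 0 < m ∧ f m = N'} := ⟨Nat.pos_of_dvd_of_pos hm' h0, e⟩
  exact (Nat.sInf_le hmem).trans (Nat.le_of_dvd h0 hm')
end

section
/- Let g : ℕ₀ → ℕ be monotonically increasing with g(0) = 1 and suppose the series ∑_{j=1}^∞ (log(g(j)/g(j−1)))² converges; set C_g = (8·∑_{j=1}^∞ (log(g(j)/g(j−1)))²)^{1/2}. Then for any positive integers ν₁, …, ν_t, ∑_{j ≤ t} log g(ν_j) ≤ (C_g/2)·(∑_{j ≤ t} j·ν_j)^{1/2}. -/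
lemma aux_card_sq_s15 (p : ℕ → Prop) [DecidablePred p] (t : ℕ) :
    (∑ j ∈ Finset.Icc 1 t, (if p j then (1:ℝ) else 0)) ≤ t ∧
    0 ≤ (∑ j ∈ Finset.Icc 1 t, (if p j then (1:ℝ) else 0)) ∧
    (∑ j ∈ Finset.Icc 1 t, (if p j then (1:ℝ) else 0)) ^ 2 ≤
      2 * ∑ j ∈ Finset.Icc 1 t, (if p j then (j:ℝ) else 0) := by
  induction t with
  | zero => simp
  | succ t ih =>
    obtain ⟨h1, h2, h3⟩ := ih
    rw [Finset.sum_Icc_succ_top (by omega), Finset.sum_Icc_succ_top (by omega)]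
    push_cast
    split_ifs
    · exact ⟨by linarith, by linarith, by nlinarith⟩
    · exact ⟨by linarith, by linarith, by nlinarith⟩

lemma aux_ind (f : ℕ → ℝ) (n N : ℕ) (h : n ≤ N) :
    ∑ i ∈ Finset.range N, (if i < n then f i else 0) = ∑ i ∈ Finset.range n, f i := by
  rw [← Finset.sum_filter]
  congr 1
  ext i
  simp only [Finset.mem_filter, Finset.mem_range]
  omega

/-- If `g : ℕ₀ → ℕ` is monotonically increasing with `g(0) = 1` and
`∑_{j≥1} (log(g(j)/g(j−1)))²` converges, then for any positive integers `ν₁, …, ν_t`,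
`∑_{j ≤ t} log g(ν_j) ≤ (C_g/2)·(∑_{j ≤ t} j·ν_j)^{1/2}`, where
`C_g = (8·∑_{j≥1} (log(g(j)/g(j−1)))²)^{1/2}`. -/
theorem sum_log_g_le_CauchySchwarz
    (g : ℕ → ℕ) (hg0 : g 0 = 1) (hgmono : Monotone g)
    (hsum : Summable fun j : ℕ => (Real.log ((g (j + 1) : ℝ) / (g j : ℝ))) ^ 2)
    (t : ℕ) (ν : ℕ → ℕ) (hν : ∀ j : ℕ, 1 ≤ j → j ≤ t → 1 ≤ ν j) :
    ∑ j ∈ Finset.Icc 1 t, Real.log (g (ν j)) ≤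
      Real.sqrt (8 * ∑' j : ℕ, (Real.log ((g (j + 1) : ℝ) / (g j : ℝ))) ^ 2) / 2 *
        Real.sqrt (∑ j ∈ Finset.Icc 1 t, (j : ℝ) * ν j) := by
  set a : ℕ → ℝ := fun j => Real.log ((g (j + 1) : ℝ) / (g j : ℝ)) with ha
  have hpos : ∀ n, (g n : ℝ) ≠ 0 := by
    intro n
    have := hgmono (Nat.zero_le n)
    have h2 : g n ≠ 0 := by omega
    exact_mod_cast h2
  have hlog : ∀ n, Real.log (g n) = ∑ i ∈ Finset.range n, a i := by
    intro n
    induction n with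
    | zero => simp [hg0]
    | succ n ih =>
      rw [Finset.sum_range_succ, ← ih, ha]
      simp only
      rw [Real.log_div (hpos _) (hpos _)]
      ring
  obtain ⟨N, hN⟩ : ∃ N, ∀ j ∈ Finset.Icc 1 t, ν j ≤ N :=
    ⟨(Finset.Icc 1 t).sup ν, fun j hj => Finset.le_sup (f := ν) hj⟩
  have hL : ∑ j ∈ Finset.Icc 1 t, Real.log (g (ν j)) =
      ∑ i ∈ Finset.range N, a i * ∑ j ∈ Finset.Icc 1 t, (if i < ν j then (1:ℝ) else 0) := by
    simp_rw [Finset.mul_sum, mul_ite, mul_one, mul_zero]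
    rw [Finset.sum_comm]
    exact Finset.sum_congr rfl fun j hj => by rw [aux_ind _ _ _ (hN j hj), hlog]
  have hR : ∑ j ∈ Finset.Icc 1 t, (j : ℝ) * ν j =
      ∑ i ∈ Finset.range N, ∑ j ∈ Finset.Icc 1 t, (if i < ν j then (j:ℝ) else 0) := by
    rw [Finset.sum_comm]
    exact Finset.sum_congr rfl fun j hj => by
      rw [aux_ind (fun _ => (j:ℝ)) _ _ (hN j hj)]; simp [mul_comm]
  have hS : ∑ i ∈ Finset.range N, a i ^ 2 ≤ ∑' j, a j ^ 2 :=
    hsum.sum_le_tsum _ fun i _ => sq_nonneg _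
  have hS0 : 0 ≤ ∑' j, a j ^ 2 := tsum_nonneg fun i => sq_nonneg _
  have hR0 : 0 ≤ ∑ j ∈ Finset.Icc 1 t, (j : ℝ) * ν j :=
    Finset.sum_nonneg fun j _ => by positivity
  have hn : ∑ i ∈ Finset.range N, (∑ j ∈ Finset.Icc 1 t, (if i < ν j then (1:ℝ) else 0)) ^ 2 ≤
      2 * ∑ j ∈ Finset.Icc 1 t, (j : ℝ) * ν j := by
    rw [hR, Finset.mul_sum]
    exact Finset.sum_le_sum fun i _ => (aux_card_sq_s15 (fun j => i < ν j) t).2.2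
  have key : (∑ j ∈ Finset.Icc 1 t, Real.log (g (ν j))) ^ 2 ≤
      (∑' j, a j ^ 2) * (2 * ∑ j ∈ Finset.Icc 1 t, (j : ℝ) * ν j) := by
    rw [hL]
    refine (Finset.sum_mul_sq_le_sq_mul_sq _ _ _).trans ?_
    exact mul_le_mul hS hn (Finset.sum_nonneg fun i _ => sq_nonneg _) hS0
  refine (abs_le_of_sq_le_sq' ?_ (by positivity)).2
  rw [mul_pow, div_pow, Real.sq_sqrt (by positivity), Real.sq_sqrt hR0]
  refine key.trans (le_of_eq ?_)
  ring
end
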